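/- arXiv:1009.0540 — 4 statements merged into one kernel-verified Lean document; each statement's English description precedes it below -/
import Mathlib

section
/- Short-time C³ control for the inviscid Burgers equation (main part of Lemma on local solvability for the splitting scheme): There exists an absolute constant c > 0 such that the following holds. Let θ₀ : ℝ → ℝ be a smooth periodic function with ‖θ₀‖_{C³} ≤ N, and suppose w : ℝ × [0,h] → ℝ is a classical C³ (in x) solution of ∂_t w = w ∂_x w with w(·,0) = θ₀, where h ≤ c/N. Then ‖w(·,t)‖_{C³} ≤ 2N for all 0 ≤ t ≤ h. Consequently, if Φ_t is the fractional heat kernel (Φ_t(x) = t^{−1/(2α)}Φ(t^{−1/(2α)}x) with Φ(x) = (1/2π)∫_ℝ exp(ixξ − |ξ|^{2α})dξ, 0 < α < 1), then v(·,t) = Φ_t ∗ w(·,h) also satisfies ‖v(·,t)‖_{C³} ≤ 2N for 0 ≤ t ≤ h. -/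
open Set MeasureTheory Filter Topology

noncomputable section

/-- The fractional heat kernel profile `Φ(x) = (1/2π)∫_ℝ exp(ixξ − |ξ|^{2α}) dξ`. -/
def fracHeatKernel (α x : ℝ) : ℝ :=
  (1 / (2 * Real.pi)) *
    (∫ s : ℝ, Complex.exp (((x * s : ℝ) : ℂ) * Complex.I - ((|s| ^ (2*α) : ℝ) : ℂ))).re

/-- The rescaled fractional heat kernel `Φ_t(x) = t^{−1/(2α)} Φ(t^{−1/(2α)} x)`. -/
def fracHeatKernelT (α t x : ℝ) : ℝ :=
  t ^ (-(1 / (2*α))) * fracHeatKernel α (t ^ (-(1 / (2*α))) * x)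

/-- `w` is continuously differentiable in `x` at each time of `I` and solves `∂_t w = w ∂_x w`
pointwise there. No joint regularity in `(x, t)` is assumed. -/
structure IsBurgersSolution (w : ℝ → ℝ → ℝ) (I : Set ℝ) : Prop where
  contDiff : ∀ t ∈ I, ContDiff ℝ 1 (fun x => w x t)
  hasDeriv : ∀ x, ∀ t ∈ I,
    HasDerivWithinAt (fun s => w x s) (w x t * deriv (fun x' => w x' t) x) I t

namespace IsBurgersSolution

variable {w : ℝ → ℝ → ℝ} {I J : Set ℝ}

lemma mono (hw : IsBurgersSolution w I) (h : J ⊆ I) : IsBurgersSolution w J :=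
  ⟨fun t ht => hw.contDiff t (h ht), fun x t ht => (hw.hasDeriv x t (h ht)).mono h⟩

lemma hasDerivAt_space (hw : IsBurgersSolution w I) {t : ℝ} (ht : t ∈ I) (x : ℝ) :
    HasDerivAt (fun x' => w x' t) (deriv (fun x' => w x' t) x) x :=
  ((hw.contDiff t ht).differentiable (by norm_num) x).hasDerivAt

lemma continuousOn_time (hw : IsBurgersSolution w I) (x : ℝ) :
    ContinuousOn (fun s => w x s) I :=
  fun t ht => (hw.hasDeriv x t ht).continuousWithinAt

/-- The Burgers equation is invariant under `(x, t) ↦ (-x, -t)`. -/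
lemma reverse (hw : IsBurgersSolution w I) :
    IsBurgersSolution (fun x t => w (-x) (-t)) (-I) := by
  refine ⟨fun t ht => (hw.contDiff (-t) ht).comp contDiff_neg, fun x t ht => ?_⟩
  have h1 := hw.hasDeriv (-x) (-t) ht
  have h2 : HasDerivWithinAt (fun s : ℝ => -s) (-1) (-I) t := (hasDerivAt_neg t).hasDerivWithinAt
  have h3 := HasDerivWithinAt.comp t h1 h2 (fun s hs => hs)
  have h4 : deriv (fun x' => w (-x') (-t)) x = -deriv (fun x' => w x' (-t)) (-x) :=
    deriv_comp_neg (f := fun x' => w x' (-t)) x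
  have h5 : w (-x) (-t) * deriv (fun x' => w (-x') (-t)) x =
      w (-x) (-t) * deriv (fun x' => w x' (-t)) (-x) * -1 := by rw [h4]; ring
  rw [h5]
  exact h3

end IsBurgersSolution

/-- A maximum principle for the transport equation `∂_t H = w ∂_x H` on a rectangle. -/
lemma transport_nonpos {a b s t : ℝ} {w H p : ℝ → ℝ → ℝ}
    (hH : ContinuousOn (Function.uncurry H) (Icc a b ×ˢ Icc s t))
    (hz : ∀ z ∈ Ioo a b, ∀ τ ∈ Ioc s t, HasDerivAt (fun z' => H z' τ) (p z τ) z)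
    (ht : ∀ z ∈ Ioo a b, ∀ τ ∈ Ioc s t,
      HasDerivWithinAt (fun τ' => H z τ') (w z τ * p z τ) (Icc s t) τ)
    (hbot : ∀ z ∈ Icc a b, H z s ≤ 0)
    (hleft : ∀ τ ∈ Icc s t, H a τ ≤ 0) (hright : ∀ τ ∈ Icc s t, H b τ ≤ 0)
    {x : ℝ} (hx : x ∈ Icc a b) {r : ℝ} (hr : r ∈ Icc s t) : H x r ≤ 0 := by
  by_contra! hpos
  have hsr : s < r := by
    rcases hr.1.eq_or_lt with h | h
    · subst h
      exact absurd (hbot x hx) (not_le.2 hpos)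
    · exact h
  have hst : 0 < t - s := by linarith [hr.2]
  set ε := H x r / (2 * (t - s)) with hε
  have hε0 : 0 < ε := by positivity
  have hεr : ε * (r - s) < H x r := by
    have h1 : ε * (r - s) ≤ ε * (t - s) := by
      have := hr.2
      gcongr
    have h2 : ε * (t - s) = H x r / 2 := by rw [hε]; field_simp
    linarith
  obtain ⟨⟨z, τ⟩, hm, hmax⟩ := (isCompact_Icc.prod isCompact_Icc).exists_isMaxOn
    (⟨(x, r), hx, hr⟩ : (Icc a b ×ˢ Icc s t).Nonempty)
    (f := fun q : ℝ × ℝ => Function.uncurry H q - ε * (q.2 - s))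
    (hH.sub (by fun_prop))
  obtain ⟨hz1, hτ1⟩ : z ∈ Icc a b ∧ τ ∈ Icc s t := hm
  have hmax' : ∀ z' ∈ Icc a b, ∀ τ' ∈ Icc s t,
      H z' τ' - ε * (τ' - s) ≤ H z τ - ε * (τ - s) := fun z' h1 τ' h2 =>
    hmax (show (z', τ') ∈ Icc a b ×ˢ Icc s t from ⟨h1, h2⟩)
  have hHpos : 0 < H z τ := by
    have h1 := hmax' x hx r hr
    have h2 : 0 ≤ ε * (τ - s) := mul_nonneg hε0.le (by linarith [hτ1.1])
    linarith
  have hzI : z ∈ Ioo a b := by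
    refine ⟨lt_of_le_of_ne hz1.1 ?_, lt_of_le_of_ne hz1.2 ?_⟩
    · rintro rfl
      exact absurd (hleft τ hτ1) (not_le.2 hHpos)
    · rintro rfl
      exact absurd (hright τ hτ1) (not_le.2 hHpos)
  have hτI : τ ∈ Ioc s t := by
    refine ⟨lt_of_le_of_ne hτ1.1 ?_, hτ1.2⟩
    rintro rfl
    exact absurd (hbot z hz1) (not_le.2 hHpos)
  have hp : p z τ = 0 := by
    refine IsLocalMax.hasDerivAt_eq_zero ?_ (hz z hzI τ hτI)
    filter_upwards [Ioo_mem_nhds hzI.1 hzI.2] with z' hz'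
    have := hmax' z' (Ioo_subset_Icc_self hz') τ hτ1
    linarith
  have hd : HasDerivWithinAt (fun τ' => H z τ' - ε * (τ' - s)) (0 - ε) (Ico s τ) τ := by
    have h1 := ht z hzI τ hτI
    rw [hp, mul_zero] at h1
    refine (h1.mono fun τ' h => ⟨h.1, h.2.le.trans hτ1.2⟩).sub ?_
    have h2 : HasDerivAt (fun τ' : ℝ => ε * (τ' - s)) (ε * 1) τ :=
      ((hasDerivAt_id τ).sub_const s).const_mul ε
    simpa using h2.hasDerivWithinAt
  rw [hasDerivWithinAt_iff_tendsto_slope' (by simp), nhdsWithin_Ico_eq_nhdsLT hτI.1] at hd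
  have h0 : (0 : ℝ) ≤ 0 - ε := by
    refine ge_of_tendsto hd ?_
    filter_upwards [Ioo_mem_nhdsLT hτI.1] with τ' hτ'
    rw [slope_def_field]
    have := hmax' z hz1 τ' ⟨hτ'.1.le, hτ'.2.le.trans hτ1.2⟩
    exact div_nonneg_of_nonpos (by linarith) (by linarith [hτ'.2])
  linarith

namespace IsBurgersSolution

variable {w : ℝ → ℝ → ℝ}

/-- A jointly continuous solution is constant along short characteristics. -/
lemma eq_foot_of_bounded {x r s t C : ℝ} (hw : IsBurgersSolution w (Icc s t)) (hst : s ≤ t)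
    (hr : 0 < r) (hC : 0 < C)
    (hc : ContinuousOn (Function.uncurry w) (Icc (x - r) (x + r) ×ˢ Icc s t))
    (hb : ∀ z ∈ Icc (x - r) (x + r), ∀ τ ∈ Icc s t, |w z τ| ≤ C)
    (hsmall : (t - s) * C * 4 ≤ r) :
    w (x + (t - s) * w x t) s = w x t := by
  have hsI : s ∈ Icc s t := ⟨le_rfl, hst⟩
  have htI : t ∈ Icc s t := ⟨hst, le_rfl⟩
  have hxI : x ∈ Icc (x - r) (x + r) := ⟨by linarith, by linarith⟩
  have hWc : Continuous (fun z => w z s) := (hw.contDiff s hsI).continuous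
  obtain ⟨M, hM⟩ := (isCompact_Icc (a := x - 2 * r) (b := x + 2 * r)).exists_bound_of_continuousOn
    hWc.continuousOn
  have hM0 : 0 ≤ M := (norm_nonneg _).trans (hM x ⟨by linarith, by linarith⟩)
  set y := x + (t - s) * w x t with hy
  set l := r ^ 2 / (4 * (C + M) ^ 2) with hl
  have hl0 : 0 < l := by positivity
  set ξ : ℝ → ℝ → ℝ := fun z τ => z + (τ - s) * w z τ with hξ
  have hdisp : ∀ z ∈ Icc (x - r) (x + r), ∀ τ ∈ Icc s t, |(τ - s) * w z τ| ≤ r / 4 := by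
    intro z hz τ hτ
    rw [abs_mul, abs_of_nonneg (by linarith [hτ.1] : 0 ≤ τ - s)]
    have h1 : (τ - s) * |w z τ| ≤ (t - s) * C :=
      mul_le_mul (by linarith [hτ.2]) (hb z hz τ hτ) (abs_nonneg _) (by linarith)
    linarith
  have hξc : ContinuousOn (Function.uncurry ξ) (Icc (x - r) (x + r) ×ˢ Icc s t) := by
    have : ContinuousOn (fun q : ℝ × ℝ => q.1 + (q.2 - s) * Function.uncurry w q)
      (Icc (x - r) (x + r) ×ˢ Icc s t) := by fun_prop
    exact this
  have hside : ∀ z, |z - x| = r → ∀ τ ∈ Icc s t,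
      l * (w z τ - w (ξ z τ) s) ^ 2 - (ξ z τ - y) ^ 2 ≤ 0 := by
    intro z hz τ hτ
    have hzI : z ∈ Icc (x - r) (x + r) := by
      have := abs_le.1 hz.le
      exact ⟨by linarith, by linarith⟩
    have h1 := abs_le.1 (hdisp z hzI τ hτ)
    have h2 := abs_le.1 (hdisp x hxI t htI)
    have h3 : |w (ξ z τ) s| ≤ M := by
      refine hM _ ⟨?_, ?_⟩ <;> simp only [hξ] <;> linarith [hzI.1, hzI.2]
    have h4 : (w z τ - w (ξ z τ) s) ^ 2 ≤ (C + M) ^ 2 := by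
      refine sq_le_sq' ?_ ?_ <;> linarith [abs_le.1 (hb z hzI τ hτ), abs_le.1 h3,
        (abs_le.1 (hb z hzI τ hτ)).1, (abs_le.1 (hb z hzI τ hτ)).2, (abs_le.1 h3).1,
        (abs_le.1 h3).2]
    have h5 : l * (w z τ - w (ξ z τ) s) ^ 2 ≤ (r / 2) ^ 2 := by
      calc l * (w z τ - w (ξ z τ) s) ^ 2 ≤ l * (C + M) ^ 2 := by gcongr
        _ = (r / 2) ^ 2 := by
          have : C + M ≠ 0 := by positivity
          rw [hl]; field_simp; norm_num
    have h6 : r / 2 ≤ |ξ z τ - y| := by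
      rcases abs_eq hr.le |>.1 hz with h | h
      · rw [abs_of_nonneg] <;> simp only [hξ, hy] <;> linarith
      · rw [abs_of_nonpos] <;> simp only [hξ, hy] <;> linarith
    have h7 : (r / 2) ^ 2 ≤ (ξ z τ - y) ^ 2 := by
      rw [← sq_abs (ξ z τ - y)]
      gcongr
    linarith
  have key := transport_nonpos (a := x - r) (b := x + r) (s := s) (t := t) (w := w)
    (H := fun z τ => l * (w z τ - w (ξ z τ) s) ^ 2 - (ξ z τ - y) ^ 2)
    (p := fun z τ => l * (2 * (w z τ - w (ξ z τ) s) * (deriv (fun x' => w x' τ) z -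
      deriv (fun x' => w x' s) (ξ z τ) * (1 + (τ - s) * deriv (fun x' => w x' τ) z))) -
      2 * (ξ z τ - y) * (1 + (τ - s) * deriv (fun x' => w x' τ) z))
    ?_ ?_ ?_ ?_ (hside _ (by simp [abs_of_pos hr])) (hside _ (by simp [abs_of_pos hr])) hxI htI
  · have h1 : ξ x t = y := rfl
    simp only [h1, sub_self] at key
    have h2 : (w x t - w y s) ^ 2 ≤ 0 := by
      by_contra! h
      have := mul_pos hl0 h
      simp at key
      linarith
    have h3 := pow_eq_zero_iff (two_ne_zero) |>.1 (le_antisymm h2 (sq_nonneg _))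
    linarith
  · have : ContinuousOn (fun q : ℝ × ℝ => l * (Function.uncurry w q -
        (fun z => w z s) (Function.uncurry ξ q)) ^ 2 - (Function.uncurry ξ q - y) ^ 2)
        (Icc (x - r) (x + r) ×ˢ Icc s t) := by
      have := hWc.comp_continuousOn hξc
      fun_prop
    exact this
  · intro z hz τ hτ
    have hτ' : τ ∈ Icc s t := ⟨hτ.1.le, hτ.2⟩
    have h1 := hw.hasDerivAt_space hτ' z
    have h2 : HasDerivAt (fun z' => ξ z' τ) (1 + (τ - s) * deriv (fun x' => w x' τ) z) z :=
      (hasDerivAt_id z).add (h1.const_mul _)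
    have h3 : HasDerivAt (fun z' => w (ξ z' τ) s) _ z :=
      HasDerivAt.comp (h₂ := fun z' => w z' s) z (hw.hasDerivAt_space hsI (ξ z τ)) h2
    refine ((((h1.sub h3).pow 2).const_mul l).sub ((h2.sub_const y).pow 2)).congr_deriv ?_
    simp
  · intro z hz τ hτ
    have hτ' : τ ∈ Icc s t := ⟨hτ.1.le, hτ.2⟩
    have h1 := hw.hasDeriv z τ hτ'
    have h2 : HasDerivWithinAt (fun τ' => ξ z τ')
        (1 * w z τ + (τ - s) * (w z τ * deriv (fun x' => w x' τ) z)) (Icc s t) τ :=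
      (((hasDerivWithinAt_id τ _).sub_const s).mul h1).const_add z
    have h3 : HasDerivWithinAt (fun τ' => w (ξ z τ') s) _ (Icc s t) τ :=
      (hw.hasDerivAt_space hsI (ξ z τ)).comp_hasDerivWithinAt τ h2
    refine ((((h1.sub h3).pow 2).const_mul l).sub ((h2.sub_const y).pow 2)).congr_deriv ?_
    simp
    ring
  · intro z hz
    simp only [hξ, sub_self, zero_mul, add_zero]
    nlinarith [sq_nonneg (z - y)]

/-- A jointly continuous solution is constant along characteristics, traced backwards. -/
lemma eq_foot {a b x s t : ℝ} (hw : IsBurgersSolution w (Icc s t)) (hst : s ≤ t)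
    (hc : ContinuousOn (Function.uncurry w) (Ioo a b ×ˢ Icc s t))
    (hx : x ∈ Ioo a b) (hy : x + (t - s) * w x t ∈ Ioo a b) :
    w (x + (t - s) * w x t) s = w x t := by
  set v := w x t with hv
  have hline : ∀ u ∈ Icc 0 (t - s), x + u * v ∈ Ioo a b := by
    intro u hu
    rcases hst.eq_or_lt with h | h
    · have : u = 0 := le_antisymm (by linarith [hu.2]) hu.1
      simpa [this] using hx
    · have hpos : 0 < t - s := by linarith
      have := (convex_Ioo a b) hx hy (a := 1 - u / (t - s)) (b := u / (t - s))
        (by rw [sub_nonneg, div_le_one hpos]; exact hu.2) (div_nonneg hu.1 hpos.le) (by ring)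
      convert this using 1
      simp only [smul_eq_mul]
      field_simp
      ring
  have hmaps : MapsTo (fun u => (x + u * v, t - u)) (Icc 0 (t - s)) (Ioo a b ×ˢ Icc s t) :=
    fun u hu => ⟨hline u hu, by linarith [hu.2], by linarith [hu.1]⟩
  have hg : ContinuousOn (fun u => w (x + u * v) (t - u)) (Icc 0 (t - s)) :=
    hc.comp (f := fun u : ℝ => (x + u * v, t - u)) (by fun_prop) hmaps
  have hsub : Icc 0 (t - s) ⊆ {u | w (x + u * v) (t - u) = v} := by
    refine IsClosed.Icc_subset_of_forall_exists_gt ?_ (by simp [hv]) ?_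
    · have := hg.preimage_isClosed_of_isClosed isClosed_Icc (isClosed_singleton (x := v))
      rwa [inter_comm] at this
    · rintro u ⟨hu, hu1, hu2⟩ y hy1
      have hu : w (x + u * v) (t - u) = v := hu
      have hy1 : u < y := hy1
      have hq := hmaps ⟨hu1, hu2.le⟩
      have hcq := hc _ hq
      have hbd : ∀ᶠ q in 𝓝[Ioo a b ×ˢ Icc s t] (x + u * v, t - u),
          |Function.uncurry w q| < |v| + 1 := by
        refine hcq.abs.eventually_lt_const ?_
        simp [Function.uncurry, hu]
      obtain ⟨ρ, hρ, hball⟩ := Metric.mem_nhdsWithin_iff.1 hbd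
      have hqI : x + u * v ∈ Ioo a b := hq.1
      set r := min (ρ / 2) (min ((x + u * v - a) / 2) ((b - (x + u * v)) / 2)) with hr
      have hr0 : 0 < r := lt_min (by linarith) (lt_min (by linarith [hqI.1]) (by linarith [hqI.2]))
      have hr1 : r ≤ ρ / 2 := min_le_left _ _
      have hr2 : r ≤ (x + u * v - a) / 2 := (min_le_right _ _).trans (min_le_left _ _)
      have hr3 : r ≤ (b - (x + u * v)) / 2 := (min_le_right _ _).trans (min_le_right _ _)
      have hC : 0 < |v| + 1 := by positivity
      set k := min (r / (4 * (|v| + 1))) (min (y - u) (t - s - u)) with hk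
      have hk0 : 0 < k := lt_min (by positivity) (lt_min (by linarith) (by linarith))
      have hk1 : k ≤ r / (4 * (|v| + 1)) := min_le_left _ _
      have hk2 : k ≤ y - u := (min_le_right _ _).trans (min_le_left _ _)
      have hk3 : k ≤ t - s - u := (min_le_right _ _).trans (min_le_right _ _)
      have hk4 : k * (|v| + 1) * 4 ≤ r := by
        rw [le_div_iff₀ (by positivity)] at hk1
        linarith
      have hk5 : k ≤ r / 4 := by nlinarith [abs_nonneg v]
      have hsubset : Icc (x + u * v - r) (x + u * v + r) ×ˢ Icc (t - u - k) (t - u) ⊆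
          Ioo a b ×ˢ Icc s t := by
        rintro ⟨z, τ⟩ ⟨hz, hτ⟩
        exact ⟨⟨by linarith [hz.1, hqI.1], by linarith [hz.2, hqI.2]⟩, by linarith [hτ.1],
          by linarith [hτ.2]⟩
      have := (hw.mono (J := Icc (t - u - k) (t - u))
        (Icc_subset_Icc (by linarith) (by linarith))).eq_foot_of_bounded (x := x + u * v)
        (by linarith) hr0 hC (hc.mono hsubset) (fun z hz τ hτ => le_of_lt (hball
          (show (z, τ) ∈ _ from ⟨?_, hsubset ⟨hz, hτ⟩⟩))) (by convert hk4 using 1; ring)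
      · refine ⟨u + k, ?_, by simpa using hk0, by linarith⟩
        rw [hu] at this
        show w (x + (u + k) * v) (t - (u + k)) = v
        convert this using 2 <;> ring
      · rw [Metric.mem_ball, Prod.dist_eq, Real.dist_eq, Real.dist_eq]
        refine max_lt ?_ ?_
        · exact lt_of_le_of_lt (abs_le.2 ⟨by linarith [hz.1], by linarith [hz.2]⟩ : _ ≤ r)
            (by linarith)
        · exact lt_of_le_of_lt (abs_le.2 ⟨by linarith [hτ.1], by linarith [hτ.2]⟩ : _ ≤ k)
            (by linarith)
  have := hsub (show t - s ∈ Icc 0 (t - s) from ⟨by linarith, le_rfl⟩)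
  simpa using this

lemma continuousOn_reverse {S : Set (ℝ × ℝ)} (hc : ContinuousOn (Function.uncurry w) S) :
    ContinuousOn (Function.uncurry fun x t => w (-x) (-t)) (-S) :=
  hc.comp (f := fun q : ℝ × ℝ => -q) continuous_neg.continuousOn fun _ hq => hq

/-- A jointly continuous solution is constant along characteristics, traced forwards. -/
lemma eq_head {a b x s t : ℝ} (hw : IsBurgersSolution w (Icc s t)) (hst : s ≤ t)
    (hc : ContinuousOn (Function.uncurry w) (Ioo a b ×ˢ Icc s t))
    (hx : x ∈ Ioo a b) (hy : x - (t - s) * w x s ∈ Ioo a b) :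
    w (x - (t - s) * w x s) t = w x s := by
  have h1 := hw.reverse
  have h2 := continuousOn_reverse hc
  have h3 : (-(Ioo a b ×ˢ Icc s t) : Set (ℝ × ℝ)) = Ioo (-b) (-a) ×ˢ Icc (-t) (-s) := by
    ext ⟨z, τ⟩
    simp only [Set.mem_neg, Prod.neg_mk, mem_prod, mem_Ioo, mem_Icc]
    constructor <;> rintro ⟨⟨_, _⟩, _, _⟩ <;> refine ⟨⟨?_, ?_⟩, ?_, ?_⟩ <;> linarith
  rw [neg_Icc] at h1
  rw [h3] at h2
  have := h1.eq_foot (x := -x) (by linarith) h2 ⟨by linarith [hx.2], by linarith [hx.1]⟩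
    (by
      simp only [neg_neg]
      constructor <;> linarith [hy.1, hy.2])
  simp only [neg_neg] at this
  convert this using 2
  ring

/-- Characteristics may be traced back to a time at which joint continuity is not known. -/
lemma eq_foot_of_continuousOn_Ioc {a b x s t : ℝ} (hw : IsBurgersSolution w (Icc s t))
    (hst : s < t) (hc : ContinuousOn (Function.uncurry w) (Ioo a b ×ˢ Ioc s t))
    (hx : x ∈ Ioo a b) (hy : x + (t - s) * w x t ∈ Ioo a b) :
    w (x + (t - s) * w x t) s = w x t := by
  have hsI : s ∈ Icc s t := ⟨le_rfl, hst.le⟩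
  set v := w x t with hv
  set y := x + (t - s) * v with hydef
  by_contra hne
  set D := w y s - v with hD
  have hD0 : D ≠ 0 := sub_ne_zero.2 hne
  have hWc : Continuous (fun z => w z s) := (hw.contDiff s hsI).continuous
  -- a point `p` near `y` whose characteristic meets the one through `(x, t)` before time `t`
  obtain ⟨c, hc0, hpI, hρ0, hρ1⟩ : ∃ c : ℝ, 0 < c ∧ y + c * D ∈ Ioo a b ∧
      0 < c * D / (w (y + c * D) s - v) ∧ c * D / (w (y + c * D) s - v) < t - s := by
    have hlin : Tendsto (fun c : ℝ => y + c * D) (𝓝[>] 0) (𝓝 y) := by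
      have : Continuous (fun c : ℝ => y + c * D) := by fun_prop
      simpa using (this.tendsto 0).mono_left nhdsWithin_le_nhds
    have hden : Tendsto (fun c : ℝ => w (y + c * D) s - v) (𝓝[>] 0) (𝓝 D) :=
      ((hWc.tendsto y).comp hlin).sub_const v
    have hone : Tendsto (fun c : ℝ => D / (w (y + c * D) s - v)) (𝓝[>] 0) (𝓝 1) := by
      have := (tendsto_const_nhds (x := D)).div hden hD0
      rwa [div_self hD0] at this
    have hid : Tendsto (fun c : ℝ => c) (𝓝[>] 0) (𝓝 0) := nhdsWithin_le_nhds
    have hzero : Tendsto (fun c : ℝ => c * (D / (w (y + c * D) s - v))) (𝓝[>] 0) (𝓝 0) := by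
      simpa using hid.mul hone
    have hev := ((hlin.eventually (Ioo_mem_nhds hy.1 hy.2)).and
      (hone.eventually (lt_mem_nhds zero_lt_one))).and
      ((hzero.eventually (gt_mem_nhds (sub_pos.2 hst))).and self_mem_nhdsWithin)
    obtain ⟨c, ⟨h1, h2⟩, h3, h4⟩ := hev.exists
    have h4 : 0 < c := h4
    refine ⟨c, h4, h1, ?_, ?_⟩
    · rw [mul_div_assoc]
      exact mul_pos h4 h2
    · rw [mul_div_assoc]
      exact h3
  set p := y + c * D with hp
  have hden0 : w p s - v ≠ 0 := by
    intro h
    simp [h] at hρ0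
  have hpc : Tendsto (fun σ => w p σ) (𝓝[>] s) (𝓝 (w p s)) := by
    have := (hw.continuousOn_time p s hsI).mono (Ioc_subset_Icc_self)
    rwa [ContinuousWithinAt, nhdsWithin_Ioc_eq_nhdsGT hst] at this
  have hσid : Tendsto (fun σ : ℝ => σ) (𝓝[>] s) (𝓝 s) := nhdsWithin_le_nhds
  have hθ : Tendsto (fun σ => (c * D + (σ - s) * v) / (w p σ - v)) (𝓝[>] s)
      (𝓝 (c * D / (w p s - v))) := by
    have := ((tendsto_const_nhds (x := c * D)).add ((hσid.sub_const s).mul_const v)).div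
      (hpc.sub_const v) hden0
    rwa [sub_self, zero_mul, add_zero] at this
  have hθ' : Tendsto (fun σ => σ + (c * D + (σ - s) * v) / (w p σ - v)) (𝓝[>] s)
      (𝓝 (s + c * D / (w p s - v))) := hσid.add hθ
  have hev := ((hθ.eventually (lt_mem_nhds hρ0)).and
    (hθ'.eventually (gt_mem_nhds (by linarith : s + c * D / (w p s - v) < t)))).and
    (((hpc.sub_const v).eventually (isOpen_ne.mem_nhds hden0)).and self_mem_nhdsWithin)
  obtain ⟨σ, ⟨h1, h2⟩, h3, h4⟩ := hev.exists
  have h4 : s < σ := h4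
  set θ := (c * D + (σ - s) * v) / (w p σ - v) with hθdef
  have hmul : θ * (w p σ - v) = c * D + (σ - s) * v := div_mul_cancel₀ _ h3
  have hτI : σ + θ ∈ Icc s t := ⟨by linarith, h2.le⟩
  have hqI : x + (t - (σ + θ)) * v ∈ Ioo a b := by
    have hpos : 0 < t - s := by linarith
    have := (convex_Ioo a b) hx hy (a := 1 - (t - (σ + θ)) / (t - s))
      (b := (t - (σ + θ)) / (t - s))
      (by rw [sub_nonneg, div_le_one hpos]; linarith) (div_nonneg (by linarith) hpos.le) (by ring)
    convert this using 1
    simp only [smul_eq_mul, hydef]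
    field_simp
    ring
  have hback : w (x + (t - (σ + θ)) * v) (σ + θ) = v :=
    (hw.mono (Icc_subset_Icc hτI.1 le_rfl)).eq_foot h2.le
      (hc.mono (prod_mono le_rfl fun τ hτ => ⟨by linarith [hτ.1], hτ.2⟩)) hx hqI
  have hqeq : p - (σ + θ - σ) * w p σ = x + (t - (σ + θ)) * v := by
    rw [hp, hydef]
    linear_combination -hmul
  have hforw : w (p - (σ + θ - σ) * w p σ) (σ + θ) = w p σ :=
    (hw.mono (Icc_subset_Icc h4.le h2.le)).eq_head (by linarith)
      (hc.mono (prod_mono le_rfl fun τ hτ => ⟨by linarith [hτ.1], by linarith [hτ.2]⟩)) hpI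
      (by rw [hqeq]; exact hqI)
  rw [hqeq, hback] at hforw
  exact h3 (by rw [← hforw]; ring)

/-- On a rectangle, a solution is bounded by its values on the sides and at the initial time. -/
lemma abs_le_of_sides {a₀ a b b₀ s t Λ : ℝ} (hw : IsBurgersSolution w (Icc s t)) (hst : s < t)
    (hc : ContinuousOn (Function.uncurry w) (Ioo a₀ b₀ ×ˢ Ioc s t)) (ha : a₀ < a) (hb : b < b₀)
    (hleft : ∀ τ ∈ Icc s t, |w a τ| ≤ Λ) (hright : ∀ τ ∈ Icc s t, |w b τ| ≤ Λ)
    (hbot : ∀ z ∈ Icc a b, |w z s| ≤ Λ) {x : ℝ} (hx : x ∈ Icc a b) : |w x t| ≤ Λ := by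
  have hx' : x ∈ Ioo a₀ b₀ := ⟨ha.trans_le hx.1, hx.2.trans_lt hb⟩
  have hside : ∀ z ∈ Icc a b, (∀ τ ∈ Icc s t, |w z τ| ≤ Λ) → ∀ u ∈ Icc 0 (t - s),
      x + u * w x t = z → u < t - s → |w x t| ≤ Λ := by
    intro z hz hzb u hu hzu hut
    have hz' : z ∈ Ioo a₀ b₀ := ⟨ha.trans_le hz.1, hz.2.trans_lt hb⟩
    have h1 := (hw.mono (J := Icc (t - u) t) (Icc_subset_Icc (by linarith) le_rfl)).eq_foot
      (x := x) (by linarith [hu.1])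
      (hc.mono (prod_mono le_rfl fun τ hτ => ⟨by linarith [hτ.1], hτ.2⟩)) hx'
      (by rw [sub_sub_cancel, hzu]; exact hz')
    rw [sub_sub_cancel, hzu] at h1
    rw [← h1]
    exact hzb _ ⟨by linarith, by linarith [hu.1]⟩
  by_cases hy : x + (t - s) * w x t ∈ Icc a b
  · rw [← hw.eq_foot_of_continuousOn_Ioc hst hc hx' ⟨ha.trans_le hy.1, hy.2.trans_lt hb⟩]
    exact hbot _ hy
  · have hab : a ≤ b := hx.1.trans hx.2
    rw [mem_Icc, not_and_or, not_le, not_le] at hy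
    rcases hy with hy | hy
    · have hv : w x t < 0 := by
        by_contra! h
        nlinarith [hx.1]
      have hu : (a - x) / w x t < t - s := by
        rw [div_lt_iff_of_neg hv]
        linarith
      exact hside a ⟨le_rfl, hab⟩ hleft _
        ⟨div_nonneg_of_nonpos (by linarith [hx.1]) hv.le, hu.le⟩
        (by rw [div_mul_cancel₀ _ hv.ne]; ring) hu
    · have hv : 0 < w x t := by
        by_contra! h
        nlinarith [hx.2]
      have hu : (b - x) / w x t < t - s := by
        rw [div_lt_iff₀ hv]
        linarith
      exact hside b ⟨hab, le_rfl⟩ hright _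
        ⟨div_nonneg (by linarith [hx.2]) hv.le, hu.le⟩
        (by rw [div_mul_cancel₀ _ hv.ne']; ring) hu

/-- If the solution is uniformly Lipschitz in `x` at the times of a closed set `T` and jointly
continuous at the other times, it is jointly continuous from the right at the times of `T`. -/
lemma continuousWithinAt_right {a b t₀ B L x₀ : ℝ} {T : Set ℝ}
    (hw : IsBurgersSolution w (Icc t₀ B)) (hT : IsClosed T) (ht₀ : t₀ ∈ T) (htB : t₀ ≤ B)
    (hL0 : 0 ≤ L)
    (hL : ∀ s ∈ T, ∀ x ∈ Icc a b, ∀ y ∈ Icc a b, |w x s - w y s| ≤ L * |x - y|)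
    (hc : ∀ s ∈ Icc t₀ B, s ∉ T → ∀ x ∈ Ioo a b,
      ContinuousWithinAt (Function.uncurry w) (univ ×ˢ Icc t₀ B) (x, s))
    (hx₀ : x₀ ∈ Ioo a b) :
    ContinuousWithinAt (Function.uncurry w) (univ ×ˢ Icc t₀ B) (x₀, t₀) := by
  obtain ⟨a₁, haa, hax⟩ := exists_between hx₀.1
  obtain ⟨b₁, hxb, hbb⟩ := exists_between hx₀.2
  obtain ⟨M₁, hM₁⟩ := isCompact_Icc.exists_bound_of_continuousOn (hw.continuousOn_time a₁)
  obtain ⟨M₂, hM₂⟩ := isCompact_Icc.exists_bound_of_continuousOn (hw.continuousOn_time b₁)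
  have ht₀I : t₀ ∈ Icc t₀ B := ⟨le_rfl, htB⟩
  have hM₁0 : 0 ≤ M₁ := (norm_nonneg _).trans (hM₁ t₀ ht₀I)
  have hM₂0 : 0 ≤ M₂ := (norm_nonneg _).trans (hM₂ t₀ ht₀I)
  have hLab : 0 ≤ L * (b - a) := mul_nonneg hL0 (by linarith)
  set Λ := M₁ + M₂ + L * (b - a) with hΛ
  have hΛ0 : 0 ≤ Λ := by positivity
  have hTbd : ∀ s ∈ Icc t₀ B, s ∈ T → ∀ z ∈ Icc a₁ b₁, |w z s| ≤ Λ := by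
    intro s hs hsT z hz
    have h1 := hL s hsT z ⟨by linarith [hz.1], by linarith [hz.2]⟩ a₁ ⟨haa.le, by linarith⟩
    have h2 : L * |z - a₁| ≤ L * (b - a) := by
      gcongr
      rw [abs_of_nonneg (by linarith [hz.1])]
      linarith [hz.2]
    have h3 : |w a₁ s| ≤ M₁ := hM₁ s hs
    have h4 := abs_sub_abs_le_abs_sub (w z s) (w a₁ s)
    linarith
  have key : ∀ s ∈ Icc t₀ B, ∀ x ∈ Icc a₁ b₁, (s - t₀) * Λ < min (a₁ - a) (b - b₁) →
      ∃ σ ∈ T, σ ∈ Icc t₀ s ∧ ∃ y, |y - x| ≤ (s - t₀) * Λ ∧ w y σ = w x s := by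
    intro s hs x hx hsmall
    by_cases hsT : s ∈ T
    · exact ⟨s, hsT, ⟨hs.1, le_rfl⟩, x,
        by simpa using mul_nonneg (sub_nonneg.2 hs.1) hΛ0, rfl⟩
    have hcomp : IsCompact (T ∩ Icc t₀ s) := isCompact_Icc.inter_left hT
    obtain ⟨hσT, hσI⟩ := hcomp.sSup_mem ⟨t₀, ht₀, le_rfl, hs.1⟩
    set σ := sSup (T ∩ Icc t₀ s) with hσ
    have hσs : σ < s := lt_of_le_of_ne hσI.2 (by rintro h; rw [h] at hσT; exact hsT hσT)
    have hgap : ∀ τ ∈ Ioc σ s, τ ∉ T := fun τ hτ hτT =>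
      absurd (le_csSup hcomp.bddAbove ⟨hτT, by linarith [hσI.1, hτ.1], hτ.2⟩) (not_le.2 hτ.1)
    have hcont : ContinuousOn (Function.uncurry w) (Ioo a b ×ˢ Ioc σ s) := by
      rintro ⟨z, τ⟩ ⟨hz, hτ⟩
      exact (hc τ ⟨by linarith [hσI.1, hτ.1], hτ.2.trans hs.2⟩ (hgap τ hτ) z hz).mono
        (prod_mono (subset_univ _) fun τ' hτ' => ⟨by linarith [hσI.1, hτ'.1], hτ'.2.trans hs.2⟩)
    have hsub : Icc σ s ⊆ Icc t₀ B := Icc_subset_Icc hσI.1 hs.2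
    have hw' := hw.mono hsub
    have hv : |w x s| ≤ Λ := hw'.abs_le_of_sides hσs hcont haa hbb
      (fun τ hτ => (hM₁ τ (hsub hτ)).trans (by linarith))
      (fun τ hτ => (hM₂ τ (hsub hτ)).trans (by linarith))
      (hTbd σ ⟨hσI.1, hσI.2.trans hs.2⟩ hσT) hx
    have hdisp : |(s - σ) * w x s| ≤ (s - t₀) * Λ := by
      rw [abs_mul, abs_of_pos (sub_pos.2 hσs)]
      exact mul_le_mul (by linarith [hσI.1]) hv (abs_nonneg _) (by linarith [hs.1])
    have hmin1 := min_le_left (a₁ - a) (b - b₁)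
    have hmin2 := min_le_right (a₁ - a) (b - b₁)
    obtain ⟨hd1, hd2⟩ := abs_le.1 hdisp
    refine ⟨σ, hσT, hσI, x + (s - σ) * w x s, by simpa using hdisp, ?_⟩
    exact hw'.eq_foot_of_continuousOn_Ioc hσs hcont
      ⟨by linarith [hx.1], by linarith [hx.2]⟩
      ⟨by linarith [hx.1], by linarith [hx.2]⟩
  refine Metric.tendsto_nhds.2 fun ε hε => ?_
  obtain ⟨δ, hδ, hδc⟩ := Metric.continuousWithinAt_iff.1 (hw.continuousOn_time x₀ t₀ ht₀I)
    (ε / 2) (by linarith)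
  have hev : ∀ (g : ℝ × ℝ → ℝ), Continuous g → ∀ c, g (x₀, t₀) < c →
      ∀ᶠ q in 𝓝[univ ×ˢ Icc t₀ B] (x₀, t₀), g q < c := fun g hg c hgc =>
    nhdsWithin_le_nhds (hg.continuousAt.eventually_lt_const hgc)
  filter_upwards [self_mem_nhdsWithin,
    hev (fun q => (q.2 - t₀) * Λ) (by fun_prop) (min (a₁ - a) (b - b₁))
      (by simp only [sub_self, zero_mul]; exact lt_min (by linarith) (by linarith)),
    hev (fun q => L * (|q.1 - x₀| + (q.2 - t₀) * Λ)) (by fun_prop) (ε / 2)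
      (by simpa using hε),
    hev (fun q => q.1) (by fun_prop) b₁ hxb,
    hev (fun q => -q.1) (by fun_prop) (-a₁) (by simpa using hax),
    hev (fun q => q.2 - t₀) (by fun_prop) δ (by simpa using hδ)] with q hq h1 h2 h3 h4 h5
  obtain ⟨x, s⟩ := q
  have hs : s ∈ Icc t₀ B := hq.2
  simp only at h1 h2 h3 h4 h5
  obtain ⟨σ, hσT, hσI, y, hy, hwy⟩ := key s hs x ⟨by linarith, h3.le⟩ h1
  have hmin1 := min_le_left (a₁ - a) (b - b₁)
  have hmin2 := min_le_right (a₁ - a) (b - b₁)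
  have hyI : y ∈ Icc a b := by
    have := abs_le.1 hy
    exact ⟨by linarith, by linarith⟩
  have h6 := hL σ hσT y hyI x₀ ⟨hx₀.1.le, hx₀.2.le⟩
  have h7 : L * |y - x₀| ≤ L * (|x - x₀| + (s - t₀) * Λ) := by
    gcongr
    have := abs_sub_le y x x₀
    linarith
  have h8 : |w x₀ σ - w x₀ t₀| < ε / 2 := by
    refine hδc ⟨hσI.1, hσI.2.trans hs.2⟩ ?_
    rw [Real.dist_eq, abs_of_nonneg (by linarith [hσI.1])]
    linarith [hσI.2]
  rw [Real.dist_eq]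
  change |w x s - w x₀ t₀| < ε
  rw [← hwy]
  have := abs_sub_le (w y σ) (w x₀ σ) (w x₀ t₀)
  linarith

lemma continuousWithinAt_reverse {A B x s : ℝ}
    (h : ContinuousWithinAt (Function.uncurry w) (univ ×ˢ Icc A B) (x, s)) :
    ContinuousWithinAt (Function.uncurry fun x t => w (-x) (-t)) (univ ×ˢ Icc (-B) (-A))
      (-x, -s) := by
  have h' : ContinuousWithinAt (Function.uncurry w) (univ ×ˢ Icc A B) (-((-x, -s) : ℝ × ℝ)) := by
    simpa using h
  exact h'.comp (f := fun q : ℝ × ℝ => -q) continuous_neg.continuousWithinAt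
    fun q hq => ⟨trivial, by
      have := hq.2
      simp only [Prod.snd_neg, mem_Icc] at *
      constructor <;> linarith⟩

lemma continuousWithinAt_left {a b t₀ A L x₀ : ℝ} {T : Set ℝ}
    (hw : IsBurgersSolution w (Icc A t₀)) (hT : IsClosed T) (ht₀ : t₀ ∈ T) (htA : A ≤ t₀)
    (hL0 : 0 ≤ L)
    (hL : ∀ s ∈ T, ∀ x ∈ Icc a b, ∀ y ∈ Icc a b, |w x s - w y s| ≤ L * |x - y|)
    (hc : ∀ s ∈ Icc A t₀, s ∉ T → ∀ x ∈ Ioo a b,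
      ContinuousWithinAt (Function.uncurry w) (univ ×ˢ Icc A t₀) (x, s))
    (hx₀ : x₀ ∈ Ioo a b) :
    ContinuousWithinAt (Function.uncurry w) (univ ×ˢ Icc A t₀) (x₀, t₀) := by
  have hw' := hw.reverse
  rw [neg_Icc] at hw'
  have := hw'.continuousWithinAt_right (a := -b) (b := -a) (x₀ := -x₀) (T := -T) (L := L)
    hT.neg (by simpa using ht₀) (by linarith) hL0 ?_ ?_ ⟨by linarith [hx₀.2], by linarith [hx₀.1]⟩
  · simpa using continuousWithinAt_reverse this
  · intro s hs x hx y hy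
    have := hL (-s) hs (-x) ⟨by linarith [hx.2], by linarith [hx.1]⟩ (-y)
      ⟨by linarith [hy.2], by linarith [hy.1]⟩
    rwa [show -x - -y = -(x - y) by ring, abs_neg] at this
  · intro s hs hsT x hx
    have := hc (-s) ⟨by linarith [hs.2], by linarith [hs.1]⟩ hsT (-x)
      ⟨by linarith [hx.2], by linarith [hx.1]⟩
    simpa using continuousWithinAt_reverse this

/-- Separately differentiable solutions are automatically jointly continuous. -/
theorem continuousOn {A B : ℝ} (hw : IsBurgersSolution w (Icc A B)) :
    ContinuousOn (Function.uncurry w) (univ ×ˢ Icc A B) := by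
  set S : Set (ℝ × ℝ) := univ ×ˢ Icc A B with hS
  set f := Function.uncurry w with hf
  set G : Set (ℝ × ℝ) := {p | ∀ᶠ q in 𝓝 p, q ∈ S → ContinuousWithinAt f S q} with hG
  have hGo : IsOpen G := isOpen_setOfPred_eventually_nhds
  have hSc : IsClosed S := isClosed_univ.prod isClosed_Icc
  suffices hP : Gᶜ = ∅ by
    intro p hp
    have : p ∈ G := by
      rw [compl_empty_iff] at hP
      rw [hP]
      trivial
    exact (Eventually.self_of_nhds this) hp
  by_contra hne
  rw [← ne_eq, ← nonempty_iff_ne_empty] at hne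
  have hPS : ∀ p ∈ Gᶜ, p ∈ S := by
    intro p hp
    by_contra hpS
    apply hp
    filter_upwards [hSc.isOpen_compl.mem_nhds hpS] with q hq hqS
    exact absurd hqS hq
  have hPt : ∀ p ∈ Gᶜ, p.2 ∈ Icc A B := fun p hp => (hPS p hp).2
  have : Nonempty ↥(Gᶜ) := hne.to_subtype
  have : CompleteSpace ↥(Gᶜ) := hGo.isClosed_compl.completeSpace_coe
  set F : ℕ → Set ↥(Gᶜ) := fun n => {p : ↥(Gᶜ) | ∀ x y, |x - p.1.1| < 1 / ((n : ℝ) + 1) →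
      |y - p.1.1| < 1 / ((n : ℝ) + 1) → |w x p.1.2 - w y p.1.2| ≤ n * |x - y|} with hF
  have hFc : ∀ n, IsClosed (F n) := by
    intro n
    refine IsSeqClosed.isClosed fun u p hu hup x y hx hy => ?_
    have h1 : Tendsto (fun k => (u k).1.1) atTop (𝓝 p.1.1) :=
      ((continuous_fst.comp continuous_subtype_val).tendsto p).comp hup
    have h2 : Tendsto (fun k => (u k).1.2) atTop (𝓝[Icc A B] p.1.2) :=
      tendsto_nhdsWithin_iff.2 ⟨((continuous_snd.comp continuous_subtype_val).tendsto p).comp hup,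
        Eventually.of_forall fun k => hPt _ (u k).2⟩
    have h3 : ∀ z, Tendsto (fun k => w z (u k).1.2) atTop (𝓝 (w z p.1.2)) := fun z =>
      Tendsto.comp (hw.continuousOn_time z _ (hPt _ p.2)) h2
    refine le_of_tendsto ((h3 x).sub (h3 y)).abs ?_
    filter_upwards [(h1.const_sub x).abs.eventually (gt_mem_nhds hx),
      (h1.const_sub y).abs.eventually (gt_mem_nhds hy)] with k hk1 hk2
    exact hu k x y hk1 hk2
  have hFu : ⋃ n, F n = univ := by
    refine eq_univ_of_forall fun p => mem_iUnion.2 ?_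
    have hCD := hw.contDiff _ (hPt _ p.2)
    obtain ⟨K, hK⟩ := (isCompact_Icc (a := p.1.1 - 1) (b := p.1.1 + 1)).exists_bound_of_continuousOn
      (hCD.continuous_deriv (by norm_num)).continuousOn
    obtain ⟨n, hn⟩ := exists_nat_ge K
    refine ⟨n, fun x y hx hy => ?_⟩
    have hle : 1 / ((n : ℝ) + 1) ≤ 1 := by
      rw [div_le_one (by positivity)]
      linarith [Nat.cast_nonneg (α := ℝ) n]
    have hI : ∀ z, |z - p.1.1| < 1 / ((n : ℝ) + 1) → z ∈ Icc (p.1.1 - 1) (p.1.1 + 1) := by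
      intro z hz
      have := abs_lt.1 hz
      exact ⟨by linarith, by linarith⟩
    exact Convex.norm_image_sub_le_of_norm_deriv_le (f := fun z => w z p.1.2)
      (fun z _ => hCD.differentiable (by norm_num) z) (fun z hz => (hK z hz).trans hn)
      (convex_Icc _ _) (hI y hy) (hI x hx)
  obtain ⟨n, hn⟩ := nonempty_interior_of_iUnion_of_closed hFc hFu
  obtain ⟨⟨⟨x₁, t₁⟩, hp₁⟩, hint⟩ := hn
  obtain ⟨ρ, hρ, hball⟩ := Metric.isOpen_iff.1 isOpen_interior _ hint
  set δ := min (ρ / 2) (1 / (4 * ((n : ℝ) + 1))) with hδ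
  have hδ0 : 0 < δ := lt_min (by linarith) (by positivity)
  have hδ1 : δ < ρ := lt_of_le_of_lt (min_le_left _ _) (by linarith)
  have hδ2 : 2 * δ < 1 / ((n : ℝ) + 1) := by
    have h1 : δ ≤ 1 / (4 * ((n : ℝ) + 1)) := min_le_right _ _
    have h2 : 1 / (4 * ((n : ℝ) + 1)) = 1 / ((n : ℝ) + 1) / 4 := by field_simp
    have h3 : 0 < 1 / ((n : ℝ) + 1) := by positivity
    linarith
  set a := x₁ - δ with ha
  set b := x₁ + δ with hb
  set Q : Set (ℝ × ℝ) := Icc a b ×ˢ Icc (t₁ - δ) (t₁ + δ) with hQ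
  set T : Set ℝ := Prod.snd '' (Gᶜ ∩ Q) with hTdef
  have hT : IsClosed T := (((isCompact_Icc.prod isCompact_Icc).inter_left
    hGo.isClosed_compl).image continuous_snd).isClosed
  have hL : ∀ s ∈ T, ∀ x ∈ Icc a b, ∀ y ∈ Icc a b, |w x s - w y s| ≤ n * |x - y| := by
    rintro _ ⟨⟨z, s⟩, ⟨hzG, hz, hs⟩, rfl⟩ x hx y hy
    simp only at hz hs
    have hmem : (⟨(z, s), hzG⟩ : ↥(Gᶜ)) ∈ Metric.ball (⟨(x₁, t₁), hp₁⟩ : ↥(Gᶜ)) ρ := by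
      rw [Metric.mem_ball, Subtype.dist_eq, Prod.dist_eq, Real.dist_eq, Real.dist_eq]
      refine lt_of_le_of_lt (max_le ?_ ?_) hδ1
      · exact abs_le.2 ⟨by linarith [hz.1], by linarith [hz.2]⟩
      · exact abs_le.2 ⟨by linarith [hs.1], by linarith [hs.2]⟩
    refine interior_subset (hball hmem) x y ?_ ?_
    · exact lt_of_le_of_lt (abs_le.2 ⟨by linarith [hz.2, hx.1], by linarith [hz.1, hx.2]⟩) hδ2
    · exact lt_of_le_of_lt (abs_le.2 ⟨by linarith [hz.2, hy.1], by linarith [hz.1, hy.2]⟩) hδ2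
  have hgood : ∀ x ∈ Icc a b, ∀ s ∈ Icc (t₁ - δ) (t₁ + δ), s ∈ Icc A B → s ∉ T →
      ContinuousWithinAt f S (x, s) := by
    intro x hx s hs hsI hsT
    have : (x, s) ∈ G := by
      by_contra h
      exact hsT ⟨(x, s), ⟨h, hx, hs⟩, rfl⟩
    exact (Eventually.self_of_nhds this) ⟨trivial, hsI⟩
  refine hp₁ ?_
  filter_upwards [prod_mem_nhds (Ioo_mem_nhds (show a < x₁ by linarith) (show x₁ < b by linarith))
    (Ioo_mem_nhds (show t₁ - δ < t₁ by linarith) (show t₁ < t₁ + δ by linarith))] with q hq hqS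
  obtain ⟨x, t⟩ := q
  obtain ⟨hx, ht⟩ : x ∈ Ioo a b ∧ t ∈ Ioo (t₁ - δ) (t₁ + δ) := hq
  have htI : t ∈ Icc A B := hqS.2
  by_cases htT : t ∈ T
  swap
  · exact hgood x (Ioo_subset_Icc_self hx) t (Ioo_subset_Icc_self ht) htI htT
  have hright : ContinuousWithinAt f (univ ×ˢ Icc t (min B (t₁ + δ))) (x, t) := by
    have hsub : Icc t (min B (t₁ + δ)) ⊆ Icc A B :=
      Icc_subset_Icc htI.1 (min_le_left _ _)
    refine (hw.mono hsub).continuousWithinAt_right hT htT (le_min htI.2 ht.2.le)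
      (Nat.cast_nonneg n) hL (fun s hs hsT z hz => ?_) hx
    exact (hgood z (Ioo_subset_Icc_self hz) s
      ⟨by linarith [ht.1, hs.1], hs.2.trans (min_le_right _ _)⟩ (hsub hs) hsT).mono
      (prod_mono le_rfl hsub)
  have hleft : ContinuousWithinAt f (univ ×ˢ Icc (max A (t₁ - δ)) t) (x, t) := by
    have hsub : Icc (max A (t₁ - δ)) t ⊆ Icc A B :=
      Icc_subset_Icc (le_max_left _ _) htI.2
    refine (hw.mono hsub).continuousWithinAt_left hT htT (max_le htI.1 ht.1.le)
      (Nat.cast_nonneg n) hL (fun s hs hsT z hz => ?_) hx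
    exact (hgood z (Ioo_subset_Icc_self hz) s
      ⟨(le_max_right _ _).trans hs.1, by linarith [ht.2, hs.2]⟩ (hsub hs) hsT).mono
      (prod_mono le_rfl hsub)
  refine (hright.union hleft).mono_of_mem_nhdsWithin ?_
  have hnear : (univ ×ˢ Ioo (t₁ - δ) (t₁ + δ) : Set (ℝ × ℝ)) ∈ 𝓝 (x, t) :=
    prod_mem_nhds univ_mem (Ioo_mem_nhds ht.1 ht.2)
  filter_upwards [self_mem_nhdsWithin, nhdsWithin_le_nhds hnear] with q hq1 hq2
  rcases le_total t q.2 with h | h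
  · exact Or.inl ⟨trivial, h, le_min hq1.2.2 hq2.2.2.le⟩
  · exact Or.inr ⟨trivial, max_le hq1.2.1 hq2.2.1.le, h⟩

/-- The implicit solution formula `w(x, t) = w(x + (t - s) w(x, t), s)`. -/
theorem eq_initial {s t : ℝ} (hw : IsBurgersSolution w (Icc s t)) (hst : s ≤ t) (x : ℝ) :
    w (x + (t - s) * w x t) s = w x t := by
  set d := |(t - s) * w x t| + 1 with hd
  have h1 := neg_abs_le ((t - s) * w x t)
  have h2 := le_abs_self ((t - s) * w x t)
  refine hw.eq_foot (a := x - d) (b := x + d) hst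
    (hw.continuousOn.mono (prod_mono (subset_univ _) le_rfl)) ⟨?_, ?_⟩ ⟨?_, ?_⟩ <;>
  linarith [abs_nonneg ((t - s) * w x t)]

end IsBurgersSolution

lemma hasDerivAt_iteratedDeriv {g : ℝ → ℝ} {n j : ℕ} (hg : ContDiff ℝ n g) (hj : j < n) (x : ℝ) :
    HasDerivAt (iteratedDeriv j g) (iteratedDeriv (j + 1) g x) x := by
  rw [iteratedDeriv_succ]
  exact (hg.differentiable_iteratedDeriv j (by exact_mod_cast hj) x).hasDerivAt

/-- `C³` bound for a solution `f` of the implicit equation `f(x) = θ(x + t f(x))`. -/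
lemma abs_iteratedDeriv_le_of_implicit {f θ : ℝ → ℝ} {N t : ℝ} (hN : 0 < N) (ht : 0 ≤ t)
    (htN : t * N ≤ 1 / 100) (hf : ContDiff ℝ 3 f) (hθ : ContDiff ℝ 3 θ)
    (hb : ∀ j ≤ 3, ∀ x, |iteratedDeriv j θ x| ≤ N) (heq : ∀ x, θ (x + t * f x) = f x) :
    ∀ j ≤ 3, ∀ x, |iteratedDeriv j f x| ≤ 2 * N := by
  have hf' : ContDiff ℝ (3 : ℕ) f := hf
  have hθ' : ContDiff ℝ (3 : ℕ) θ := hθ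
  set ξ : ℝ → ℝ := fun x => x + t * f x with hξ
  set m : ℝ → ℝ := fun x => 1 + t * iteratedDeriv 1 f x with hm
  have hd0 : ∀ x, HasDerivAt f (iteratedDeriv 1 f x) x := fun x => by
    simpa using hasDerivAt_iteratedDeriv hf' (j := 0) (by norm_num) x
  have hdξ : ∀ x, HasDerivAt ξ (m x) x := fun x =>
    (hasDerivAt_id x).add ((hd0 x).const_mul t)
  have hdm : ∀ x, HasDerivAt m (t * iteratedDeriv 2 f x) x := fun x =>
    ((hasDerivAt_iteratedDeriv hf' (j := 1) (by norm_num) x).const_mul t).const_add 1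
  have hdθ : ∀ j < 3, ∀ x, HasDerivAt (fun x => iteratedDeriv j θ (ξ x))
      (iteratedDeriv (j + 1) θ (ξ x) * m x) x := fun j hj x =>
    (hasDerivAt_iteratedDeriv hθ' hj (ξ x)).comp x (hdξ x)
  have e0 : f = fun x => iteratedDeriv 0 θ (ξ x) := by
    ext x
    simpa using (heq x).symm
  have e1 : ∀ x, iteratedDeriv 1 f x = iteratedDeriv 1 θ (ξ x) * m x := fun x => by
    have h := hd0 x
    rw [show HasDerivAt f _ x ↔ HasDerivAt (fun x => iteratedDeriv 0 θ (ξ x)) _ x by rw [← e0]] at h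
    exact h.unique (hdθ 0 (by norm_num) x)
  have e2 : ∀ x, iteratedDeriv 2 f x = iteratedDeriv 2 θ (ξ x) * m x * m x +
      iteratedDeriv 1 θ (ξ x) * (t * iteratedDeriv 2 f x) := fun x => by
    have h := hasDerivAt_iteratedDeriv hf' (j := 1) (by norm_num) x
    rw [funext e1] at h
    exact h.unique ((hdθ 1 (by norm_num) x).mul (hdm x))
  have e3 : ∀ x, iteratedDeriv 3 f x =
      ((iteratedDeriv 3 θ (ξ x) * m x) * m x + iteratedDeriv 2 θ (ξ x) * (t * iteratedDeriv 2 f x))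
        * m x + iteratedDeriv 2 θ (ξ x) * m x * (t * iteratedDeriv 2 f x) +
      (iteratedDeriv 2 θ (ξ x) * m x * (t * iteratedDeriv 2 f x) +
        iteratedDeriv 1 θ (ξ x) * (t * iteratedDeriv 3 f x)) := fun x => by
    have h2 := hasDerivAt_iteratedDeriv hf' (j := 2) (by norm_num) x
    have h := h2
    rw [funext e2] at h
    exact h.unique ((((hdθ 2 (by norm_num) x).mul (hdm x)).mul (hdm x)).add
      ((hdθ 1 (by norm_num) x).mul (h2.const_mul t)))
  have hsmall : ∀ x u, |iteratedDeriv 1 θ (ξ x) * (t * u)| ≤ |u| / 100 := fun x u => by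
    rw [show iteratedDeriv 1 θ (ξ x) * (t * u) = t * iteratedDeriv 1 θ (ξ x) * u by ring, abs_mul,
      abs_mul, abs_of_nonneg ht]
    have h1 : t * |iteratedDeriv 1 θ (ξ x)| ≤ 1 / 100 :=
      (mul_le_mul_of_nonneg_left (hb 1 (by norm_num) _) ht).trans htN
    nlinarith [abs_nonneg u]
  have bm : ∀ x, |m x| ≤ 51 / 50 := fun x => by
    have h1 : m x = 1 + iteratedDeriv 1 θ (ξ x) * (t * m x) := by
      have h0 : m x = 1 + t * iteratedDeriv 1 f x := rfl
      linear_combination h0 + t * e1 x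
    have h2 := hsmall x (m x)
    have h3 : |m x| ≤ |(1 : ℝ)| + |iteratedDeriv 1 θ (ξ x) * (t * m x)| := by
      conv_lhs => rw [h1]
      exact abs_add_le _ _
    rw [abs_one] at h3
    linarith
  have bθ : ∀ j ≤ 3, ∀ x u, |iteratedDeriv j θ (ξ x) * u| ≤ N * |u| := fun j hj x u => by
    rw [abs_mul]
    exact mul_le_mul_of_nonneg_right (hb j hj _) (abs_nonneg u)
  have bm2 : ∀ x, |m x| * |m x| ≤ 53 / 50 := fun x => by
    nlinarith [bm x, abs_nonneg (m x)]
  have b2 : ∀ x, |iteratedDeriv 2 f x| ≤ 2 * N := fun x => by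
    have h1 := bθ 2 (by norm_num) x (m x * m x)
    have h2 := hsmall x (iteratedDeriv 2 f x)
    have h3 := abs_add_le (iteratedDeriv 2 θ (ξ x) * (m x * m x))
      (iteratedDeriv 1 θ (ξ x) * (t * iteratedDeriv 2 f x))
    rw [← mul_assoc, ← e2 x, mul_assoc] at h3
    rw [abs_mul (m x)] at h1
    nlinarith [bm2 x]
  intro j hj x
  interval_cases j
  · rw [e0]
    simpa using (hb 0 (by norm_num) (ξ x)).trans (by linarith)
  · rw [e1 x]
    have := bθ 1 (by norm_num) x (m x)
    nlinarith [bm x]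
  · exact b2 x
  · have h1 := bθ 3 le_rfl x (m x * m x * m x)
    have h2 := bθ 2 (by norm_num) x (m x * (t * iteratedDeriv 2 f x))
    have h3 := hsmall x (iteratedDeriv 3 f x)
    have e3' : iteratedDeriv 3 f x = iteratedDeriv 3 θ (ξ x) * (m x * m x * m x) +
        3 * (iteratedDeriv 2 θ (ξ x) * (m x * (t * iteratedDeriv 2 f x))) +
        iteratedDeriv 1 θ (ξ x) * (t * iteratedDeriv 3 f x) := by
      linear_combination e3 x
    have h4 := abs_add_three (iteratedDeriv 3 θ (ξ x) * (m x * m x * m x))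
      (3 * (iteratedDeriv 2 θ (ξ x) * (m x * (t * iteratedDeriv 2 f x))))
      (iteratedDeriv 1 θ (ξ x) * (t * iteratedDeriv 3 f x))
    rw [← e3', abs_mul (3 : ℝ), abs_of_pos (by norm_num : (0 : ℝ) < 3)] at h4
    rw [abs_mul (m x * m x), abs_mul (m x)] at h1
    rw [abs_mul (m x), abs_mul t, abs_of_nonneg ht] at h2
    have h5 : t * |iteratedDeriv 2 f x| ≤ 1 / 50 := by
      have := mul_le_mul_of_nonneg_left (b2 x) ht
      linarith
    have h6 : |m x| * |m x| * |m x| ≤ 11 / 10 := by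
      nlinarith [bm2 x, bm x, abs_nonneg (m x), mul_nonneg (abs_nonneg (m x)) (abs_nonneg (m x))]
    have h7 : |m x| * (t * |iteratedDeriv 2 f x|) ≤ 1 / 40 := by
      nlinarith [bm x, abs_nonneg (m x), mul_nonneg ht (abs_nonneg (iteratedDeriv 2 f x))]
    have h8 := mul_le_mul_of_nonneg_left h6 hN.le
    have h9 := mul_le_mul_of_nonneg_left h7 hN.le
    linarith

/-- Bounded measurable functions all of whose Gaussian regularisations have a nonnegative
cosine transform. -/
structure GaussPos (p : ℝ → ℝ) : Prop where
  measurable : Measurable p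
  bounded : ∃ C, ∀ ξ, |p ξ| ≤ C
  nonneg : ∀ b > 0, ∀ x, 0 ≤ ∫ ξ, Real.cos (x * ξ) * p ξ * Real.exp (-b * ξ ^ 2)

lemma integral_cos_mul_exp_neg_mul_sq {b : ℝ} (hb : 0 < b) (x : ℝ) :
    ∫ ξ, Real.cos (x * ξ) * Real.exp (-b * ξ ^ 2) =
      √(Real.pi / b) * Real.exp (-x ^ 2 / (4 * b)) := by
  have h := congrArg Complex.re (fourierIntegral_gaussian (b := b) (by simpa using hb) x)
  have hi : Integrable fun ξ : ℝ =>
      Complex.exp (Complex.I * x * ξ) * Complex.exp (-b * ξ ^ 2) := by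
    refine (integrable_exp_neg_mul_sq hb).mono' (by fun_prop) (.of_forall fun ξ => ?_)
    rw [show Complex.I * x * ξ = ((x * ξ : ℝ) : ℂ) * Complex.I by push_cast; ring, norm_mul,
      Complex.norm_exp_ofReal_mul_I, one_mul, Complex.norm_exp,
      show (-b * ξ ^ 2 : ℂ) = ((-b * ξ ^ 2 : ℝ) : ℂ) by push_cast; ring, Complex.ofReal_re]
  have hre := integral_re hi
  simp only [RCLike.re_to_complex] at hre
  rw [← hre] at h
  have e1 : ∀ ξ : ℝ, (Complex.exp (Complex.I * x * ξ) * Complex.exp (-b * ξ ^ 2)).re =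
      Real.cos (x * ξ) * Real.exp (-b * ξ ^ 2) := fun ξ => by
    rw [show Complex.I * x * ξ = ((x * ξ : ℝ) : ℂ) * Complex.I by push_cast; ring,
      show (-b * ξ ^ 2 : ℂ) = ((-b * ξ ^ 2 : ℝ) : ℂ) by push_cast; ring, ← Complex.ofReal_exp,
      Complex.re_mul_ofReal, Complex.exp_ofReal_mul_I_re]
  simp only [e1] at h
  rw [h, show (Real.pi / b : ℂ) = ((Real.pi / b : ℝ) : ℂ) by push_cast; ring,
    show (1 / 2 : ℂ) = ((1 / 2 : ℝ) : ℂ) by push_cast; ring,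
    ← Complex.ofReal_cpow (by positivity), ← Real.sqrt_eq_rpow,
    show (-x ^ 2 / (4 * b) : ℂ) = ((-x ^ 2 / (4 * b) : ℝ) : ℂ) by push_cast; ring,
    ← Complex.ofReal_exp, ← Complex.ofReal_mul, Complex.ofReal_re]

namespace GaussPos

variable {p q : ℝ → ℝ}

lemma integrable (hp : GaussPos p) {b : ℝ} (hb : 0 < b) (x : ℝ) :
    Integrable fun ξ => Real.cos (x * ξ) * p ξ * Real.exp (-b * ξ ^ 2) := by
  obtain ⟨C, hC⟩ := hp.bounded
  have := hp.measurable
  refine (integrable_exp_neg_mul_sq hb).bdd_mul (c := C) (by fun_prop) (.of_forall fun ξ => ?_)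
  rw [Real.norm_eq_abs, abs_mul]
  exact (mul_le_of_le_one_left (abs_nonneg _) (Real.abs_cos_le_one _)).trans (hC ξ)

lemma one : GaussPos fun _ => 1 where
  measurable := measurable_const
  bounded := ⟨1, by simp⟩
  nonneg b hb x := by
    simp only [mul_one]
    rw [integral_cos_mul_exp_neg_mul_sq hb]
    positivity

lemma add (hp : GaussPos p) (hq : GaussPos q) : GaussPos fun ξ => p ξ + q ξ where
  measurable := hp.measurable.add hq.measurable
  bounded := by
    obtain ⟨C, hC⟩ := hp.bounded
    obtain ⟨D, hD⟩ := hq.bounded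
    exact ⟨C + D, fun ξ => (abs_add_le _ _).trans (add_le_add (hC ξ) (hD ξ))⟩
  nonneg b hb x := by
    simp only [mul_add, add_mul]
    rw [integral_add (hp.integrable hb x) (hq.integrable hb x)]
    exact add_nonneg (hp.nonneg b hb x) (hq.nonneg b hb x)

lemma const_mul (hp : GaussPos p) {c : ℝ} (hc : 0 ≤ c) : GaussPos fun ξ => c * p ξ where
  measurable := hp.measurable.const_mul c
  bounded := by
    obtain ⟨C, hC⟩ := hp.bounded
    exact ⟨c * C, fun ξ => by
      rw [abs_mul, abs_of_nonneg hc]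
      exact mul_le_mul_of_nonneg_left (hC ξ) hc⟩
  nonneg b hb x := by
    have h : ∀ ξ, Real.cos (x * ξ) * (c * p ξ) * Real.exp (-b * ξ ^ 2) =
        c * (Real.cos (x * ξ) * p ξ * Real.exp (-b * ξ ^ 2)) := fun ξ => by ring
    simp only [h]
    rw [integral_const_mul]
    exact mul_nonneg hc (hp.nonneg b hb x)

lemma of_tendsto {P : ℕ → ℝ → ℝ} {C : ℝ} (hP : ∀ n, GaussPos (P n)) (hC : ∀ n ξ, |P n ξ| ≤ C)
    (hlim : ∀ ξ, Tendsto (fun n => P n ξ) atTop (𝓝 (p ξ))) : GaussPos p where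
  measurable := measurable_of_tendsto_metrizable (fun n => (hP n).measurable)
    (tendsto_pi_nhds.2 hlim)
  bounded := ⟨C, fun ξ => le_of_tendsto (hlim ξ).abs (.of_forall fun n => hC n ξ)⟩
  nonneg b hb x := by
    refine ge_of_tendsto' (tendsto_integral_of_dominated_convergence
      (fun ξ => C * Real.exp (-b * ξ ^ 2)) (fun n => ((hP n).integrable hb x).aestronglyMeasurable)
      ((integrable_exp_neg_mul_sq hb).const_mul C) (fun n => .of_forall fun ξ => ?_)
      (.of_forall fun ξ => ((hlim ξ).const_mul _).mul_const _)) (fun n => (hP n).nonneg b hb x)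
    rw [Real.norm_eq_abs, abs_mul, abs_mul, Real.abs_exp]
    exact mul_le_mul_of_nonneg_right ((mul_le_of_le_one_left (abs_nonneg _)
      (Real.abs_cos_le_one _)).trans (hC n ξ)) (Real.exp_pos _).le

lemma mul_gaussian (hp : GaussPos p) {y : ℝ} (hy : 0 ≤ y) :
    GaussPos fun ξ => p ξ * Real.exp (-y * ξ ^ 2) where
  measurable := hp.measurable.mul (by fun_prop)
  bounded := by
    obtain ⟨C, hC⟩ := hp.bounded
    refine ⟨C, fun ξ => ?_⟩
    rw [abs_mul, Real.abs_exp]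
    refine (mul_le_of_le_one_right (abs_nonneg _) ?_).trans (hC ξ)
    rw [Real.exp_le_one_iff]
    nlinarith [mul_nonneg hy (sq_nonneg ξ)]
  nonneg b hb x := by
    convert hp.nonneg (b + y) (by linarith) x using 3 with ξ
    rw [show -(b + y) * ξ ^ 2 = -y * ξ ^ 2 + -b * ξ ^ 2 by ring, Real.exp_add]
    ring

lemma integral {k : ℝ → ℝ → ℝ} {g : ℝ → ℝ} {ν : Measure ℝ} [SFinite ν]
    (hk : Measurable (Function.uncurry k)) (hg : Integrable g ν)
    (hkg : ∀ᵐ t ∂ν, ∀ ξ, |k t ξ| ≤ g t) (hpos : ∀ᵐ t ∂ν, GaussPos (k t)) :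
    GaussPos fun ξ => ∫ t, k t ξ ∂ν where
  measurable := (hk.stronglyMeasurable.integral_prod_left').measurable
  bounded := ⟨∫ t, g t ∂ν, fun ξ =>
    norm_integral_le_of_norm_le (f := fun t => k t ξ) hg (hkg.mono fun t ht => ht ξ)⟩
  nonneg b hb x := by
    have h : ∀ ξ, Real.cos (x * ξ) * (∫ t, k t ξ ∂ν) * Real.exp (-b * ξ ^ 2) =
        ∫ t, Real.cos (x * ξ) * k t ξ * Real.exp (-b * ξ ^ 2) ∂ν := fun ξ => by
      rw [integral_mul_const, integral_const_mul]
    simp only [h]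
    rw [integral_integral_swap]
    · exact integral_nonneg_of_ae (hpos.mono fun t ht => ht.nonneg b hb x)
    · refine ((integrable_exp_neg_mul_sq hb).mul_prod hg).mono' ?_ ?_
      · have : Measurable fun z : ℝ × ℝ => k z.2 z.1 := hk.comp measurable_swap
        simp only [Function.uncurry_def]
        fun_prop
      · filter_upwards [Measure.quasiMeasurePreserving_snd.ae hkg] with z hz
        simp only [Function.uncurry_def, Real.norm_eq_abs, abs_mul, Real.abs_exp]
        rw [mul_comm]
        exact mul_le_mul_of_nonneg_left ((mul_le_of_le_one_left (abs_nonneg _)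
          (Real.abs_cos_le_one _)).trans (hz z.1)) (Real.exp_pos _).le

lemma mul_inv_add_sq (hp : GaussPos p) {t : ℝ} (ht : 0 < t) :
    GaussPos fun ξ => p ξ * (t + ξ ^ 2)⁻¹ := by
  obtain ⟨C, hC⟩ := hp.bounded
  have hm := hp.measurable
  have hexp : ∀ a > 0, IntegrableOn (fun y => Real.exp (-a * y)) (Ioi 0) := fun a ha =>
    integrableOn_exp_mul_Ioi (by linarith) 0
  have key := GaussPos.integral (ν := volume.restrict (Ioi 0))
    (k := fun y ξ => Real.exp (-t * y) * (p ξ * Real.exp (-y * ξ ^ 2)))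
    (g := fun y => Real.exp (-t * y) * C) (by fun_prop) ((hexp t ht).mul_const C)
    ((ae_restrict_mem measurableSet_Ioi).mono fun y hy ξ => ?_)
    ((ae_restrict_mem measurableSet_Ioi).mono fun y hy =>
      (hp.mul_gaussian (le_of_lt hy)).const_mul (Real.exp_pos _).le)
  · convert key using 2 with ξ
    have h : ∀ y, Real.exp (-t * y) * (p ξ * Real.exp (-y * ξ ^ 2)) =
        p ξ * Real.exp (-(t + ξ ^ 2) * y) := fun y => by
      rw [show -(t + ξ ^ 2) * y = -t * y + -y * ξ ^ 2 by ring, Real.exp_add]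
      ring
    simp only [h]
    rw [integral_const_mul, integral_exp_mul_Ioi (by nlinarith [sq_nonneg ξ])]
    simp [neg_div, -neg_add_rev]
  · rw [abs_mul, Real.abs_exp, abs_mul, Real.abs_exp]
    refine mul_le_mul_of_nonneg_left ((mul_le_of_le_one_right (abs_nonneg _) ?_).trans (hC ξ))
      (Real.exp_pos _).le
    rw [Real.exp_le_one_iff]
    nlinarith [mul_nonneg (le_of_lt hy) (sq_nonneg ξ)]

lemma mul_integral_rpow (hp : GaussPos p) {α : ℝ} (hα : 0 < α) {R : ℝ} (hR : 0 ≤ R) :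
    GaussPos fun ξ => p ξ * ∫ t in Ioc 0 R, t ^ α * (t + ξ ^ 2)⁻¹ := by
  obtain ⟨C, hC⟩ := hp.bounded
  have hm := hp.measurable
  have hint : IntegrableOn (fun t : ℝ => t ^ (α - 1)) (Ioc 0 R) :=
    (intervalIntegrable_iff_integrableOn_Ioc_of_le hR).1
      (intervalIntegral.intervalIntegrable_rpow' (by linarith))
  have key := GaussPos.integral (ν := volume.restrict (Ioc 0 R))
    (k := fun t ξ => t ^ α * (p ξ * (t + ξ ^ 2)⁻¹))
    (g := fun t => t ^ (α - 1) * C) (by fun_prop) (hint.mul_const C)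
    ((ae_restrict_mem measurableSet_Ioc).mono fun t ht ξ => ?_)
    ((ae_restrict_mem measurableSet_Ioc).mono fun t ht =>
      (hp.mul_inv_add_sq ht.1).const_mul (Real.rpow_nonneg ht.1.le _))
  · convert key using 2 with ξ
    rw [← integral_const_mul]
    congr 1 with t
    ring
  · have h0 : 0 < t + ξ ^ 2 := add_pos_of_pos_of_nonneg ht.1 (sq_nonneg ξ)
    rw [abs_mul, abs_mul, abs_of_nonneg (Real.rpow_nonneg ht.1.le _),
      abs_of_pos (inv_pos.2 h0), Real.rpow_sub_one ht.1.ne', div_eq_mul_inv, mul_assoc]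
    refine mul_le_mul_of_nonneg_left ?_ (Real.rpow_nonneg ht.1.le _)
    rw [mul_comm]
    exact mul_le_mul (inv_anti₀ ht.1 (by nlinarith [sq_nonneg ξ])) (hC ξ) (abs_nonneg _)
      (inv_pos.2 ht.1).le

lemma exp_of_mul (hmul : ∀ p, GaussPos p → GaussPos fun ξ => p ξ * q ξ) :
    GaussPos fun ξ => Real.exp (q ξ) := by
  have hq := hmul _ one
  simp only [one_mul] at hq
  obtain ⟨C, hC⟩ := hq.bounded
  have hpow : ∀ k : ℕ, GaussPos fun ξ => q ξ ^ k := fun k => by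
    induction k with
    | zero => simpa using one
    | succ k ih => simpa only [pow_succ] using hmul _ ih
  have hsum : ∀ n : ℕ, GaussPos fun ξ => ∑ k ∈ Finset.range n, q ξ ^ k / (k.factorial : ℝ) :=
    fun n => by
    induction n with
    | zero => simpa using one.const_mul le_rfl
    | succ n ih =>
      simp only [Finset.sum_range_succ]
      refine ih.add ?_
      simp only [div_eq_inv_mul]
      exact (hpow n).const_mul (by positivity)
  refine of_tendsto (C := Real.exp C) hsum (fun n ξ => ?_) (fun ξ => ?_)
  · refine (Finset.abs_sum_le_sum_abs _ _).trans ?_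
    refine le_trans (Finset.sum_le_sum fun k _ => ?_)
      (Real.sum_le_exp_of_nonneg ((abs_nonneg _).trans (hC ξ)) n)
    rw [abs_div, abs_pow, Nat.abs_cast]
    gcongr
    exact hC ξ
  · rw [Real.exp_eq_exp_ℝ]
    exact (NormedSpace.expSeries_div_hasSum_exp (q ξ)).tendsto_sum_nat

lemma exp_neg_abs_rpow {α : ℝ} (h0 : 0 < α) (h1 : α < 1) :
    GaussPos fun ξ => Real.exp (-|ξ| ^ (2 * α)) := by
  set K : ℝ := ∫ t in Ioi 0, Real.rpowIntegrand₀₁ α t 1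
  have hK : 0 < K := Real.integral_rpowIntegrand₀₁_one_pos ⟨h0, h1⟩
  have hint : ∀ n : ℕ, IntegrableOn (fun t : ℝ => t ^ (α - 1)) (Ioc 0 n) := fun n =>
    (intervalIntegrable_iff_integrableOn_Ioc_of_le n.cast_nonneg).1
      (intervalIntegral.intervalIntegrable_rpow' (by linarith))
  have hinti : ∀ ξ : ℝ, IntegrableOn (fun t => Real.rpowIntegrand₀₁ α t (ξ ^ 2)) (Ioi 0) :=
    fun ξ => Real.integrableOn_rpowIntegrand₀₁_Ioi ⟨h0, h1⟩ (sq_nonneg ξ)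
  have hpos : ∀ n : ℕ, GaussPos fun ξ =>
      Real.exp (-(K⁻¹ * ∫ t in Ioc 0 (n : ℝ), Real.rpowIntegrand₀₁ α t (ξ ^ 2))) := fun n => by
    have hexp := exp_of_mul (q := fun ξ => K⁻¹ * ∫ t in Ioc 0 (n : ℝ), t ^ α * (t + ξ ^ 2)⁻¹)
      fun p hp => by
        convert (hp.mul_integral_rpow h0 n.cast_nonneg).const_mul (inv_pos.2 hK).le using 2
        ring
    convert hexp.const_mul (Real.exp_pos (-(K⁻¹ * ∫ t in Ioc 0 (n : ℝ), t ^ (α - 1)))).le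
      using 2 with ξ
    rw [← Real.exp_add]
    congr 1
    have hsub : ∫ t in Ioc 0 (n : ℝ), t ^ α * (t + ξ ^ 2)⁻¹ =
        ∫ t in Ioc 0 (n : ℝ), (t ^ (α - 1) - Real.rpowIntegrand₀₁ α t (ξ ^ 2)) :=
      setIntegral_congr_fun measurableSet_Ioc fun t ht => by
        simp only [Real.rpowIntegrand₀₁_eq_sub h1.ne ht.1]
        ring
    rw [hsub, integral_sub (hint n) ((hinti ξ).mono_set Ioc_subset_Ioi_self)]
    ring
  refine of_tendsto (C := 1) hpos (fun n ξ => ?_) (fun ξ => ?_)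
  · rw [Real.abs_exp, Real.exp_le_one_iff, neg_nonpos]
    exact mul_nonneg (inv_pos.2 hK).le (setIntegral_nonneg measurableSet_Ioc fun t ht =>
      Real.rpowIntegrand₀₁_nonneg h0 ht.1.le (sq_nonneg ξ))
  · have hlim := intervalIntegral_tendsto_integral_Ioi 0 (hinti ξ)
      (tendsto_natCast_atTop_atTop (R := ℝ))
    have hrep := Real.rpow_eq_const_mul_integral ⟨h0, h1⟩ (sq_nonneg ξ)
    rw [← sq_abs, ← Real.rpow_natCast, ← Real.rpow_mul (abs_nonneg ξ), Real.rpow_natCast,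
      sq_abs] at hrep
    simp only [Nat.cast_ofNat] at hrep
    rw [hrep]
    simp only [intervalIntegral.integral_of_le (Nat.cast_nonneg _)] at hlim
    exact (Real.continuous_exp.tendsto _).comp (hlim.const_mul K⁻¹).neg

end GaussPos

lemma integrable_exp_neg_abs_rpow {β : ℝ} (hβ : 0 < β) :
    Integrable fun ξ : ℝ => Real.exp (-|ξ| ^ β) := by
  by_contra h
  have h2 : ∫ ξ : ℝ, Real.exp (-|ξ| ^ β) = 0 := integral_undef h
  rw [integral_comp_abs (f := fun x => Real.exp (-x ^ β)), integral_exp_neg_rpow hβ] at h2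
  have := Real.Gamma_pos_of_pos (show 0 < 1 / β + 1 by positivity)
  linarith

lemma integrable_cos_mul {φ : ℝ → ℝ} (hφ : Integrable φ) (x : ℝ) :
    Integrable fun ξ => Real.cos (x * ξ) * φ ξ :=
  hφ.bdd_mul (c := 1) (by fun_prop) (.of_forall fun _ => Real.abs_cos_le_one _)

lemma continuous_integral_cos_mul {φ : ℝ → ℝ} (hφ : Integrable φ) :
    Continuous fun x => ∫ ξ, Real.cos (x * ξ) * φ ξ := by
  refine continuous_of_dominated (fun x => (integrable_cos_mul hφ x).aestronglyMeasurable)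
    (fun x => .of_forall fun ξ => ?_) hφ.norm (.of_forall fun ξ => by fun_prop)
  rw [norm_mul]
  exact mul_le_of_le_one_left (norm_nonneg _) (Real.abs_cos_le_one _)

/-- If the cosine transform of `φ : ℝ → [0, 1]` is nonnegative, then its integral, computed
through Gaussian regularisations, is at most `2π`. -/
lemma integrable_integral_cos_mul {φ : ℝ → ℝ} (hφ : Integrable φ) (h0 : ∀ ξ, 0 ≤ φ ξ)
    (h1 : ∀ ξ, φ ξ ≤ 1) (hF : ∀ x, 0 ≤ ∫ ξ, Real.cos (x * ξ) * φ ξ) :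
    Integrable (fun x => ∫ ξ, Real.cos (x * ξ) * φ ξ) ∧
      ∫ x, ∫ ξ, Real.cos (x * ξ) * φ ξ ≤ 2 * Real.pi := by
  set F : ℝ → ℝ := fun x => ∫ ξ, Real.cos (x * ξ) * φ ξ
  have hFc : Continuous F := continuous_integral_cos_mul hφ
  have hFb : ∀ x, ‖F x‖ ≤ ∫ ξ, φ ξ := fun x => norm_integral_le_of_norm_le hφ
    (.of_forall fun ξ => by
      rw [norm_mul, Real.norm_of_nonneg (h0 ξ)]
      exact mul_le_of_le_one_left (h0 ξ) (Real.abs_cos_le_one _))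
  have hgauss : ∀ ε > 0, ∫ x, F x * Real.exp (-ε * x ^ 2) ≤ 2 * Real.pi := fun ε hε => by
    have hswap : ∫ x, F x * Real.exp (-ε * x ^ 2) =
        ∫ ξ, φ ξ * (√(Real.pi / ε) * Real.exp (-ξ ^ 2 / (4 * ε))) := by
      simp only [F, ← integral_mul_const]
      rw [integral_integral_swap]
      · congr 1 with ξ
        rw [← integral_cos_mul_exp_neg_mul_sq hε, ← integral_const_mul]
        congr 1 with x
        rw [mul_comm ξ x]
        ring
      · refine ((integrable_exp_neg_mul_sq hε).mul_prod hφ).mono' ?_ (.of_forall fun z => ?_)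
        · simp only [Function.uncurry_def]
          have := hφ.aestronglyMeasurable.comp_snd (μ := (volume : Measure ℝ))
          exact ((by fun_prop : Continuous fun z : ℝ × ℝ => Real.cos (z.1 * z.2)
            ).aestronglyMeasurable.mul this).mul
            (by fun_prop : Continuous fun z : ℝ × ℝ => Real.exp (-ε * z.1 ^ 2)).aestronglyMeasurable
        · simp only [Function.uncurry_def, Real.norm_eq_abs, abs_mul, Real.abs_exp]
          rw [mul_comm, abs_of_nonneg (h0 z.2)]
          exact mul_le_mul_of_nonneg_left (mul_le_of_le_one_left (h0 _)
            (Real.abs_cos_le_one _)) (Real.exp_pos _).le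
    have hexp : ∀ ξ : ℝ, Real.exp (-ξ ^ 2 / (4 * ε)) = Real.exp (-(1 / (4 * ε)) * ξ ^ 2) :=
      fun ξ => by congr 1; ring
    have hi : Integrable fun ξ : ℝ => √(Real.pi / ε) * Real.exp (-ξ ^ 2 / (4 * ε)) := by
      simp only [hexp]
      exact (integrable_exp_neg_mul_sq (by positivity)).const_mul _
    rw [hswap]
    calc _ ≤ ∫ ξ : ℝ, √(Real.pi / ε) * Real.exp (-ξ ^ 2 / (4 * ε)) := by
          refine integral_mono_of_nonneg (.of_forall fun ξ => ?_) hi (.of_forall fun ξ => ?_)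
          · exact mul_nonneg (h0 ξ) (by positivity)
          · exact mul_le_of_le_one_left (by positivity) (h1 ξ)
      _ = 2 * Real.pi := by
          simp only [hexp]
          rw [integral_const_mul, integral_gaussian, ← Real.sqrt_mul (by positivity)]
          rw [show Real.pi / ε * (Real.pi / (1 / (4 * ε))) = (2 * Real.pi) ^ 2 by field_simp; ring]
          exact Real.sqrt_sq (by positivity)
  have hIcc : ∀ n : ℕ, ∫ x in Icc (-(n : ℝ)) n, F x ≤ 2 * Real.pi := fun n => by
    have hε : ∀ ε > 0, ∫ x in Icc (-(n : ℝ)) n, F x ≤ Real.exp (ε * n ^ 2) * (2 * Real.pi) :=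
      fun ε hε => by
      have hi : Integrable fun x => F x * Real.exp (-ε * x ^ 2) :=
        (integrable_exp_neg_mul_sq hε).bdd_mul hFc.aestronglyMeasurable (.of_forall hFb)
      calc _ ≤ ∫ x in Icc (-(n : ℝ)) n, Real.exp (ε * n ^ 2) * (F x * Real.exp (-ε * x ^ 2)) := by
            refine setIntegral_mono_on hFc.continuousOn.integrableOn_Icc
              (hi.integrableOn.const_mul _) measurableSet_Icc fun x hx => ?_
            rw [mul_left_comm, ← Real.exp_add]
            refine le_mul_of_one_le_right (hF x) (Real.one_le_exp ?_)
            have := mul_le_mul_of_nonneg_left (sq_le_sq' hx.1 hx.2) hε.le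
            linarith
        _ ≤ ∫ x, Real.exp (ε * n ^ 2) * (F x * Real.exp (-ε * x ^ 2)) :=
            setIntegral_le_integral (hi.const_mul _) (.of_forall fun x =>
              mul_nonneg (Real.exp_pos _).le (mul_nonneg (hF x) (Real.exp_pos _).le))
        _ ≤ _ := by
            rw [integral_const_mul]
            exact mul_le_mul_of_nonneg_left (hgauss ε hε) (Real.exp_pos _).le
    have hlim : Tendsto (fun ε : ℝ => Real.exp (ε * n ^ 2) * (2 * Real.pi)) (𝓝[>] 0)
        (𝓝 (Real.exp (0 * n ^ 2) * (2 * Real.pi))) :=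
      (by fun_prop : Continuous fun ε : ℝ => Real.exp (ε * n ^ 2) * (2 * Real.pi)).continuousAt
        |>.continuousWithinAt
    simp only [zero_mul, Real.exp_zero, one_mul] at hlim
    exact ge_of_tendsto hlim (eventually_mem_nhdsWithin.mono fun ε h => hε ε h)
  have hcover : AECover (volume : Measure ℝ) atTop fun n : ℕ => Icc (-(n : ℝ)) n :=
    aecover_Icc (tendsto_neg_atTop_atBot.comp tendsto_natCast_atTop_atTop)
      tendsto_natCast_atTop_atTop
  have hint : Integrable F := hcover.integrable_of_integral_bounded_of_nonneg_ae (2 * Real.pi)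
    (fun n => hFc.continuousOn.integrableOn_Icc) (.of_forall hF) (.of_forall hIcc)
  exact ⟨hint, le_of_tendsto' (hcover.integral_tendsto_of_countably_generated hint) hIcc⟩

lemma fracHeatKernel_eq {α : ℝ} (hα : 0 < α) (x : ℝ) :
    fracHeatKernel α x =
      1 / (2 * Real.pi) * ∫ ξ, Real.cos (x * ξ) * Real.exp (-|ξ| ^ (2 * α)) := by
  have h : ∀ s : ℝ, Complex.exp (((x * s : ℝ) : ℂ) * Complex.I - ((|s| ^ (2 * α) : ℝ) : ℂ)) =
      Complex.exp (((x * s : ℝ) : ℂ) * Complex.I) * (Real.exp (-|s| ^ (2 * α)) : ℂ) := fun s => by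
    rw [sub_eq_add_neg, Complex.exp_add, ← Complex.ofReal_neg, Complex.ofReal_exp]
  have hi : Integrable fun s : ℝ =>
      Complex.exp (((x * s : ℝ) : ℂ) * Complex.I) * (Real.exp (-|s| ^ (2 * α)) : ℂ) :=
    (integrable_exp_neg_abs_rpow (show 0 < 2 * α by linarith)).ofReal.bdd_mul (c := 1)
      (by fun_prop) (.of_forall fun s => (Complex.norm_exp_ofReal_mul_I _).le)
  have hre := integral_re hi
  simp only [RCLike.re_to_complex, Complex.re_mul_ofReal, Complex.exp_ofReal_mul_I_re] at hre
  simp only [fracHeatKernel, h]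
  rw [hre]

lemma integral_cos_mul_exp_neg_abs_rpow_nonneg {α : ℝ} (h0 : 0 < α) (h1 : α < 1) (x : ℝ) :
    0 ≤ ∫ ξ, Real.cos (x * ξ) * Real.exp (-|ξ| ^ (2 * α)) := by
  have hφ := integrable_exp_neg_abs_rpow (show 0 < 2 * α by linarith)
  have hpos := GaussPos.exp_neg_abs_rpow h0 h1
  have hlim : Tendsto (fun b : ℝ => ∫ ξ, Real.cos (x * ξ) * Real.exp (-|ξ| ^ (2 * α)) *
      Real.exp (-b * ξ ^ 2)) (𝓝[>] 0)
      (𝓝 (∫ ξ, Real.cos (x * ξ) * Real.exp (-|ξ| ^ (2 * α)))) := by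
    refine tendsto_integral_filter_of_dominated_convergence _
      (eventually_mem_nhdsWithin.mono fun b hb => (hpos.integrable hb x).aestronglyMeasurable)
      (eventually_mem_nhdsWithin.mono fun b hb => .of_forall fun ξ => ?_) hφ
      (.of_forall fun ξ => ?_)
    · rw [Real.norm_eq_abs, abs_mul, abs_mul, Real.abs_exp, Real.abs_exp]
      refine (mul_le_of_le_one_right (by positivity) ?_).trans
        (mul_le_of_le_one_left (Real.exp_pos _).le (Real.abs_cos_le_one _))
      rw [Real.exp_le_one_iff]
      nlinarith [mul_nonneg (le_of_lt hb) (sq_nonneg ξ)]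
    · have hc : Continuous fun b : ℝ => Real.cos (x * ξ) * Real.exp (-|ξ| ^ (2 * α)) *
          Real.exp (-b * ξ ^ 2) := by fun_prop
      simpa using (hc.tendsto 0).mono_left nhdsWithin_le_nhds
  exact ge_of_tendsto hlim (eventually_mem_nhdsWithin.mono fun b hb => hpos.nonneg b hb x)

lemma fracHeatKernel_nonneg {α : ℝ} (h0 : 0 < α) (h1 : α < 1) (x : ℝ) :
    0 ≤ fracHeatKernel α x := by
  rw [fracHeatKernel_eq h0]
  exact mul_nonneg (by positivity) (integral_cos_mul_exp_neg_abs_rpow_nonneg h0 h1 x)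

lemma integrable_fracHeatKernel {α : ℝ} (h0 : 0 < α) (h1 : α < 1) :
    Integrable (fracHeatKernel α) ∧ ∫ x, fracHeatKernel α x ≤ 1 := by
  have h := integrable_integral_cos_mul
    (integrable_exp_neg_abs_rpow (show 0 < 2 * α by linarith)) (fun ξ => (Real.exp_pos _).le)
    (fun ξ => by
      rw [Real.exp_le_one_iff, neg_nonpos]
      positivity) (integral_cos_mul_exp_neg_abs_rpow_nonneg h0 h1)
  rw [funext (fracHeatKernel_eq h0), integral_const_mul]
  refine ⟨h.1.const_mul _, ?_⟩
  rw [one_div, inv_mul_le_iff₀ (by positivity), mul_one]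
  exact h.2

lemma fracHeatKernelT_nonneg {α t : ℝ} (h0 : 0 < α) (h1 : α < 1) (ht : 0 < t) (x : ℝ) :
    0 ≤ fracHeatKernelT α t x :=
  mul_nonneg (Real.rpow_nonneg ht.le _) (fracHeatKernel_nonneg h0 h1 _)

lemma integrable_fracHeatKernelT {α t : ℝ} (h0 : 0 < α) (h1 : α < 1) (ht : 0 < t) :
    Integrable (fracHeatKernelT α t) ∧ ∫ x, fracHeatKernelT α t x ≤ 1 := by
  obtain ⟨hi, hle⟩ := integrable_fracHeatKernel h0 h1
  have hr : 0 < t ^ (-(1 / (2 * α))) := Real.rpow_pos_of_pos ht _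
  refine ⟨(hi.comp_mul_left' hr.ne').const_mul _, ?_⟩
  simp only [fracHeatKernelT]
  rw [integral_const_mul, Measure.integral_comp_mul_left, abs_of_pos (inv_pos.2 hr), smul_eq_mul,
    mul_inv_cancel_left₀ hr.ne']
  exact hle

/-- Convolution with a subprobability density does not increase `C^n` bounds. -/
lemma abs_iteratedDeriv_integral_mul_comp_sub_le {k f : ℝ → ℝ} {M : ℝ} {n : ℕ}
    (hk : Integrable k) (hk0 : ∀ y, 0 ≤ k y) (hk1 : ∫ y, k y ≤ 1) (hf : ContDiff ℝ n f)
    (hM : ∀ j ≤ n, ∀ x, |iteratedDeriv j f x| ≤ M) :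
    ∀ j ≤ n, ∀ x, |iteratedDeriv j (fun x' => ∫ y, k y * f (x' - y)) x| ≤ M := by
  have hc : ∀ j ≤ n, Continuous (iteratedDeriv j f) := fun j hj =>
    hf.continuous_iteratedDeriv j (by exact_mod_cast hj)
  have hb : ∀ j ≤ n, ∀ x y, ‖k y * iteratedDeriv j f (x - y)‖ ≤ k y * M := fun j hj x y => by
    rw [norm_mul, Real.norm_of_nonneg (hk0 y)]
    exact mul_le_mul_of_nonneg_left (hM j hj _) (hk0 y)
  have hm : ∀ j ≤ n, ∀ x, AEStronglyMeasurable fun y => k y * iteratedDeriv j f (x - y) :=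
    fun j hj x => hk.aestronglyMeasurable.mul
      ((hc j hj).comp (continuous_const.sub continuous_id)).aestronglyMeasurable
  have hderiv : ∀ j ≤ n, iteratedDeriv j (fun x => ∫ y, k y * f (x - y)) =
      fun x => ∫ y, k y * iteratedDeriv j f (x - y) := fun j => by
    induction j with
    | zero => simp
    | succ j ih =>
      intro hj
      rw [iteratedDeriv_succ, ih (by omega)]
      ext x
      refine (hasDerivAt_integral_of_dominated_loc_of_deriv_le (s := univ) univ_mem
        (.of_forall fun x => hm j (by omega) x)
        ((hk.mul_const M).mono' (hm j (by omega) x) (.of_forall (hb j (by omega) x)))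
        (hm (j + 1) hj x) (.of_forall fun y x _ => hb (j + 1) hj x y) (hk.mul_const M)
        (.of_forall fun y x _ => ?_)).2.deriv
      exact ((hasDerivAt_iteratedDeriv hf (by omega) (x - y)).comp_sub_const x y).const_mul (k y)
  intro j hj x
  have hM0 : 0 ≤ M := (abs_nonneg _).trans (hM j hj x)
  rw [hderiv j hj]
  refine (norm_integral_le_of_norm_le (hk.mul_const M) (.of_forall (hb j hj x))).trans ?_
  rw [integral_mul_const]
  exact mul_le_of_le_one_left hM0 hk1

/-- **Short-time `C³` control for the inviscid Burgers equation (Lemma localforh).**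
There is an absolute `c > 0` such that if `‖θ₀‖_{C³} ≤ N` and `w` is a classical `C³`-in-`x`
solution of `∂_t w = w ∂_x w` with `w(·,0) = θ₀` on `[0,h]` with `h ≤ c/N`, then
`‖w(·,t)‖_{C³} ≤ 2N` for `0 ≤ t ≤ h`; consequently the dissipative step
`v(·,t) = Φ_t ∗ w(·,h)` also satisfies `‖v(·,t)‖_{C³} ≤ 2N` for `0 < t ≤ h`. -/
theorem burgers_splitting_short_time_C3 :
    ∃ c > (0:ℝ), ∀ (N h per : ℝ) (θ₀ : ℝ → ℝ) (w : ℝ → ℝ → ℝ),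
      0 < N → 0 < per → ContDiff ℝ (⊤ : ℕ∞) θ₀ → Function.Periodic θ₀ per →
      (∀ j ≤ 3, ∀ x, |iteratedDeriv j θ₀ x| ≤ N) →
      0 < h → h ≤ c / N →
      (∀ t ∈ Icc (0:ℝ) h, ContDiff ℝ 3 (fun x => w x t)) →
      (∀ x, w x 0 = θ₀ x) →
      (∀ x, ∀ t ∈ Icc (0:ℝ) h,
        HasDerivWithinAt (fun s => w x s)
          (w x t * deriv (fun x' => w x' t) x) (Icc 0 h) t) →
      (∀ t ∈ Icc (0:ℝ) h, ∀ j ≤ 3, ∀ x, |iteratedDeriv j (fun x' => w x' t) x| ≤ 2 * N) ∧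
      (∀ α : ℝ, 0 < α → α < 1 → ∀ t ∈ Ioc (0:ℝ) h, ∀ j ≤ 3, ∀ x,
        |iteratedDeriv j
          (fun x' => ∫ y : ℝ, fracHeatKernelT α t y * w (x' - y) h) x| ≤ 2 * N) := by
  refine ⟨1 / 100, by norm_num, ?_⟩
  intro N h per θ₀ w hN _ hθ _ hb hh hhN hw h0 hderiv
  have hsol : IsBurgersSolution w (Icc 0 h) :=
    ⟨fun t ht => (hw t ht).of_le (by norm_num), hderiv⟩
  have hC3 : ∀ t ∈ Icc (0 : ℝ) h, ∀ j ≤ 3, ∀ x,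
      |iteratedDeriv j (fun x' => w x' t) x| ≤ 2 * N := fun t ht => by
    refine abs_iteratedDeriv_le_of_implicit hN ht.1 ?_ (hw t ht)
      (contDiff_infty.1 hθ 3) hb fun x => ?_
    · rw [le_div_iff₀ hN] at hhN
      exact (mul_le_mul_of_nonneg_right ht.2 hN.le).trans hhN
    · have hfoot := (hsol.mono (Icc_subset_Icc_right ht.2)).eq_initial ht.1 x
      rwa [sub_zero, h0] at hfoot
  refine ⟨hC3, fun α hα0 hα1 t ht => ?_⟩
  obtain ⟨hint, hle⟩ := integrable_fracHeatKernelT hα0 hα1 ht.1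
  have hmem : h ∈ Icc (0 : ℝ) h := ⟨hh.le, le_rfl⟩
  exact abs_iteratedDeriv_integral_mul_comp_sub_le hint (fracHeatKernelT_nonneg hα0 hα1 ht.1) hle
    (hw h hmem) (hC3 h hmem)

end
end

section
/- Steepening under the inviscid Burgers step (Lemma burstep): For κ, H, a, L > 0 with H/κ ≤ L/4 and a ≤ L/4, define φ(κ,H,a,·) : [0,L] → ℝ by φ(κ,H,a,x) = κx for 0 ≤ x ≤ δ := H/κ, φ(κ,H,a,x) = H for δ ≤ x ≤ L−a, and φ(κ,H,a,x) = (H/a)(L−x) for L−a ≤ x ≤ L. There exists an absolute constant c > 0 such that: if θ₀ : ℝ → ℝ is smooth, 2L-periodic, odd, with θ₀(L) = 0 and θ₀(x) ≥ φ(κ,H,a,x) for 0 ≤ x ≤ L, and if w : ℝ × [0,h] → ℝ is a classical C³ solution of ∂_t w = w ∂_x w with w(·,0) = θ₀, where h ≤ c/‖θ₀‖_{C³} (in particular κh < 1), then w(x,h) ≥ φ( κ/(1−κh), H, a + ‖θ₀‖_{L^∞} h, x ) for all 0 ≤ x ≤ L. -/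
open Set MeasureTheory Filter Topology

noncomputable section

/-- The piecewise linear front profile on `[0,L]`: slope `κ` up to height `H` (reached at
`δ = H/κ`), a plateau at height `H` up to `L−a`, and linear descent to `0` at `L`. -/
def frontProfile (κ H a L x : ℝ) : ℝ :=
  if x ≤ H / κ then κ * x else if x ≤ L - a then H else (H / a) * (L - x)

/-- On the interval `(x - r, x + r)`, the function `f`, its derivative, and the Lipschitz constant
of its derivative are bounded by `n`. -/
structure C11Bound (f : ℝ → ℝ) (x r n : ℝ) : Prop where
  val : ∀ y, |y - x| < r → |f y| ≤ n
  der : ∀ y, |y - x| < r → |deriv f y| ≤ n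
  lip : ∀ y z, |y - x| < r → |z - x| < r → |deriv f y - deriv f z| ≤ n * |y - z|

lemma C11Bound.mono {f : ℝ → ℝ} {x r n x' r' n' : ℝ} (hf : C11Bound f x r n)
    (hr : |x' - x| + r' ≤ r) (hn : n ≤ n') : C11Bound f x' r' n' := by
  have key : ∀ y, |y - x'| < r' → |y - x| < r := fun y hy => by
    have := abs_sub_le y x' x
    linarith
  refine ⟨fun y hy => (hf.val y (key y hy)).trans hn, fun y hy => (hf.der y (key y hy)).trans hn,
    fun y z hy hz => (hf.lip y z (key y hy) (key z hz)).trans ?_⟩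
  gcongr

/-- A `C¹` bound in terms of difference quotients. -/
lemma abs_sub_le_of_abs_deriv_le {f : ℝ → ℝ} {x r n : ℝ} (hf : Differentiable ℝ f)
    (hn : ∀ y, |y - x| < r → |deriv f y| ≤ n) {y z : ℝ} (hy : |y - x| < r) (hz : |z - x| < r) :
    |f y - f z| ≤ n * |y - z| := by
  have hconv : Convex ℝ (Metric.ball x r) := convex_ball x r
  refine hconv.norm_image_sub_le_of_norm_deriv_le (𝕜 := ℝ) (fun u _ => hf u) (fun u hu => ?_)
    (by simpa [Real.dist_eq] using hz) (by simpa [Real.dist_eq] using hy)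
  exact hn u (by simpa [Real.dist_eq] using hu)

lemma abs_deriv_le_of_abs_sub_le {f : ℝ → ℝ} {x r n : ℝ} (hf : Differentiable ℝ f)
    (hn : ∀ y z, |y - x| < r → |z - x| < r → |f y - f z| ≤ n * |y - z|) {y : ℝ}
    (hy : |y - x| < r) : |deriv f y| ≤ n := by
  have hev : ∀ᶠ z in 𝓝 y, |z - x| < r :=
    (isOpen_lt (by fun_prop) continuous_const).mem_nhds hy
  have hlim := (hasDerivAt_iff_tendsto_slope.1 (hf y).hasDerivAt).abs
  refine le_of_tendsto hlim ?_
  filter_upwards [hev.filter_mono nhdsWithin_le_nhds, self_mem_nhdsWithin] with z hz hne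
  have hpos : 0 < |z - y| := abs_pos.2 (sub_ne_zero.2 hne)
  rw [slope_def_field, abs_div, div_le_iff₀ hpos]
  exact hn z y hz hy

/-- `C11Bound` in terms of values of the function only; this form passes to pointwise limits. -/
lemma c11Bound_iff {f : ℝ → ℝ} {x r n : ℝ} (hf : Differentiable ℝ f) :
    C11Bound f x r n ↔ (∀ y, |y - x| < r → |f y| ≤ n) ∧
      (∀ y z, |y - x| < r → |z - x| < r → |f y - f z| ≤ n * |y - z|) ∧
      (∀ y z η, |y - x| < r → |z - x| < r → |y + η - x| < r → |z + η - x| < r →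
        |(f (y + η) - f y) - (f (z + η) - f z)| ≤ n * |y - z| * |η|) := by
  constructor
  · intro h
    refine ⟨h.val, fun y z hy hz => abs_sub_le_of_abs_deriv_le hf h.der hy hz,
      fun y z η hy hz hyη hzη => ?_⟩
    have hd : ∀ u, HasDerivAt (fun u => f (y + u) - f (z + u))
        (deriv f (y + u) - deriv f (z + u)) u := fun u =>
      ((hf (y + u)).hasDerivAt.comp_const_add y u).sub ((hf (z + u)).hasDerivAt.comp_const_add z u)
    have hseg : ∀ {p : ℝ}, |p - x| < r → |p + η - x| < r → ∀ u ∈ uIcc 0 η, |p + u - x| < r := by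
      intro p h1 h2 u hu
      rw [abs_lt] at h1 h2 ⊢
      rcases mem_uIcc.1 hu with hu | hu <;> constructor <;> linarith [hu.1, hu.2]
    have := (convex_uIcc (0 : ℝ) η).norm_image_sub_le_of_norm_hasDerivWithin_le
      (f := fun u => f (y + u) - f (z + u)) (C := n * |y - z|)
      (fun u _ => (hd u).hasDerivWithinAt)
      (fun u hu => by
        have := h.lip _ _ (hseg hy hyη u hu) (hseg hz hzη u hu)
        simpa [add_sub_add_right_eq_sub] using this)
      left_mem_uIcc right_mem_uIcc
    simp only [Real.norm_eq_abs, add_zero, sub_zero] at this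
    convert this using 2
    ring
  · rintro ⟨h0, h1, h2⟩
    refine ⟨h0, fun y hy => abs_deriv_le_of_abs_sub_le hf h1 hy, fun y z hy hz => ?_⟩
    have hd : HasDerivAt (fun u => f (y + u) - f (z + u)) (deriv f y - deriv f z) 0 := by
      have hy0 : HasDerivAt f (deriv f y) (y + 0) := by simpa using (hf y).hasDerivAt
      have hz0 : HasDerivAt f (deriv f z) (z + 0) := by simpa using (hf z).hasDerivAt
      exact (hy0.comp_const_add y 0).sub (hz0.comp_const_add z 0)
    have hnn : 0 ≤ n * |y - z| := (abs_nonneg _).trans (h1 y z hy hz)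
    refine hd.le_of_lip' hnn ?_
    have hev : ∀ p, |p - x| < r → ∀ᶠ u in 𝓝 (0 : ℝ), |p + u - x| < r := fun p hp =>
      (isOpen_lt (by fun_prop) continuous_const).mem_nhds (by simpa using hp)
    filter_upwards [hev y hy, hev z hz] with u hyu hzu
    have := h2 y z u hy hz hyu hzu
    simp only [Real.norm_eq_abs, add_zero, sub_zero]
    convert this using 2
    ring

lemma ContDiff.exists_c11Bound {f : ℝ → ℝ} (hf : ContDiff ℝ 2 f) (x r : ℝ) :
    ∃ n, C11Bound f x r n := by
  have hf' : ContDiff ℝ 1 (deriv f) := by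
    have : ContDiff ℝ (1 + 1) f := by norm_num; exact hf
    exact (contDiff_succ_iff_deriv.1 this).2.2
  have hcpt : IsCompact (Metric.closedBall x r) := isCompact_closedBall x r
  obtain ⟨n₀, h₀⟩ := hcpt.exists_bound_of_continuousOn hf.continuous.continuousOn
  obtain ⟨n₁, h₁⟩ := hcpt.exists_bound_of_continuousOn hf'.continuous.continuousOn
  obtain ⟨n₂, h₂⟩ := hcpt.exists_bound_of_continuousOn
    (hf'.continuous_deriv le_rfl).continuousOn
  have hmem : ∀ y, |y - x| < r → y ∈ Metric.closedBall x r := fun y hy => by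
    simpa [Real.dist_eq] using hy.le
  refine ⟨max n₀ (max n₁ n₂), fun y hy => (h₀ y (hmem y hy)).trans (by simp),
    fun y hy => (h₁ y (hmem y hy)).trans (by simp), fun y z hy hz => ?_⟩
  exact abs_sub_le_of_abs_deriv_le (hf'.differentiable one_ne_zero)
    (fun u hu => (h₂ u (hmem u hu)).trans (by simp)) hy hz

/-- First-order Taylor estimate. -/
lemma C11Bound.taylor {f : ℝ → ℝ} {x r n : ℝ} (h : C11Bound f x r n) (hf : Differentiable ℝ f)
    {y z : ℝ} (hy : |y - x| < r) (hz : |z - x| < r) :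
    |f y - f z - deriv f z * (y - z)| ≤ n * (y - z) ^ 2 := by
  have hn : 0 ≤ n := (abs_nonneg _).trans (h.val y hy)
  have hd : ∀ u, HasDerivAt (fun u => f u - deriv f z * u) (deriv f u - deriv f z) u := fun u => by
    have := (hf u).hasDerivAt.sub ((hasDerivAt_id u).const_mul (deriv f z))
    rw [mul_one] at this
    exact this
  have := (convex_uIcc z y).norm_image_sub_le_of_norm_hasDerivWithin_le
    (f := fun u => f u - deriv f z * u) (C := n * |y - z|)
    (fun u _ => (hd u).hasDerivWithinAt)
    (fun u hu => by
      have hux : |u - x| < r := by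
        rw [abs_lt] at hy hz ⊢
        rcases mem_uIcc.1 hu with hu | hu <;> constructor <;> linarith [hu.1, hu.2]
      exact (h.lip u z hux hz).trans
        (mul_le_mul_of_nonneg_left (abs_sub_left_of_mem_uIcc hu) hn))
    left_mem_uIcc right_mem_uIcc
  simp only [Real.norm_eq_abs] at this
  calc _ = |f y - deriv f z * y - (f z - deriv f z * z)| := by congr 1; ring
    _ ≤ _ := this
    _ = _ := by rw [mul_assoc, ← abs_mul, ← sq, abs_of_nonneg (sq_nonneg _)]

/-- If `f` is obtained from `W` by following characteristics for a short time `σ`, then a bound on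
`W` gives a bound on `f`. -/
lemma C11Bound.of_implicit {f W : ℝ → ℝ} {x r x' r' n σ : ℝ} (hW : C11Bound W x r n)
    (hWd : Differentiable ℝ W) (hfd : Differentiable ℝ f) (hσ : n * |σ| ≤ 1 / 2)
    (hmem : ∀ y, |y - x'| < r' → |y + σ * f y - x| < r)
    (heq : ∀ y, |y - x'| < r' → W (y + σ * f y) = f y) : C11Bound f x' r' (8 * n) := by
  by_cases hr' : 0 < r'
  swap
  · have : ∀ y, ¬ |y - x'| < r' := fun y hy => hr' ((abs_nonneg _).trans_lt hy)
    exact ⟨fun y hy => (this y hy).elim, fun y hy => (this y hy).elim,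
      fun y _ hy => (this y hy).elim⟩
  have hn : 0 ≤ n := (abs_nonneg _).trans (hW.val _ (hmem x' (by simpa using hr')))
  have hdiff : ∀ y z, |y + σ * f y - (z + σ * f z)| ≤ |y - z| + |σ| * |f y - f z| := by
    intro y z
    have : y + σ * f y - (z + σ * f z) = (y - z) + σ * (f y - f z) := by ring
    rw [← abs_mul, this]
    exact abs_add_le _ _
  have hlip : ∀ y z, |y - x'| < r' → |z - x'| < r' → |f y - f z| ≤ 2 * n * |y - z| := by
    intro y z hy hz
    have h1 := abs_sub_le_of_abs_deriv_le hWd hW.der (hmem y hy) (hmem z hz)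
    rw [heq y hy, heq z hz] at h1
    have h3 := mul_le_mul_of_nonneg_left (hdiff y z) hn
    have h4 := mul_le_mul_of_nonneg_right hσ (abs_nonneg (f y - f z))
    nlinarith
  have hder : ∀ y, |y - x'| < r' → |deriv f y| ≤ 2 * n := fun y hy =>
    abs_deriv_le_of_abs_sub_le hfd hlip hy
  have hform : ∀ y, |y - x'| < r' →
      deriv f y = deriv W (y + σ * f y) * (1 + σ * deriv f y) := by
    intro y hy
    have hc : HasDerivAt (fun u => W (u + σ * f u))
        (deriv W (y + σ * f y) * (1 + σ * deriv f y)) y :=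
      (hWd (y + σ * f y)).hasDerivAt.comp y
        ((hasDerivAt_id y).add ((hfd y).hasDerivAt.const_mul σ))
    have hev : ∀ᶠ z in 𝓝 y, |z - x'| < r' :=
      (isOpen_lt (by fun_prop) continuous_const).mem_nhds hy
    refine (hc.congr_of_eventuallyEq ?_).deriv
    filter_upwards [hev] with z hz using (heq z hz).symm
  refine ⟨fun y hy => ?_, fun y hy => (hder y hy).trans (by linarith), fun y z hy hz => ?_⟩
  · rw [← heq y hy]
    exact (hW.val _ (hmem y hy)).trans (by linarith)
  set Y := y + σ * f y
  set Z := z + σ * f z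
  have hYZ : |Y - Z| ≤ 2 * |y - z| := by
    have h2 : |Y - Z| ≤ |y - z| + |σ| * |f y - f z| := hdiff y z
    have h3 := mul_le_mul_of_nonneg_left (hlip y z hy hz) (abs_nonneg σ)
    have h4 := mul_le_mul_of_nonneg_right hσ (abs_nonneg (y - z))
    nlinarith
  have hfac : |1 + σ * deriv f y| ≤ 2 := by
    have h3 := mul_le_mul_of_nonneg_left (hder y hy) (abs_nonneg σ)
    have h4 := abs_add_le 1 (σ * deriv f y)
    rw [abs_one, abs_mul] at h4
    linarith
  have hsplit : deriv f y - deriv f z =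
      (deriv W Y - deriv W Z) * (1 + σ * deriv f y)
        + deriv W Z * σ * (deriv f y - deriv f z) := by
    have h1 := hform y hy
    have h2 := hform z hz
    linear_combination h1 - h2
  have h1 : |(deriv W Y - deriv W Z) * (1 + σ * deriv f y)| ≤ n * (2 * |y - z|) * 2 := by
    rw [abs_mul]
    refine mul_le_mul ?_ hfac (abs_nonneg _) (by positivity)
    exact (hW.lip _ _ (hmem y hy) (hmem z hz)).trans (mul_le_mul_of_nonneg_left hYZ hn)
  have h2 : |deriv W Z * σ * (deriv f y - deriv f z)| ≤ 1 / 2 * |deriv f y - deriv f z| := by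
    rw [abs_mul, abs_mul]
    refine mul_le_mul_of_nonneg_right ?_ (abs_nonneg _)
    exact (mul_le_mul_of_nonneg_right (hW.der _ (hmem z hz)) (abs_nonneg σ)).trans hσ
  have h3 := abs_add_le ((deriv W Y - deriv W Z) * (1 + σ * deriv f y))
    (deriv W Z * σ * (deriv f y - deriv f z))
  rw [← hsplit] at h3
  linarith

/-- Solutions of `∂ₜ w = w ∂ₓ w` on `ℝ × [0, h]` that are `C²` in `x` at each time and satisfy the
equation pointwise; no joint regularity is required. -/
structure IsBurgersSolution_s11 (w : ℝ → ℝ → ℝ) (h : ℝ) : Prop where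
  contDiff : ∀ t ∈ Icc (0 : ℝ) h, ContDiff ℝ 2 (fun x => w x t)
  hasDeriv : ∀ x, ∀ t ∈ Icc (0 : ℝ) h,
    HasDerivWithinAt (fun s => w x s) (w x t * deriv (fun x' => w x' t) x) (Icc 0 h) t

/-- The points near which `w` is bounded in `C^{1,1}`, uniformly in time. -/
def regularSet (w : ℝ → ℝ → ℝ) (h : ℝ) : Set (ℝ × ℝ) :=
  {p | ∃ r > 0, ∃ n, ∀ s ∈ Icc (0 : ℝ) h, |s - p.2| < r → C11Bound (fun y => w y s) p.1 r n}

lemma isOpen_regularSet (w : ℝ → ℝ → ℝ) (h : ℝ) : IsOpen (regularSet w h) := by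
  rw [Metric.isOpen_iff]
  rintro p ⟨r, hr, n, hn⟩
  refine ⟨r / 2, by positivity, fun q hq => ⟨r / 2, by positivity, n, fun s hs hsq => ?_⟩⟩
  rw [Metric.mem_ball, Prod.dist_eq, max_lt_iff, Real.dist_eq, Real.dist_eq] at hq
  have hsp : |s - p.2| < r := by
    have := abs_sub_le s q.2 p.2
    linarith [hq.2]
  exact (hn s hs hsp).mono (by linarith [hq.1]) le_rfl

namespace IsBurgersSolution_s11

variable {w : ℝ → ℝ → ℝ} {h : ℝ}

lemma continuousOn_s11 (hw : IsBurgersSolution_s11 w h) (x : ℝ) :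
    ContinuousOn (fun s => w x s) (Icc 0 h) := fun t ht =>
  (hw.hasDeriv x t ht).continuousWithinAt

lemma differentiable (hw : IsBurgersSolution_s11 w h) {t : ℝ} (ht : t ∈ Icc (0 : ℝ) h) :
    Differentiable ℝ (fun x => w x t) :=
  (hw.contDiff t ht).differentiable two_ne_zero

/-- At a regular point, the spatial derivative is continuous in time. -/
lemma tendsto_deriv (hw : IsBurgersSolution_s11 w h) {x t : ℝ} (ht : t ∈ Icc (0 : ℝ) h)
    (hreg : (x, t) ∈ regularSet w h) :
    Tendsto (fun s => deriv (fun y => w y s) x) (𝓝[Icc 0 h] t)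
      (𝓝 (deriv (fun y => w y t) x)) := by
  obtain ⟨r, hr, n, hn⟩ := hreg
  have hn0 : 0 ≤ n := (abs_nonneg _).trans
    ((hn t ht (by simpa using hr)).val x (by simpa using hr))
  have hquot : ∀ k, 0 < k → k < r → ∀ s ∈ Icc (0 : ℝ) h, |s - t| < r →
      |(w (x + k) s - w x s) / k - deriv (fun y => w y s) x| ≤ n * k := by
    intro k hk hkr s hs hst
    have := (hn s hs hst).taylor (hw.differentiable hs) (y := x + k) (z := x)
      (by simpa [abs_of_pos hk] using hkr) (by simpa using hr)
    simp only [add_sub_cancel_left] at this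
    have he : (w (x + k) s - w x s) / k - deriv (fun y => w y s) x =
        (w (x + k) s - w x s - deriv (fun y => w y s) x * k) / k := by
      field_simp
    rw [he, abs_div, abs_of_pos hk, div_le_iff₀ hk]
    linarith
  rw [Metric.tendsto_nhds]
  intro ε hε
  obtain ⟨k, hk, hkr, hkε⟩ : ∃ k > 0, k < r ∧ n * k < ε / 3 := by
    refine ⟨min (r / 2) (ε / (4 * (n + 1))), by positivity,
      (min_le_left _ _).trans_lt (by linarith), ?_⟩
    calc n * min (r / 2) (ε / (4 * (n + 1))) ≤ (n + 1) * (ε / (4 * (n + 1))) := by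
          gcongr
          · linarith
          · exact min_le_right _ _
      _ = ε / 4 := by field_simp
      _ < ε / 3 := by linarith
  have hcont : Tendsto (fun s => (w (x + k) s - w x s) / k) (𝓝[Icc 0 h] t)
      (𝓝 ((w (x + k) t - w x t) / k)) :=
    ((hw.continuousOn_s11 (x + k) t ht).sub (hw.continuousOn_s11 x t ht)).div_const k
  have hnear : ∀ᶠ s in 𝓝[Icc 0 h] t, |s - t| < r :=
    mem_nhdsWithin_of_mem_nhds
      ((isOpen_lt (by fun_prop) continuous_const).mem_nhds (by simpa using hr))
  filter_upwards [Metric.tendsto_nhds.1 hcont (ε / 3) (by positivity), hnear,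
    self_mem_nhdsWithin] with s h1 h2 hs
  have h3 := hquot k hk hkr s hs h2
  have h4 := hquot k hk hkr t ht (by simpa using hr)
  rw [Real.dist_eq] at h1 ⊢
  rw [abs_lt] at h1 ⊢
  rw [abs_le] at h3 h4
  constructor <;> linarith [h1.1, h1.2, h3.1, h3.2, h4.1, h4.2]

/-- The derivative of `w` along a straight line through a regular point. -/
lemma hasDerivWithinAt_line (hw : IsBurgersSolution_s11 w h) {b v t : ℝ} (ht : t ∈ Icc (0 : ℝ) h)
    (hreg : (b - v * t, t) ∈ regularSet w h) :
    HasDerivWithinAt (fun s => w (b - v * s) s)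
      ((w (b - v * t) t - v) * deriv (fun y => w y t) (b - v * t)) (Icc 0 h) t := by
  set x := b - v * t with hx
  have hD : HasDerivWithinAt (fun s => w (b - v * s) s - w x s)
      (-v * deriv (fun y => w y t) x) (Icc 0 h) t := by
    have hq := hw.tendsto_deriv ht hreg
    obtain ⟨r, hr, n, hn⟩ := hreg
    rw [hasDerivWithinAt_iff_tendsto_slope]
    have hq' : Tendsto (fun s => -v * deriv (fun y => w y s) x) (𝓝[Icc 0 h \ {t}] t)
        (𝓝 (-v * deriv (fun y => w y t) x)) :=
      (hq.mono_left (nhdsWithin_mono _ sdiff_subset)).const_mul (-v)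
    have hsmall : Tendsto (fun s => n * v ^ 2 * |s - t|) (𝓝[Icc 0 h \ {t}] t) (𝓝 0) := by
      have : Continuous fun s => n * v ^ 2 * |s - t| := by fun_prop
      simpa using (this.tendsto t).mono_left nhdsWithin_le_nhds
    have hdiff : Tendsto (fun s => slope (fun s => w (b - v * s) s - w x s) t s
        - -v * deriv (fun y => w y s) x) (𝓝[Icc 0 h \ {t}] t) (𝓝 0) := by
      refine squeeze_zero_norm' ?_ hsmall
      have hnear : ∀ᶠ s in 𝓝[Icc 0 h \ {t}] t, |s - t| < r :=
        mem_nhdsWithin_of_mem_nhds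
          ((isOpen_lt (by fun_prop) continuous_const).mem_nhds (by simpa using hr))
      have hnear' : ∀ᶠ s in 𝓝[Icc 0 h \ {t}] t, |b - v * s - x| < r :=
        mem_nhdsWithin_of_mem_nhds
          ((isOpen_lt (by fun_prop) continuous_const).mem_nhds (by simpa [hx] using hr))
      filter_upwards [hnear, hnear', self_mem_nhdsWithin] with s h1 h2 hs
      have hst : 0 < |s - t| := abs_pos.2 (sub_ne_zero.2 hs.2)
      have hne : s - t ≠ 0 := sub_ne_zero.2 hs.2
      have := (hn s hs.1 h1).taylor (hw.differentiable hs.1) h2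
        (z := x) (by simpa using hr)
      have he : slope (fun s => w (b - v * s) s - w x s) t s - -v * deriv (fun y => w y s) x =
          (w (b - v * s) s - w x s - deriv (fun y => w y s) x * (b - v * s - x)) / (s - t) := by
        rw [slope_def_field, hx]
        field_simp
        ring
      rw [he, norm_div, Real.norm_eq_abs, Real.norm_eq_abs, div_le_iff₀ hst]
      refine this.trans_eq ?_
      rw [mul_assoc, ← sq, sq_abs, hx]
      ring
    simpa using hdiff.add hq'
  have hsum := (hw.hasDeriv x t ht).add hD
  have hfun : (fun s => w (b - v * s) s) = (fun s => w x s) + fun s => w (b - v * s) s - w x s := by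
    ext s
    simp
  rw [hfun]
  exact hsum.congr_deriv (by ring)

/-- A solution is constant along a characteristic segment made of regular points. -/
lemma eq_along_characteristic (hw : IsBurgersSolution_s11 w h) {b v s₁ s₂ : ℝ}
    (hs₁ : 0 ≤ s₁) (hs₂ : s₂ ≤ h) (hreg : ∀ s ∈ Icc s₁ s₂, (b - v * s, s) ∈ regularSet w h)
    {t : ℝ} (ht : t ∈ Icc s₁ s₂) (hv : w (b - v * t) t = v) :
    ∀ s ∈ Icc s₁ s₂, w (b - v * s) s = v := by
  have hsub : Icc s₁ s₂ ⊆ Icc 0 h := Icc_subset_Icc hs₁ hs₂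
  obtain ⟨M, hM⟩ : ∃ M, ∀ s ∈ Icc s₁ s₂, |deriv (fun y => w y s) (b - v * s)| ≤ M := by
    refine isCompact_Icc.induction_on (p := fun S => ∃ M, ∀ s ∈ S,
      |deriv (fun y => w y s) (b - v * s)| ≤ M) ⟨0, by simp⟩
      (fun S T hST ⟨M, hM⟩ => ⟨M, fun s hs => hM s (hST hs)⟩)
      (fun S T ⟨M, hM⟩ ⟨M', hM'⟩ => ⟨max M M', fun s hs => hs.elim
        (fun hs => (hM s hs).trans (le_max_left _ _))
        (fun hs => (hM' s hs).trans (le_max_right _ _))⟩)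
      (fun s hs => ?_)
    obtain ⟨r, hr, n, hn⟩ := hreg s hs
    refine ⟨{u | u ∈ Icc s₁ s₂ ∧ |u - s| < r ∧ |b - v * u - (b - v * s)| < r}, ?_, n,
      fun u hu => (hn u (hsub hu.1) hu.2.1).der _ hu.2.2⟩
    have hnear : ∀ᶠ u in 𝓝 s, |u - s| < r :=
      (isOpen_lt (by fun_prop) continuous_const).mem_nhds (by simpa using hr)
    have hnear' : ∀ᶠ u in 𝓝 s, |b - v * u - (b - v * s)| < r :=
      (isOpen_lt (by fun_prop) continuous_const).mem_nhds (by simpa using hr)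
    exact inter_mem self_mem_nhdsWithin (mem_nhdsWithin_of_mem_nhds (inter_mem hnear hnear'))
  have hM0 : 0 ≤ M := (abs_nonneg _).trans (hM t ht)
  set F : ℝ → ℝ → ℝ := fun s u => (u - v) * deriv (fun y => w y s) (b - v * s) with hF
  have hLip : ∀ s ∈ Icc s₁ s₂, LipschitzOnWith M.toNNReal (F s) univ := by
    intro s hs
    refine LipschitzOnWith.of_dist_le_mul fun u _ u' _ => ?_
    rw [Real.coe_toNNReal _ hM0, Real.dist_eq, Real.dist_eq, hF]
    have : (u - v) * deriv (fun y => w y s) (b - v * s)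
        - (u' - v) * deriv (fun y => w y s) (b - v * s)
        = deriv (fun y => w y s) (b - v * s) * (u - u') := by ring
    simp only [this, abs_mul]
    exact mul_le_mul_of_nonneg_right (hM s hs) (abs_nonneg _)
  have hder : ∀ s ∈ Icc s₁ s₂, HasDerivWithinAt (fun s => w (b - v * s) s)
      (F s (w (b - v * s) s)) (Icc s₁ s₂) s := fun s hs =>
    (hw.hasDerivWithinAt_line (hsub hs) (hreg s hs)).mono hsub
  have hconst : ∀ s (S : Set ℝ), HasDerivWithinAt (fun _ : ℝ => v) (F s v) S s := fun s S => by
    simpa [hF] using hasDerivWithinAt_const s S v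
  intro s hs
  rcases le_total t s with hts | hts
  · have hsub' : Icc t s ⊆ Icc s₁ s₂ := Icc_subset_Icc ht.1 hs.2
    refine ODE_solution_unique_of_mem_Icc_right (v := F) (K := M.toNNReal) (s := fun _ => univ)
      (f := fun s => w (b - v * s) s) (g := fun _ => v) (a := t) (b := s)
      (fun u hu => hLip u (hsub' (Ico_subset_Icc_self hu)))
      (fun u hu => ((hder u (hsub' hu)).mono hsub').continuousWithinAt) (fun u hu => ?_)
      (fun _ _ => mem_univ _) continuousOn_const (fun u _ => hconst u _)
      (fun _ _ => mem_univ _) hv (right_mem_Icc.2 hts)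
    refine ((hder u (hsub' (Ico_subset_Icc_self hu))).mono hsub').mono_of_mem_nhdsWithin ?_
    exact Icc_mem_nhdsGE_of_mem hu
  · have hsub' : Icc s t ⊆ Icc s₁ s₂ := Icc_subset_Icc hs.1 ht.2
    refine ODE_solution_unique_of_mem_Icc_left (v := F) (K := M.toNNReal) (s := fun _ => univ)
      (f := fun s => w (b - v * s) s) (g := fun _ => v) (a := s) (b := t)
      (fun u hu => hLip u (hsub' (Ioc_subset_Icc_self hu)))
      (fun u hu => ((hder u (hsub' hu)).mono hsub').continuousWithinAt) (fun u hu => ?_)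
      (fun _ _ => mem_univ _) continuousOn_const (fun u _ => hconst u _)
      (fun _ _ => mem_univ _) hv (left_mem_Icc.2 hts)
    refine ((hder u (hsub' (Ioc_subset_Icc_self hu))).mono hsub').mono_of_mem_nhdsWithin ?_
    exact Icc_mem_nhdsLE_of_mem hu

end IsBurgersSolution_s11

/-- Two characteristics of different speeds cannot meet, so the value carried by a characteristic
back to time `e` is at most the limiting value there. -/
lemma le_of_characteristic {u : ℝ → ℝ → ℝ} {x₀ r e d : ℝ} (hed : e < d)
    (hchar : ∀ x t s, |x - x₀| < r → t ∈ Ioc e d → s ∈ Ioc e d →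
      |x + u x t * (t - s) - x₀| < r → u (x + u x t * (t - s)) s = u x t)
    (htime : ∀ x, ContinuousWithinAt (u x) (Ioi e) e) (hspace : Continuous fun x => u x e)
    {x : ℝ} (hx : |x - x₀| < r) (hy : |x + u x d * (d - e) - x₀| < r) :
    u x d ≤ u (x + u x d * (d - e)) e := by
  by_contra! hlt
  set v := u x d with hv
  set y := x + v * (d - e) with hydef
  obtain ⟨m, hm1, hm2⟩ := exists_between hlt
  have hde : 0 < d - e := sub_pos.2 hed
  have hvm : 0 < v - m := sub_pos.2 hm2
  obtain ⟨η, ⟨hη1, hη2, hη3⟩, hη0⟩ : ∃ η : ℝ, (|y - η - x₀| < r ∧ u (y - η) e < m ∧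
      η < (v - m) * (d - e) / 4) ∧ 0 < η := by
    have h1 : ∀ᶠ η in 𝓝 (0 : ℝ), |y - η - x₀| < r :=
      (isOpen_lt (by fun_prop) continuous_const).mem_nhds (by simpa using hy)
    have h2 : ∀ᶠ η in 𝓝 (0 : ℝ), u (y - η) e < m := by
      have hc : Continuous fun η : ℝ => u (y - η) e := hspace.comp (by fun_prop)
      exact (isOpen_lt hc continuous_const).mem_nhds (by simpa using hm1)
    have h3 : ∀ᶠ η in 𝓝 (0 : ℝ), η < (v - m) * (d - e) / 4 := Iio_mem_nhds (by positivity)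
    exact (((h1.and (h2.and h3)).filter_mono nhdsWithin_le_nhds).and
      (self_mem_nhdsWithin : Ioi (0 : ℝ) ∈ 𝓝[>] 0)).exists
  obtain ⟨t, ⟨ht1, ht2, ht3⟩, ht0⟩ : ∃ t, (u (y - η) t < m ∧ |v * (t - e)| < η ∧
      t < e + (d - e) / 4) ∧ e < t := by
    have h1 : ∀ᶠ t in 𝓝[>] e, u (y - η) t < m := (htime (y - η)).eventually (Iio_mem_nhds hη2)
    have h2 : ∀ᶠ t in 𝓝[>] e, |v * (t - e)| < η :=
      mem_nhdsWithin_of_mem_nhds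
        ((isOpen_lt (by fun_prop) continuous_const).mem_nhds (by simpa using hη0))
    have h3 : ∀ᶠ t in 𝓝[>] e, t < e + (d - e) / 4 :=
      mem_nhdsWithin_of_mem_nhds (Iio_mem_nhds (by linarith))
    exact ((h1.and (h2.and h3)).and (self_mem_nhdsWithin : Ioi e ∈ 𝓝[>] e)).exists
  set p := u (y - η) t with hp
  rw [abs_lt] at ht2
  have hvp : 0 < v - p := by linarith
  set τ := (η - v * (t - e)) / (v - p) with hτ
  have hτ0 : 0 ≤ τ := div_nonneg (by linarith) hvp.le
  have hτmul : τ * (v - p) = η - v * (t - e) := by rw [hτ]; field_simp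
  have hτ1 : τ ≤ (d - e) / 2 := by
    rw [hτ, div_le_iff₀ hvp]
    nlinarith
  have hmeet : x + v * (d - (t + τ)) = y - η + p * (t - (t + τ)) := by
    rw [hydef]
    linear_combination -hτmul
  have hin : |x + v * (d - (t + τ)) - x₀| < r := by
    have hmem : x + v * (d - (t + τ)) ∈ uIcc x y := by
      rw [hydef, mem_uIcc]
      rcases le_total 0 v with h0 | h0
      · left
        constructor <;> nlinarith
      · right
        constructor <;> nlinarith
    rw [abs_lt] at hx hy ⊢
    rcases mem_uIcc.1 hmem with hu | hu <;> constructor <;> linarith [hu.1, hu.2]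
  have hT : t + τ ∈ Ioc e d := ⟨by linarith, by linarith⟩
  have e1 := hchar x d (t + τ) hx ⟨hed, le_rfl⟩ hT hin
  have e2 := hchar (y - η) t (t + τ) hη1 ⟨ht0, by linarith⟩ hT (by rw [← hp, ← hmeet]; exact hin)
  rw [← hp, ← hmeet] at e2
  rw [← hv, e2] at e1
  linarith

/-- The value carried by a characteristic back to time `e` is the limiting value there. -/
lemma eq_of_characteristic {u : ℝ → ℝ → ℝ} {x₀ r e d : ℝ} (hed : e < d)
    (hchar : ∀ x t s, |x - x₀| < r → t ∈ Ioc e d → s ∈ Ioc e d →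
      |x + u x t * (t - s) - x₀| < r → u (x + u x t * (t - s)) s = u x t)
    (htime : ∀ x, ContinuousWithinAt (u x) (Ioi e) e) (hspace : Continuous fun x => u x e)
    {x : ℝ} (hx : |x - x₀| < r) (hy : |x + u x d * (d - e) - x₀| < r) :
    u (x + u x d * (d - e)) e = u x d := by
  refine le_antisymm ?_ (le_of_characteristic hed hchar htime hspace hx hy)
  have habs : ∀ p q : ℝ, p = -q → |p| = |q| := fun p q hpq => by rw [hpq, abs_neg]
  have := le_of_characteristic (u := fun x t => -u (-x) t) (x₀ := -x₀) (r := r) (x := -x) hed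
    (fun z t s hz ht hs hzs => by
      have h1 : |-z - x₀| < r := by rwa [habs (-z - x₀) (z - -x₀) (by ring)]
      have h2 : -z + u (-z) t * (t - s) = -(z + -u (-z) t * (t - s)) := by ring
      have h3 : |-z + u (-z) t * (t - s) - x₀| < r := by
        rwa [habs _ (z + -u (-z) t * (t - s) - -x₀) (by ring)]
      have := hchar (-z) t s h1 ht hs h3
      rw [h2] at this
      rw [this])
    (fun z => (htime (-z)).neg) (hspace.comp continuous_neg).neg
    (by rwa [habs _ (x - x₀) (by ring)])
    (by rw [neg_neg]; rwa [habs _ (x + u x d * (d - e) - x₀) (by ring)])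
  have h4 : -(-x + -u x d * (d - e)) = x + u x d * (d - e) := by ring
  simp only [neg_neg, h4] at this
  linarith

/-- The value carried by a characteristic forward to time `e` is the limiting value there. -/
lemma eq_of_characteristic_forward {u : ℝ → ℝ → ℝ} {x₀ r e d : ℝ} (hde : d < e)
    (hchar : ∀ x t s, |x - x₀| < r → t ∈ Ico d e → s ∈ Ico d e →
      |x + u x t * (t - s) - x₀| < r → u (x + u x t * (t - s)) s = u x t)
    (htime : ∀ x, ContinuousWithinAt (u x) (Iio e) e) (hspace : Continuous fun x => u x e)
    {x : ℝ} (hx : |x - x₀| < r) (hy : |x + u x d * (d - e) - x₀| < r) :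
    u (x + u x d * (d - e)) e = u x d := by
  have hrev : ∀ v t s : ℝ, -v * (t - s) = v * (-t - -s) := fun v t s => by ring
  have := eq_of_characteristic (u := fun x t => -u x (-t)) (x₀ := x₀) (r := r) (x := x)
    (neg_lt_neg hde)
    (fun z t s hz ht hs hzs => by
      rw [hrev] at hzs ⊢
      rw [hchar z (-t) (-s) hz ⟨by linarith [ht.2], by linarith [ht.1]⟩
        ⟨by linarith [hs.2], by linarith [hs.1]⟩ hzs])
    (fun z => by
      have h1 : ContinuousWithinAt (u z) (Iio e) (- -e) := by simpa using htime z
      exact (h1.comp continuous_neg.continuousWithinAt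
        (fun t (ht : -e < t) => show -t < e by linarith)).neg)
    (by simp only [neg_neg]; exact hspace.neg) hx
    (by rw [hrev]; simpa using hy)
  rw [hrev] at this
  simpa using this

namespace IsBurgersSolution_s11

variable {w : ℝ → ℝ → ℝ} {h : ℝ}

lemma isClosed_setOf_c11Bound (hw : IsBurgersSolution_s11 w h) (r n : ℝ) :
    IsClosed {p : ℝ × ℝ | p.2 ∈ Icc (0 : ℝ) h ∧ C11Bound (fun y => w y p.2) p.1 r n} := by
  refine IsSeqClosed.isClosed fun p q hp hpq => ?_
  have hp2 : Tendsto (fun k => (p k).2) atTop (𝓝 q.2) := (continuous_snd.tendsto q).comp hpq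
  have hp1 : Tendsto (fun k => (p k).1) atTop (𝓝 q.1) := (continuous_fst.tendsto q).comp hpq
  have hq : q.2 ∈ Icc (0 : ℝ) h :=
    isClosed_Icc.mem_of_tendsto hp2 (Eventually.of_forall fun k => (hp k).1)
  have hlim : ∀ x, Tendsto (fun k => w x (p k).2) atTop (𝓝 (w x q.2)) := fun x =>
    (hw.continuousOn_s11 x q.2 hq).tendsto.comp
      (tendsto_nhdsWithin_iff.2 ⟨hp2, Eventually.of_forall fun k => (hp k).1⟩)
  have hball : ∀ x, |x - q.1| < r → ∀ᶠ k in atTop, |x - (p k).1| < r := fun x hx =>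
    (hp1.const_sub x).abs.eventually (Iio_mem_nhds hx)
  have hdiff := fun k => (c11Bound_iff (hw.differentiable (hp k).1)).1 (hp k).2
  refine ⟨hq, (c11Bound_iff (hw.differentiable hq)).2 ⟨fun y hy => ?_, fun y z hy hz => ?_,
    fun y z η hy hz hyη hzη => ?_⟩⟩
  · refine le_of_tendsto (hlim y).abs ?_
    filter_upwards [hball y hy] with k hk using (hdiff k).1 y hk
  · refine le_of_tendsto ((hlim y).sub (hlim z)).abs ?_
    filter_upwards [hball y hy, hball z hz] with k h1 h2 using (hdiff k).2.1 y z h1 h2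
  · refine le_of_tendsto
      (((hlim (y + η)).sub (hlim y)).sub ((hlim (z + η)).sub (hlim z))).abs ?_
    filter_upwards [hball y hy, hball z hz, hball _ hyη, hball _ hzη] with k h1 h2 h3 h4
      using (hdiff k).2.2 y z η h1 h2 h3 h4

/-- Characteristics inside a box of regular points. -/
lemma eq_of_regular_box (hw : IsBurgersSolution_s11 w h) {x₀ r : ℝ} {S : Set ℝ} (hS : S.OrdConnected)
    (hSh : S ⊆ Icc 0 h) (hreg : ∀ s ∈ S, ∀ x, |x - x₀| < r → (x, s) ∈ regularSet w h)
    (x t s : ℝ) (hx : |x - x₀| < r) (ht : t ∈ S) (hs : s ∈ S)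
    (hxs : |x + w x t * (t - s) - x₀| < r) : w (x + w x t * (t - s)) s = w x t := by
  set v := w x t with hv
  have hpos : ∀ q, x + v * t - v * q = x + v * (t - q) := fun q => by ring
  have hsub : Icc (min t s) (max t s) ⊆ S := hS.uIcc_subset ht hs
  have hts : t ∈ Icc (min t s) (max t s) := ⟨min_le_left _ _, le_max_left _ _⟩
  have hss : s ∈ Icc (min t s) (max t s) := ⟨min_le_right _ _, le_max_right _ _⟩
  have := hw.eq_along_characteristic (b := x + v * t) (v := v) (s₁ := min t s) (s₂ := max t s)
    (hSh (hsub ⟨le_rfl, min_le_max⟩)).1 (hSh (hsub ⟨min_le_max, le_rfl⟩)).2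
    (fun q hq => hreg q (hsub hq) _ ?_) hts (by simp [hv]) s hss
  · rwa [hpos] at this
  · rw [hpos]
    have hmem : x + v * (t - q) ∈ uIcc x (x + v * (t - s)) := by
      have h1 : v * (t - q) ∈ uIcc (v * (t - t)) (v * (t - s)) := by
        have : t - q ∈ uIcc (t - t) (t - s) := by
          rw [mem_uIcc]
          rcases le_total t s with hle | hle
          · rw [min_eq_left hle, max_eq_right hle] at hq
            right
            constructor <;> linarith [hq.1, hq.2]
          · rw [min_eq_right hle, max_eq_left hle] at hq
            left
            constructor <;> linarith [hq.1, hq.2]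
        rw [mem_uIcc] at this ⊢
        rcases le_total 0 v with h0 | h0 <;> rcases this with hc | hc
        · left
          exact ⟨mul_le_mul_of_nonneg_left hc.1 h0, mul_le_mul_of_nonneg_left hc.2 h0⟩
        · right
          exact ⟨mul_le_mul_of_nonneg_left hc.1 h0, mul_le_mul_of_nonneg_left hc.2 h0⟩
        · right
          exact ⟨mul_le_mul_of_nonpos_left hc.2 h0, mul_le_mul_of_nonpos_left hc.1 h0⟩
        · left
          exact ⟨mul_le_mul_of_nonpos_left hc.2 h0, mul_le_mul_of_nonpos_left hc.1 h0⟩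
      rw [mem_uIcc] at h1 ⊢
      rcases h1 with h1 | h1
      · left
        constructor <;> linarith [h1.1, h1.2]
      · right
        constructor <;> linarith [h1.1, h1.2]
    rw [abs_lt] at hx hxs ⊢
    rcases mem_uIcc.1 hmem with hu | hu <;> constructor <;> linarith [hu.1, hu.2]

/-- If the points of a box at times outside a closed set `T` are regular, then every time `t` is
joined by characteristics to a time in `T`, on the way towards a given time `t₀ ∈ T`. -/
lemma exists_anchor_time (hw : IsBurgersSolution_s11 w h) {x₀ r t₀ : ℝ} {T : Set ℝ} (hT : IsClosed T)
    (hTh : T ⊆ Icc 0 h) (ht₀ : t₀ ∈ T)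
    (hreg : ∀ s ∈ Icc (0 : ℝ) h, |s - t₀| < r → s ∉ T →
      ∀ x, |x - x₀| < r → (x, s) ∈ regularSet w h)
    {t : ℝ} (ht : t ∈ Icc (0 : ℝ) h) (htr : |t - t₀| < r) :
    ∃ e ∈ T, |t - e| ≤ |t - t₀| ∧ ∀ x, |x - x₀| < r → ∀ s ∈ uIcc t e,
      |x + w x t * (t - s) - x₀| < r → w (x + w x t * (t - s)) s = w x t := by
  by_cases htT : t ∈ T
  · refine ⟨t, htT, by simp, fun x _ s hs _ => ?_⟩
    obtain rfl : s = t := by simpa using hs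
    simp
  have htime : ∀ {e}, e ∈ T → ∀ (S : Set ℝ), Icc 0 h ∈ 𝓝[S] e → ∀ x,
      ContinuousWithinAt (w x) S e := fun he S hS x =>
    (hw.continuousOn_s11 x _ (hTh he)).mono_of_mem_nhdsWithin hS
  rcases le_total t t₀ with hle | hle
  · obtain ⟨e, ⟨heT, he⟩, hmin⟩ := (isCompact_Icc.inter_left hT).exists_isLeast
      (⟨t₀, ht₀, hle, le_rfl⟩ : (T ∩ Icc t t₀).Nonempty)
    have hte : t < e := lt_of_le_of_ne he.1 (fun h => htT (h ▸ heT))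
    have hIco : ∀ s ∈ Ico t e, s ∈ Icc (0 : ℝ) h := fun s hs =>
      ⟨ht.1.trans hs.1, hs.2.le.trans (hTh heT).2⟩
    have hbox := hw.eq_of_regular_box (x₀ := x₀) (r := r) (S := Ico t e) ordConnected_Ico hIco
      (fun s hs => hreg s (hIco s hs)
        (by rw [abs_lt] at htr ⊢; constructor <;> linarith [hs.1, hs.2, he.2])
        (fun hsT => (hmin ⟨hsT, hs.1, hs.2.le.trans he.2⟩).not_gt hs.2))
    refine ⟨e, heT, ?_, fun x hx s hs hxs => ?_⟩
    · rw [abs_of_nonpos (by linarith), abs_of_nonpos (by linarith)]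
      linarith [he.2]
    rw [uIcc_of_le hte.le] at hs
    rcases hs.2.lt_or_eq with hse | rfl
    · exact hbox x t s hx ⟨le_rfl, hte⟩ ⟨hs.1, hse⟩ hxs
    · exact eq_of_characteristic_forward hte hbox
        (htime heT _ (mem_of_superset (Ioo_mem_nhdsLT hte)
          fun q hq => hIco q ⟨hq.1.le, hq.2⟩))
        (hw.contDiff _ (hTh heT)).continuous hx hxs
  · obtain ⟨e, ⟨heT, he⟩, hmax⟩ := (isCompact_Icc.inter_left hT).exists_isGreatest
      (⟨t₀, ht₀, le_rfl, hle⟩ : (T ∩ Icc t₀ t).Nonempty)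
    have hte : e < t := lt_of_le_of_ne he.2 (fun h => htT (h ▸ heT))
    have hIoc : ∀ s ∈ Ioc e t, s ∈ Icc (0 : ℝ) h := fun s hs =>
      ⟨(hTh heT).1.trans hs.1.le, hs.2.trans ht.2⟩
    have hbox := hw.eq_of_regular_box (x₀ := x₀) (r := r) (S := Ioc e t) ordConnected_Ioc hIoc
      (fun s hs => hreg s (hIoc s hs)
        (by rw [abs_lt] at htr ⊢; constructor <;> linarith [hs.1, hs.2, he.1])
        (fun hsT => (hmax ⟨hsT, he.1.trans hs.1.le, hs.2⟩).not_gt hs.1))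
    refine ⟨e, heT, ?_, fun x hx s hs hxs => ?_⟩
    · rw [abs_of_nonneg (by linarith), abs_of_nonneg (by linarith)]
      linarith [he.1]
    rw [uIcc_of_ge hte.le] at hs
    rcases hs.1.lt_or_eq with hse | rfl
    · exact hbox x t s hx ⟨hte, le_rfl⟩ ⟨hse, hs.2⟩ hxs
    · exact eq_of_characteristic hte hbox
        (htime heT _ (mem_of_superset (Ioo_mem_nhdsGT hte)
          fun q hq => hIoc q ⟨hq.1, hq.2.le⟩))
        (hw.contDiff _ (hTh heT)).continuous hx hxs

end IsBurgersSolution_s11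

namespace IsBurgersSolution_s11

variable {w : ℝ → ℝ → ℝ} {h : ℝ}

/-- If the points of a box at times without a `C^{1,1}` bound are regular, then the centre of the
box is regular as well. -/
lemma mem_regularSet_of_box (hw : IsBurgersSolution_s11 w h) {x₀ t₀ r n : ℝ} (hr : 0 < r)
    (ht₀ : t₀ ∈ Icc (0 : ℝ) h) (hb : C11Bound (fun y => w y t₀) x₀ r n)
    (hreg : ∀ s ∈ Icc (0 : ℝ) h, |s - t₀| < r → ¬ C11Bound (fun y => w y s) x₀ r n →
      ∀ x, |x - x₀| < r → (x, s) ∈ regularSet w h) : (x₀, t₀) ∈ regularSet w h := by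
  set T : Set ℝ := {s | s ∈ Icc (0 : ℝ) h ∧ C11Bound (fun y => w y s) x₀ r n}
  have hT : IsClosed T := (hw.isClosed_setOf_c11Bound r n).preimage (Continuous.prodMk_right x₀)
  have hn : 0 ≤ n := (abs_nonneg _).trans (hb.val x₀ (by simpa using hr))
  have hanchor := fun {t : ℝ} => hw.exists_anchor_time (x₀ := x₀) (r := r) (t := t) hT
    (fun s hs => hs.1) ⟨ht₀, hb⟩
    (fun s hs hsr hsT => hreg s hs hsr fun hc => hsT ⟨hs, hc⟩)
  obtain ⟨M₁, hM₁⟩ := isCompact_Icc.exists_bound_of_continuousOn (hw.continuousOn_s11 (x₀ + r / 2))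
  obtain ⟨M₂, hM₂⟩ := isCompact_Icc.exists_bound_of_continuousOn (hw.continuousOn_s11 (x₀ - r / 2))
  set M := max n (max M₁ M₂)
  have hM0 : 0 ≤ M := hn.trans (le_max_left _ _)
  have hbound : ∀ t ∈ Icc (0 : ℝ) h, |t - t₀| < r → ∀ x, |x - x₀| ≤ r / 2 → |w x t| ≤ M := by
    intro t ht htr x hx
    obtain ⟨e, ⟨heh, heb⟩, -, he⟩ := hanchor ht htr
    have hx' : |x - x₀| < r := hx.trans_lt (by linarith)
    rcases le_or_gt |x + w x t * (t - e) - x₀| (r / 2) with hc | hc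
    · have hc' : |x + w x t * (t - e) - x₀| < r := hc.trans_lt (by linarith)
      rw [← he x hx' e right_mem_uIcc hc']
      exact (heb.val _ hc').trans (le_max_left _ _)
    · have hcont : ContinuousOn (fun s => |x + w x t * (t - s) - x₀|) (uIcc t e) := by fun_prop
      obtain ⟨s, hs, hsr⟩ := intermediate_value_uIcc hcont
        (mem_uIcc.2 (Or.inl ⟨by simpa using hx, hc.le⟩) : r / 2 ∈ _)
      have hsr' : |x + w x t * (t - s) - x₀| = r / 2 := hsr
      have hsh : s ∈ Icc (0 : ℝ) h := ordConnected_Icc.uIcc_subset ht heh hs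
      rw [← he x hx' s hs (by rw [hsr']; linarith)]
      rcases (abs_eq (by positivity)).1 hsr' with h1 | h1
      · rw [show x + w x t * (t - s) = x₀ + r / 2 by linarith]
        exact (hM₁ s hsh).trans ((le_max_left _ _).trans (le_max_right _ _))
      · rw [show x + w x t * (t - s) = x₀ - r / 2 by linarith]
        exact (hM₂ s hsh).trans ((le_max_right _ _).trans (le_max_right _ _))
  set τ := min (r / 4) (min (r / (4 * (M + 1))) (1 / (2 * (n + 1))))
  have hτ0 : 0 < τ := by positivity
  have hτr : τ ≤ r / 4 := min_le_left _ _
  have hτM : M * τ ≤ r / 4 := by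
    calc M * τ ≤ (M + 1) * (r / (4 * (M + 1))) := by
          gcongr
          · linarith
          · exact (min_le_right _ _).trans (min_le_left _ _)
      _ = r / 4 := by field_simp
  have hτn : n * τ ≤ 1 / 2 := by
    calc n * τ ≤ (n + 1) * (1 / (2 * (n + 1))) := by
          gcongr
          · linarith
          · exact (min_le_right _ _).trans (min_le_right _ _)
      _ = 1 / 2 := by field_simp
  refine ⟨τ, hτ0, 8 * n, fun t ht htτ => ?_⟩
  obtain ⟨e, ⟨heh, heb⟩, hte, he⟩ := hanchor ht (htτ.trans_le (by linarith))
  have hteτ : |t - e| ≤ τ := hte.trans htτ.le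
  have hmem : ∀ y, |y - x₀| < τ → |y + (t - e) * w y t - x₀| < r := by
    intro y hy
    have h1 := hbound t ht (htτ.trans_le (by linarith)) y (by linarith)
    have h2 : |(t - e) * w y t| ≤ M * τ := by
      rw [abs_mul, mul_comm]
      exact mul_le_mul h1 hteτ (abs_nonneg _) hM0
    have h3 := abs_add_le (y - x₀) ((t - e) * w y t)
    rw [show y + (t - e) * w y t - x₀ = y - x₀ + (t - e) * w y t by ring]
    linarith
  refine heb.of_implicit (σ := t - e) (hw.differentiable heh) (hw.differentiable ht)
    ((mul_le_mul_of_nonneg_left hteτ hn).trans hτn) hmem (fun y hy => ?_)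
  have := he y (by linarith) e right_mem_uIcc (by rw [mul_comm]; exact hmem y hy)
  rwa [mul_comm] at this

/-- Every point is regular, by a Baire category argument on the set of irregular points. -/
theorem regularSet_eq_univ (hw : IsBurgersSolution_s11 w h) : regularSet w h = univ := by
  by_contra hne
  have hB : IsClosed (regularSet w h)ᶜ := (isOpen_regularSet w h).isClosed_compl
  have : CompleteSpace ↥(regularSet w h)ᶜ := hB.completeSpace_coe
  have : Nonempty ↥(regularSet w h)ᶜ := (nonempty_compl.2 hne).to_subtype
  have htime : ∀ p ∈ (regularSet w h)ᶜ, p.2 ∈ Icc (0 : ℝ) h := by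
    intro p hp
    by_contra hp2
    obtain ⟨ε, hε, hball⟩ := Metric.isOpen_iff.1 isClosed_Icc.isOpen_compl p.2 hp2
    exact hp ⟨ε, hε, 0, fun s hs hsp => (hball (by simpa [Real.dist_eq] using hsp) hs).elim⟩
  obtain ⟨k, p, hp⟩ := nonempty_interior_of_iUnion_of_closed
    (f := fun k : ℕ => {p : ↥(regularSet w h)ᶜ | p.1.2 ∈ Icc (0 : ℝ) h ∧
      C11Bound (fun y => w y p.1.2) p.1.1 1 k})
    (fun k => (hw.isClosed_setOf_c11Bound 1 k).preimage continuous_subtype_val)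
    (eq_univ_of_forall fun p => mem_iUnion.2 <| by
      obtain ⟨n, hn⟩ := (hw.contDiff _ (htime _ p.2)).exists_c11Bound p.1.1 1
      obtain ⟨k, hk⟩ := exists_nat_ge n
      exact ⟨k, htime _ p.2, hn.mono (by simp) hk⟩)
  obtain ⟨ε, hε, hball⟩ := Metric.isOpen_iff.1 isOpen_interior p hp
  set r := min ε (1 / 2)
  have hr0 : 0 < r := by positivity
  have hr1 : r ≤ 1 / 2 := min_le_right _ _
  refine p.2 (hw.mem_regularSet_of_box (r := r) (n := k) hr0 (htime _ p.2)
    ((interior_subset hp).2.mono (by simp; linarith) le_rfl) fun s hs hsr hsb x hx => ?_)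
  by_contra hbad
  have hq : (⟨(x, s), hbad⟩ : ↥(regularSet w h)ᶜ) ∈ Metric.ball p ε := by
    rw [Metric.mem_ball, Subtype.dist_eq, Prod.dist_eq, max_lt_iff, Real.dist_eq, Real.dist_eq]
    exact ⟨hx.trans_le (min_le_left _ _), hsr.trans_le (min_le_left _ _)⟩
  refine hsb ((interior_subset (hball hq)).2.mono ?_ le_rfl)
  rw [abs_sub_comm]
  linarith

/-- The implicit formula for solutions of the inviscid Burgers equation. -/
theorem implicit_formula (hw : IsBurgersSolution_s11 w h) (hh : 0 ≤ h) (x : ℝ) :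
    w (x + h * w x h) 0 = w x h := by
  have := hw.eq_along_characteristic (b := x + h * w x h) (v := w x h) le_rfl le_rfl
    (fun s _ => by rw [hw.regularSet_eq_univ]; trivial) (right_mem_Icc.2 hh)
    (by rw [mul_comm, add_sub_cancel_right]) 0 (left_mem_Icc.2 hh)
  simpa using this

end IsBurgersSolution_s11

/-- The front profile steepens when its values are transported for a time `h` along straight
characteristics: if `v` is the value at `x` and `y = x + h * v` is the foot, then a lower bound by
the profile at `y` gives one by the steeper profile at `x`. -/
lemma frontProfile_le_of_characteristic {κ H a L h N S x y v : ℝ} (hκ : 0 < κ) (hH : 0 < H)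
    (ha : 0 < a) (hδ : H / κ ≤ L / 4) (haL : a ≤ L / 4) (hκN : κ ≤ N) (hh : 0 < h)
    (hhN : h * N ≤ 1 / 2) (hHS : H ≤ S) (hvS : v ≤ S) (hv : 0 ≤ v) (hx : 0 ≤ x)
    (hyx : y = x + h * v) (hφ : frontProfile κ H a L y ≤ v) :
    frontProfile (κ / (1 - κ * h)) H (a + S * h) L x ≤ v := by
  have hκh : κ * h ≤ 1 / 2 := by nlinarith
  have hpos : 0 < 1 - κ * h := by linarith
  have hδ' : H / (κ / (1 - κ * h)) = H / κ - H * h := by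
    field_simp
  have hκδ : κ * (H / κ) = H := by field_simp
  have hS : 0 < S := hH.trans_le hHS
  have ha' : 0 < a + S * h := by positivity
  have hhv : 0 ≤ h * v := by positivity
  have hshallow : H / κ - H * h < x → y ≤ L - a → H ≤ v := by
    intro h1 h2
    unfold frontProfile at hφ
    split_ifs at hφ with h3
    · by_contra! hlt
      have : κ * (H / κ - H * h) < κ * x := mul_lt_mul_of_pos_left h1 hκ
      rw [mul_sub, hκδ] at this
      rw [hyx] at hφ
      nlinarith
    · exact hφ
  have hsteep : ¬ y ≤ L - a → H * (L - y) ≤ v * a := by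
    intro h2
    unfold frontProfile at hφ
    rw [if_neg (by intro h3; apply h2; linarith), if_neg h2] at hφ
    rwa [div_mul_eq_mul_div, div_le_iff₀ ha] at hφ
  have hmid : frontProfile (κ / (1 - κ * h)) H (a + S * h) L x
      = if x ≤ H / κ - H * h then κ / (1 - κ * h) * x else if x ≤ L - (a + S * h) then H
        else H / (a + S * h) * (L - x) := by rw [frontProfile, hδ']
  rw [hmid]
  split_ifs with h1 h2
  · rw [div_mul_eq_mul_div, div_le_iff₀ hpos]
    have hHx : κ * x ≤ H * (1 - κ * h) := by
      have := mul_le_mul_of_nonneg_left h1 hκ.le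
      rw [mul_sub, hκδ] at this
      linarith
    by_cases h3 : y ≤ H / κ
    · rw [frontProfile, if_pos h3, hyx] at hφ
      linarith
    by_cases h4 : y ≤ L - a
    · rw [frontProfile, if_neg h3, if_pos h4] at hφ
      nlinarith
    · have hHh : 0 ≤ H * h := by positivity
      have hL : L / 2 ≤ h * v := by linarith
      have h5 : κ * x ≤ N * (L / 4) := by
        refine mul_le_mul hκN (by linarith) hx (hκ.le.trans hκN)
      have h6 : N * (L / 2) ≤ N * (h * v) :=
        mul_le_mul_of_nonneg_left hL (hκ.le.trans hκN)
      have h7 : h * N * v ≤ 1 / 2 * v := mul_le_mul_of_nonneg_right hhN hv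
      have h8 : κ * h * v ≤ 1 / 2 * v := mul_le_mul_of_nonneg_right hκh hv
      nlinarith
  · refine hshallow (not_le.1 h1) ?_
    nlinarith
  · rw [div_mul_eq_mul_div, div_le_iff₀ ha']
    by_cases h4 : y ≤ L - a
    · have := hshallow (not_le.1 h1) h4
      exact mul_le_mul this (by linarith) (by nlinarith) hv
    · have h5 := hsteep h4
      have h6 : H * (h * v) ≤ S * (h * v) := mul_le_mul_of_nonneg_right hHS hhv
      rw [show L - x = L - y + h * v by rw [hyx]; ring]
      nlinarith

/-- **Steepening under the inviscid Burgers step (Lemma burstep).**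
There is an absolute constant `c > 0` such that: if `θ₀` is smooth, `2L`-periodic, odd, with
`θ₀(L) = 0`, `‖θ₀‖_{C³} ≤ N`, and `θ₀ ≥ φ(κ,H,a,·)` on `[0,L]`, and `w` is a classical `C³`
solution of `∂_t w = w ∂_x w` with `w(·,0) = θ₀` on `[0,h]` with `h ≤ c/N`, then
`w(·,h) ≥ φ(κ/(1−κh), H, a + ‖θ₀‖_∞ h, ·)` on `[0,L]`. -/
theorem burgers_steepening_step :
    ∃ c > (0:ℝ), ∀ (κ H a L h N : ℝ) (θ₀ : ℝ → ℝ) (w : ℝ → ℝ → ℝ),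
      0 < κ → 0 < H → 0 < a → 0 < L → H / κ ≤ L / 4 → a ≤ L / 4 →
      ContDiff ℝ (⊤ : ℕ∞) θ₀ → Function.Periodic θ₀ (2 * L) →
      (∀ x, θ₀ (-x) = -θ₀ x) → θ₀ L = 0 →
      (∀ x ∈ Icc (0:ℝ) L, frontProfile κ H a L x ≤ θ₀ x) →
      0 < N → (∀ j ≤ 3, ∀ x, |iteratedDeriv j θ₀ x| ≤ N) →
      0 < h → h ≤ c / N →
      (∀ t ∈ Icc (0:ℝ) h, ContDiff ℝ 3 (fun x => w x t)) →
      (∀ x, w x 0 = θ₀ x) →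
      (∀ x, ∀ t ∈ Icc (0:ℝ) h,
        HasDerivWithinAt (fun s => w x s)
          (w x t * deriv (fun x' => w x' t) x) (Icc 0 h) t) →
      ∀ x ∈ Icc (0:ℝ) L,
        frontProfile (κ / (1 - κ * h)) H (a + (⨆ x', |θ₀ x'|) * h) L x ≤ w x h := by
  refine ⟨1 / 2, by norm_num, ?_⟩
  intro κ H a L h N θ₀ w hκ hH ha hL hδ haL hθ _ hodd hθL hφ hN hbd hh hhc hsmooth hinit hder x hx
  have hw : IsBurgersSolution_s11 w h :=
    ⟨fun t ht => (hsmooth t ht).of_le (by norm_num), hder⟩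
  have hfoot := hw.implicit_formula hh.le x
  rw [hinit] at hfoot
  have hhN : h * N ≤ 1 / 2 := (le_div_iff₀ hN).1 hhc
  have hθd : Differentiable ℝ θ₀ := hθ.differentiable (by simp)
  have hθ0 : θ₀ 0 = 0 := by
    have := hodd 0
    rw [neg_zero] at this
    linarith
  have hbd0 : ∀ x, |θ₀ x| ≤ N := fun x => by simpa using hbd 0 (by norm_num) x
  have hbd1 : ∀ x, |deriv θ₀ x| ≤ N := fun x => by simpa using hbd 1 (by norm_num) x
  have hlip : ∀ y z, |θ₀ y - θ₀ z| ≤ N * |y - z| := fun y z =>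
    convex_univ.norm_image_sub_le_of_norm_deriv_le (𝕜 := ℝ) (fun u _ => hθd u)
      (fun u _ => hbd1 u) (mem_univ z) (mem_univ y)
  have hS : ∀ x, |θ₀ x| ≤ ⨆ x', |θ₀ x'| := fun x =>
    le_ciSup (f := fun x' => |θ₀ x'|) ⟨N, by rintro _ ⟨y, rfl⟩; exact hbd0 y⟩ x
  have hδpos : 0 < H / κ := by positivity
  have hHδ : H ≤ θ₀ (H / κ) := by
    have := hφ (H / κ) ⟨hδpos.le, by linarith⟩
    rwa [frontProfile, if_pos le_rfl, mul_div_cancel₀ _ hκ.ne'] at this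
  have hκN : κ ≤ N := by
    have h1 := hlip (H / κ) 0
    rw [hθ0, sub_zero, sub_zero, abs_of_pos hδpos] at h1
    have h2 : H ≤ N * (H / κ) := hHδ.trans ((le_abs_self _).trans h1)
    rw [← mul_div_assoc, le_div_iff₀ hκ] at h2
    nlinarith
  set v := w x h with hv
  set y := x + h * v with hy
  have hxy : x = y - h * θ₀ y := by rw [hfoot, hy]; ring
  have hinj : ∀ z, |h * (θ₀ y - θ₀ z)| ≤ 1 / 2 * |y - z| := fun z => by
    rw [abs_mul, abs_of_pos hh]
    calc h * |θ₀ y - θ₀ z| ≤ h * (N * |y - z|) := mul_le_mul_of_nonneg_left (hlip y z) hh.le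
      _ = h * N * |y - z| := by ring
      _ ≤ _ := mul_le_mul_of_nonneg_right hhN (abs_nonneg _)
  have hy0 : 0 ≤ y := by
    by_contra! hlt
    have := hinj 0
    rw [hθ0, sub_zero, sub_zero, abs_of_neg hlt, abs_le] at this
    linarith [hx.1, this.1]
  have hyL : y ≤ L := by
    by_contra! hlt
    have := hinj L
    rw [hθL, sub_zero, abs_of_pos (sub_pos.2 hlt), abs_le] at this
    linarith [hx.2, this.2]
  have hφy := hφ y ⟨hy0, hyL⟩
  have hφ0 : 0 ≤ frontProfile κ H a L y := by
    have : 0 ≤ L - y := sub_nonneg.2 hyL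
    unfold frontProfile
    split_ifs <;> positivity
  rw [hfoot] at hφy
  refine frontProfile_le_of_characteristic hκ hH ha hδ haL hκN hh hhN
    (hHδ.trans ((le_abs_self _).trans (hS _))) ?_ (hφ0.trans hφy) hx.1 hy hφy
  rw [← hfoot]
  exact (le_abs_self _).trans (hS y)

end
end

section
/- Monotone quantity for the blow-up ODE system (Lemma conlaw): Fix 0 < α < 1/2 and C > 0. Let κ, H : [0,T] → (0,∞) be differentiable functions satisfying the system κ'(t) = κ(t)² − C κ(t)^{1+2α} H(t)^{−2α} and H'(t) = −C κ(t)^{2α} H(t)^{1−2α} on [0,T]. If the initial data satisfy H(0)^{2α} κ(0)^{1−2α} ≥ C/(1−2α), then the function t ↦ H(t)^{2α} κ(t)^{1−2α} is non-decreasing on [0,T]. -/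
open Set

/-- The derivative of `κ / H` along the system is `κ² / H`. -/
lemma hasDerivWithinAt_ratio {α C t : ℝ} {s : Set ℝ} {κ H : ℝ → ℝ}
    (hκpos : 0 < κ t) (hHpos : 0 < H t)
    (hκ' : HasDerivWithinAt κ
      (κ t ^ (2:ℕ) - C * κ t ^ (1 + 2*α) * H t ^ (-(2*α))) s t)
    (hH' : HasDerivWithinAt H (-(C * κ t ^ (2*α) * H t ^ (1 - 2*α))) s t) :
    HasDerivWithinAt (fun u => κ u / H u) (κ t ^ 2 / H t) s t := by
  refine (hκ'.div hH' hHpos.ne').congr_deriv ?_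
  rw [Real.rpow_add hκpos, Real.rpow_sub hHpos, Real.rpow_neg hHpos.le, Real.rpow_one,
    Real.rpow_one]
  have := Real.rpow_pos_of_pos hHpos (2*α)
  field_simp
  ring

/-- `H - C / (1 - 2α) * (κ / H)^{-(1 - 2α)}` has zero derivative along the system. -/
lemma hasDerivWithinAt_conserved {α C t : ℝ} {s : Set ℝ} {κ H : ℝ → ℝ} (hα : α < 1/2)
    (hκpos : 0 < κ t) (hHpos : 0 < H t)
    (hκ' : HasDerivWithinAt κ
      (κ t ^ (2:ℕ) - C * κ t ^ (1 + 2*α) * H t ^ (-(2*α))) s t)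
    (hH' : HasDerivWithinAt H (-(C * κ t ^ (2*α) * H t ^ (1 - 2*α))) s t) :
    HasDerivWithinAt (fun u => H u - C / (1 - 2*α) * (κ u / H u) ^ (-(1 - 2*α))) 0 s t := by
  have hG := hasDerivWithinAt_ratio hκpos hHpos hκ' hH'
  have hGpos : 0 < κ t / H t := div_pos hκpos hHpos
  refine (hH'.sub ((hG.rpow_const (p := -(1 - 2*α)) (Or.inl hGpos.ne')).const_mul
    (C / (1 - 2*α)))).congr_deriv ?_
  have hne : 1 - 2*α ≠ 0 := by linarith
  have hexp : -(1 - 2*α) - 1 = 2*α - (2:ℕ) := by push_cast; ring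
  rw [hexp, Real.rpow_sub_natCast hGpos.ne', Real.div_rpow hκpos.le hHpos.le,
    Real.rpow_sub hHpos, Real.rpow_one]
  have := Real.rpow_pos_of_pos hHpos (2*α)
  field_simp
  ring

/-- `H^{2α} κ^{1-2α}` is an affine function of `(κ / H)^{1-2α}`. -/
lemma rpow_mul_rpow_eq_affine_ratio {k h α c : ℝ} (hk : 0 < k) (hh : 0 < h) :
    h ^ (2*α) * k ^ (1 - 2*α) =
      c + (h - c * (k / h) ^ (-(1 - 2*α))) * (k / h) ^ (1 - 2*α) := by
  rw [Real.rpow_neg (div_pos hk hh).le, Real.div_rpow hk.le hh.le]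
  have h1 : h ^ (2*α) * h ^ (1 - 2*α) = h := by
    rw [← Real.rpow_add hh]; simp
  have := Real.rpow_pos_of_pos hh (1 - 2*α)
  have := Real.rpow_pos_of_pos hk (1 - 2*α)
  field_simp
  linear_combination k ^ (1 - 2*α) * h1

/-- **Monotone quantity for the blow-up ODE system.**
If `κ' = κ² − C κ^{1+2α} H^{−2α}` and `H' = −C κ^{2α} H^{1−2α}` on `[0,T]` with
`H(0)^{2α} κ(0)^{1−2α} ≥ C/(1−2α)`, then `t ↦ H(t)^{2α} κ(t)^{1−2α}` is non-decreasing. -/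
theorem blowup_ode_monotone (α C T : ℝ) (hα0 : 0 < α) (hα : α < 1/2) (hC : 0 < C)
    (κ H : ℝ → ℝ)
    (hκpos : ∀ t ∈ Icc (0:ℝ) T, 0 < κ t)
    (hHpos : ∀ t ∈ Icc (0:ℝ) T, 0 < H t)
    (hκ' : ∀ t ∈ Icc (0:ℝ) T,
      HasDerivWithinAt κ (κ t ^ (2:ℕ) - C * κ t ^ (1 + 2*α) * H t ^ (-(2*α))) (Icc 0 T) t)
    (hH' : ∀ t ∈ Icc (0:ℝ) T,
      HasDerivWithinAt H (-(C * κ t ^ (2*α) * H t ^ (1 - 2*α))) (Icc 0 T) t)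
    (hinit : C / (1 - 2*α) ≤ H 0 ^ (2*α) * κ 0 ^ (1 - 2*α)) :
    MonotoneOn (fun t => H t ^ (2*α) * κ t ^ (1 - 2*α)) (Icc 0 T) := by
  set c := C / (1 - 2*α)
  have hGpos : ∀ t ∈ Icc (0:ℝ) T, 0 < κ t / H t := fun t ht => div_pos (hκpos t ht) (hHpos t ht)
  have hGmono : MonotoneOn (fun t => κ t / H t) (Icc 0 T) := by
    have hG : ∀ t ∈ Icc (0:ℝ) T,
        HasDerivWithinAt (fun u => κ u / H u) (κ t ^ 2 / H t) (Icc 0 T) t := fun t ht =>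
      hasDerivWithinAt_ratio (hκpos t ht) (hHpos t ht) (hκ' t ht) (hH' t ht)
    refine monotoneOn_of_hasDerivWithinAt_nonneg (convex_Icc 0 T)
      (fun t ht => (hG t ht).continuousWithinAt)
      (fun t ht => (hG t (interior_subset ht)).mono interior_subset) fun t ht => ?_
    have := hHpos t (interior_subset ht)
    positivity
  have hE : ∀ t ∈ Icc (0:ℝ) T, HasDerivWithinAt
      (fun u => H u - c * (κ u / H u) ^ (-(1 - 2*α))) 0 (Icc 0 T) t := fun t ht =>
    hasDerivWithinAt_conserved hα (hκpos t ht) (hHpos t ht) (hκ' t ht) (hH' t ht)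
  have hconst := constant_of_derivWithin_zero
    (fun t ht => (hE t ht).differentiableWithinAt) fun t ht =>
      (hE t (Ico_subset_Icc_self ht)).derivWithin
        (uniqueDiffOn_Icc (ht.1.trans_lt ht.2) t (Ico_subset_Icc_self ht))
  intro x hx y hy hxy
  have h0 : (0:ℝ) ∈ Icc (0:ℝ) T := ⟨le_rfl, hx.1.trans hx.2⟩
  have hE0 : 0 ≤ H 0 - c * (κ 0 / H 0) ^ (-(1 - 2*α)) := by
    rw [rpow_mul_rpow_eq_affine_ratio (c := c) (hκpos 0 h0) (hHpos 0 h0)] at hinit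
    exact nonneg_of_mul_nonneg_left (by linarith) (Real.rpow_pos_of_pos (hGpos 0 h0) (1 - 2*α))
  simp only
  rw [rpow_mul_rpow_eq_affine_ratio (c := c) (hκpos x hx) (hHpos x hx),
    rpow_mul_rpow_eq_affine_ratio (c := c) (hκpos y hy) (hHpos y hy), hconst x hx, hconst y hy]
  have hpow : (κ x / H x) ^ (1 - 2*α) ≤ (κ y / H y) ^ (1 - 2*α) :=
    Real.rpow_le_rpow (hGpos x hx).le (hGmono hx hy hxy) (by linarith)
  gcongr
end

section
/- Finite time blow up for the supercritical Burgers equation (Theorem on supercritical Burgers blow-up): Let 0 < α < 1/2. There exist L > 0, T > 0, and smooth 2L-periodic initial data θ₀ : ℝ → ℝ such that there is no function θ : ℝ × [0,T] → ℝ which is 2L-periodic in x, continuously differentiable in t, three times continuously differentiable in x with sup_{0 ≤ t ≤ T} ‖θ(·,t)‖_{C³} < ∞, and which solves ∂_t θ = θ ∂_x θ − L_α θ classically on ℝ × [0,T] with θ(·,0) = θ₀, where L_α f(x) = P.V. ∫_ℝ (f(x) − f(x+y))/|y|^{1+2α} dy. (That is, any solution starting from θ₀ must lose C³ regularity by time T.)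 -/
open Set MeasureTheory Filter Topology

namespace FractionalBurgers

/-! ### The kernel of the fractional Laplacian -/

/-- In the supercritical range the kernel `|z|^{-1-2α}` is integrable against `min |z| 1`. -/
lemma integrable_min_div_rpow {α : ℝ} (hα0 : 0 < α) (hα : α < 1 / 2) :
    Integrable (fun z : ℝ => min |z| 1 / |z| ^ (1 + 2 * α)) := by
  have hpos : IntegrableOn (fun z : ℝ => min |z| 1 / |z| ^ (1 + 2 * α)) (Ioi 0) := by
    rw [← Ioc_union_Ioi_eq_Ioi (zero_le_one (α := ℝ))]
    refine IntegrableOn.union ?_ ?_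
    · have h := (intervalIntegral.intervalIntegrable_rpow' (a := 0) (b := 1)
        (r := -(2 * α)) (by linarith)).1
      refine h.congr_fun (fun z hz => ?_) measurableSet_Ioc
      have hz0 : 0 < z := hz.1
      simp only [abs_of_pos hz0, min_eq_left hz.2]
      rw [Real.rpow_add hz0, Real.rpow_one, Real.rpow_neg hz0.le]
      field_simp
    · have h := integrableOn_Ioi_rpow_of_lt (a := -(1 + 2 * α)) (by linarith) zero_lt_one
      refine h.congr_fun (fun z hz => ?_) measurableSet_Ioi
      have hz1 : 1 < z := hz
      have hz0 : 0 < z := by linarith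
      simp only [abs_of_pos hz0, min_eq_right hz1.le]
      rw [Real.rpow_neg hz0.le, one_div]
  have hneg : IntegrableOn (fun z : ℝ => min |z| 1 / |z| ^ (1 + 2 * α)) (Iio 0) := by
    have h := hpos.comp_neg
    simpa using h
  rw [← integrableOn_univ, ← Iic_union_Ioi (a := (0 : ℝ))]
  exact ((integrableOn_Iic_iff_integrableOn_Iio (by simp)).2 hneg).union hpos

lemma abs_div_rpow_le {a c p z : ℝ} (h : |a| ≤ c * min |z| 1) :
    |a / |z| ^ p| ≤ c * (min |z| 1 / |z| ^ p) := by
  have hz : 0 ≤ |z| ^ p := by positivity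
  rw [abs_div, abs_of_nonneg hz, ← mul_div_assoc]
  gcongr

lemma integrable_kernel_mul {α c x : ℝ} {f : ℝ → ℝ} (hα0 : 0 < α) (hα : α < 1 / 2)
    (hf : Continuous f) (hc : ∀ x z, |f x - f (x + z)| ≤ c * min |z| 1) :
    Integrable (fun z => (f x - f (x + z)) / |z| ^ (1 + 2 * α)) := by
  refine ((integrable_min_div_rpow hα0 hα).const_mul c).mono' ?_
    (Eventually.of_forall fun z => abs_div_rpow_le (hc x z))
  exact Measurable.aestronglyMeasurable (by fun_prop)

lemma abs_integral_kernel_le {α c x : ℝ} {f : ℝ → ℝ} (hα0 : 0 < α) (hα : α < 1 / 2)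
    (hc : ∀ x z, |f x - f (x + z)| ≤ c * min |z| 1) :
    |∫ z, (f x - f (x + z)) / |z| ^ (1 + 2 * α)| ≤
      c * ∫ z : ℝ, min |z| 1 / |z| ^ (1 + 2 * α) := by
  rw [← integral_const_mul, ← Real.norm_eq_abs]
  exact norm_integral_le_of_norm_le ((integrable_min_div_rpow hα0 hα).const_mul c)
    (Eventually.of_forall fun z => abs_div_rpow_le (hc x z))

/-- The truncated integrals of an integrable function converge to the full integral. -/
lemma tendsto_integral_lt_abs {g : ℝ → ℝ} (hg : Integrable g) :
    Tendsto (fun ε => ∫ y in {y : ℝ | ε < |y|}, g y) (𝓝[>] 0) (𝓝 (∫ y, g y)) := by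
  have hm : ∀ ε : ℝ, MeasurableSet {y : ℝ | ε < |y|} := fun ε =>
    measurableSet_lt measurable_const measurable_norm
  simp_rw [fun ε => (integral_indicator (f := g) (μ := volume) (hm ε)).symm]
  refine tendsto_integral_filter_of_dominated_convergence (fun y => ‖g y‖) ?_ ?_ hg.norm ?_
  · exact Eventually.of_forall fun ε => hg.aestronglyMeasurable.indicator (hm ε)
  · exact Eventually.of_forall fun ε => Eventually.of_forall fun y => norm_indicator_le_norm_self _ _
  · have h0 : ∀ᵐ y : ℝ, y ≠ 0 := by simp [ae_iff]
    filter_upwards [h0] with y hy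
    refine tendsto_const_nhds.congr' ?_
    have : ∀ᶠ ε in 𝓝[>] (0 : ℝ), ε < |y| :=
      nhdsWithin_le_nhds (eventually_lt_nhds (abs_pos.2 hy))
    filter_upwards [this] with ε hε
    rw [indicator_of_mem (by exact hε)]

/-! ### The sawtooth transform -/

/-- Integration of `f` over the period `[X, X + 2]` against the sawtooth `y ↦ 1 - y`. -/
noncomputable def sawtooth (f : ℝ → ℝ) (X : ℝ) : ℝ := ∫ y in (0 : ℝ)..2, f (X + y) * (1 - y)

lemma sawtooth_periodic {f : ℝ → ℝ} (hp : Function.Periodic f 2) :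
    Function.Periodic (sawtooth f) 2 := by
  intro X
  simp only [sawtooth]
  congr 1 with y
  rw [show X + 2 + y = X + y + 2 by ring, hp]

lemma abs_sawtooth_le {f : ℝ → ℝ} {A : ℝ} (hA : ∀ x, |f x| ≤ A) (X : ℝ) :
    |sawtooth f X| ≤ 2 * A := by
  have h : ∀ y ∈ uIoc (0 : ℝ) 2, ‖f (X + y) * (1 - y)‖ ≤ A := by
    intro y hy
    rw [uIoc_of_le zero_le_two] at hy
    have h1 : |1 - y| ≤ 1 := abs_le.2 ⟨by linarith [hy.2], by linarith [hy.1]⟩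
    rw [norm_mul, Real.norm_eq_abs, Real.norm_eq_abs]
    nlinarith [hA (X + y), abs_nonneg (f (X + y)), abs_nonneg (1 - y)]
  have := intervalIntegral.norm_integral_le_of_norm_le_const h
  rw [Real.norm_eq_abs] at this
  simp only [sawtooth]
  norm_num at this
  linarith

lemma hasDerivAt_sawtooth {f : ℝ → ℝ} (hf : Continuous f) (hp : Function.Periodic f 2) (X : ℝ) :
    HasDerivAt (sawtooth f) (-2 * f X + ∫ y in (0 : ℝ)..2, f (X + y)) X := by
  set P : ℝ → ℝ := fun x => ∫ s in (0 : ℝ)..x, f s with hP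
  have hPd : ∀ x, HasDerivAt P (f x) x := fun x =>
    intervalIntegral.integral_hasDerivAt_right (hf.intervalIntegrable _ _)
      (hf.stronglyMeasurableAtFilter _ _) hf.continuousAt
  have hPc : Continuous P := continuous_iff_continuousAt.2 fun x => (hPd x).continuousAt
  set Q : ℝ → ℝ := fun x => ∫ s in (0 : ℝ)..x, P s with hQ
  have hQd : ∀ x, HasDerivAt Q (P x) x := fun x =>
    intervalIntegral.integral_hasDerivAt_right (hPc.intervalIntegrable _ _)
      (hPc.stronglyMeasurableAtFilter _ _) hPc.continuousAt
  have hshift : ∀ (g g' : ℝ → ℝ), (∀ x, HasDerivAt g (g' x) x) → ∀ x y,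
      HasDerivAt (fun y => g (x + y)) (g' (x + y)) y := by
    intro g g' hg x y
    exact (hg (x + y)).comp_const_add x y
  have hint : ∀ x, ∫ y in (0 : ℝ)..2, f (x + y) = P (x + 2) - P x := by
    intro x
    rw [intervalIntegral.integral_eq_sub_of_hasDerivAt (f := fun y => P (x + y))
      (fun y _ => hshift P f hPd x y) (Continuous.intervalIntegrable (by fun_prop) _ _)]
    simp
  have hformula : sawtooth f = fun x => -P (x + 2) - P x + (Q (x + 2) - Q x) := by
    funext x
    have hd : ∀ y ∈ uIcc (0 : ℝ) 2, HasDerivAt (fun y => P (x + y) * (1 - y) + Q (x + y))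
        (f (x + y) * (1 - y)) y := by
      intro y _
      have h1 := ((hshift P f hPd x y).fun_mul ((hasDerivAt_id y).const_sub 1)).fun_add
        (hshift Q P hQd x y)
      refine h1.congr_deriv ?_
      simp
    simp only [sawtooth]
    rw [intervalIntegral.integral_eq_sub_of_hasDerivAt hd
      (Continuous.intervalIntegrable (by fun_prop) _ _)]
    simp
    ring
  rw [hformula, hint]
  have h2 : ∀ (g g' : ℝ → ℝ), (∀ x, HasDerivAt g (g' x) x) →
      HasDerivAt (fun x => g (x + 2)) (g' (X + 2)) X := by
    intro g g' hg
    exact (hg (X + 2)).comp_add_const X 2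
  have h := ((h2 P f hPd).fun_neg.fun_sub (hPd X)).fun_add ((h2 Q P hQd).fun_sub (hQd X))
  refine h.congr_deriv ?_
  rw [hp X]
  ring

lemma abs_sawtooth_sub_le {f : ℝ → ℝ} {A : ℝ} (hf : Continuous f) (hp : Function.Periodic f 2)
    (hA : ∀ x, |f x| ≤ A) (X Y : ℝ) : |sawtooth f Y - sawtooth f X| ≤ 4 * A * |Y - X| := by
  have hd : ∀ x ∈ (univ : Set ℝ), ‖-2 * f x + ∫ y in (0 : ℝ)..2, f (x + y)‖ ≤ 4 * A := by
    intro x _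
    have h := intervalIntegral.norm_integral_le_of_norm_le_const
      (a := 0) (b := 2) (f := fun y => f (x + y)) (C := A) (fun y _ => hA (x + y))
    calc _ ≤ ‖-2 * f x‖ + ‖∫ y in (0 : ℝ)..2, f (x + y)‖ := norm_add_le _ _
      _ ≤ 2 * A + A * |2 - 0| := by
        gcongr
        rw [norm_mul, Real.norm_eq_abs, Real.norm_eq_abs]
        norm_num
        exact hA x
      _ = 4 * A := by norm_num; ring
  exact convex_univ.norm_image_sub_le_of_norm_hasDerivWithin_le
    (fun x _ => (hasDerivAt_sawtooth hf hp x).hasDerivWithinAt) hd (mem_univ X) (mem_univ Y)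

lemma abs_sawtooth_sub_shift_le {f : ℝ → ℝ} {A : ℝ} (hf : Continuous f)
    (hp : Function.Periodic f 2) (hA : ∀ x, |f x| ≤ A) (X z : ℝ) :
    |sawtooth f X - sawtooth f (X + z)| ≤ 4 * A * min |z| 1 := by
  rcases le_total |z| 1 with h | h
  · rw [min_eq_left h, abs_sub_comm]
    simpa using abs_sawtooth_sub_le hf hp hA X (X + z)
  · rw [min_eq_right h]
    have h1 := abs_sawtooth_le hA X
    have h2 := abs_sawtooth_le hA (X + z)
    have := abs_sub (sawtooth f X) (sawtooth f (X + z))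
    linarith

/-- The sawtooth transform commutes with the fractional Laplacian. -/
lemma sawtooth_integral_kernel {α c : ℝ} {f : ℝ → ℝ} (hα0 : 0 < α) (hα : α < 1 / 2)
    (hf : Continuous f) (hc : ∀ x z, |f x - f (x + z)| ≤ c * min |z| 1) (X : ℝ) :
    IntervalIntegrable
        (fun y => (∫ z, (f (X + y) - f (X + y + z)) / |z| ^ (1 + 2 * α)) * (1 - y)) volume 0 2 ∧
      sawtooth (fun x => ∫ z, (f x - f (x + z)) / |z| ^ (1 + 2 * α)) X =
        ∫ z, (sawtooth f X - sawtooth f (X + z)) / |z| ^ (1 + 2 * α) := by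
  set G : ℝ → ℝ → ℝ := fun y z =>
    (f (X + y) - f (X + y + z)) / |z| ^ (1 + 2 * α) * (1 - y) with hG
  have hGi : Integrable (Function.uncurry G) ((volume.restrict (Ioc (0 : ℝ) 2)).prod volume) := by
    have hb : Integrable (fun q : ℝ × ℝ => (1 : ℝ) * (c * (min |q.2| 1 / |q.2| ^ (1 + 2 * α))))
        ((volume.restrict (Ioc (0 : ℝ) 2)).prod volume) :=
      Integrable.mul_prod (integrable_const (1 : ℝ)) ((integrable_min_div_rpow hα0 hα).const_mul c)
    refine hb.mono' (Measurable.aestronglyMeasurable (by fun_prop)) ?_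
    have hmem : ∀ᵐ q : ℝ × ℝ ∂((volume.restrict (Ioc (0 : ℝ) 2)).prod volume),
        q.1 ∈ Ioc (0 : ℝ) 2 :=
      Measure.quasiMeasurePreserving_fst.ae (ae_restrict_mem measurableSet_Ioc)
    filter_upwards [hmem] with q hq
    have h1 : |1 - q.1| ≤ 1 := abs_le.2 ⟨by linarith [hq.2], by linarith [hq.1]⟩
    have h2 := abs_div_rpow_le (p := 1 + 2 * α) (hc (X + q.1) q.2)
    simp only [Function.uncurry, hG, norm_mul, Real.norm_eq_abs]
    nlinarith [abs_nonneg ((f (X + q.1) - f (X + q.1 + q.2)) / |q.2| ^ (1 + 2 * α)),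
      abs_nonneg (1 - q.1)]
  constructor
  · rw [intervalIntegrable_iff, uIoc_of_le zero_le_two]
    have := hGi.integral_prod_left
    simp only [Function.uncurry, hG, integral_mul_const] at this
    exact this
  · have hswap := integral_integral_swap hGi
    simp only [hG, integral_mul_const] at hswap
    simp only [sawtooth]
    rw [intervalIntegral.integral_of_le zero_le_two, hswap]
    congr 1 with z
    rw [← intervalIntegral.integral_of_le zero_le_two,
      ← intervalIntegral.integral_sub (Continuous.intervalIntegrable (by fun_prop) _ _)
        (Continuous.intervalIntegrable (by fun_prop) _ _), ← intervalIntegral.integral_div]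
    congr 1 with y
    rw [show X + y + z = X + z + y by ring]
    ring

/-- The quadratic flux produces the energy minus the boundary term. -/
lemma sawtooth_mul_deriv {f : ℝ → ℝ} (hf : ContDiff ℝ 1 f) (hp : Function.Periodic f 2) (X : ℝ) :
    sawtooth (fun x => f x * deriv f x) X =
      -f X ^ 2 + (∫ y in (0 : ℝ)..2, f (X + y) ^ 2) / 2 := by
  have hc := hf.continuous
  have hc' : Continuous (deriv f) := hf.continuous_deriv le_rfl
  have hd : ∀ y ∈ uIcc (0 : ℝ) 2, HasDerivAt (fun y => f (X + y) ^ 2 / 2 * (1 - y))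
      (f (X + y) * deriv f (X + y) * (1 - y) - f (X + y) ^ 2 / 2) y := by
    intro y _
    have h0 : HasDerivAt (fun y => f (X + y)) (deriv f (X + y)) y :=
      HasDerivAt.comp_const_add X y (hf.differentiable (by norm_num) (X + y)).hasDerivAt
    have h1 := ((h0.fun_pow 2).div_const 2).fun_mul ((hasDerivAt_id y).const_sub 1)
    refine h1.congr_deriv ?_
    simp
    ring
  have h := intervalIntegral.integral_eq_sub_of_hasDerivAt hd
    (Continuous.intervalIntegrable (by fun_prop) _ _)
  rw [intervalIntegral.integral_sub (Continuous.intervalIntegrable (by fun_prop) _ _)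
    (Continuous.intervalIntegrable (by fun_prop) _ _), intervalIntegral.integral_div, hp X] at h
  simp only [sawtooth]
  norm_num at h
  linarith

/-- A linearized Cauchy-Schwarz inequality, from expanding `∫ (f - f X - s (1 - y))² ≥ 0` at a
point where the value of `f` is its mean. -/
lemma energy_lower_bound {f : ℝ → ℝ} (hf : Continuous f) {X : ℝ}
    (hX : ∫ y in (0 : ℝ)..2, f (X + y) = 2 * f X) (s : ℝ) :
    s * sawtooth f X - s ^ 2 / 3 ≤ -f X ^ 2 + (∫ y in (0 : ℝ)..2, f (X + y) ^ 2) / 2 := by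
  have h0 : 0 ≤ ∫ y in (0 : ℝ)..2, (f (X + y) - f X - s * (1 - y)) ^ 2 :=
    intervalIntegral.integral_nonneg zero_le_two fun y _ => sq_nonneg _
  have hexp : ∫ y in (0 : ℝ)..2, (f (X + y) - f X - s * (1 - y)) ^ 2 =
      (∫ y in (0 : ℝ)..2, f (X + y) ^ 2) - 2 * f X * (∫ y in (0 : ℝ)..2, f (X + y))
        - 2 * s * (∫ y in (0 : ℝ)..2, f (X + y) * (1 - y))
        + ∫ y in (0 : ℝ)..2, (f X + s * (1 - y)) ^ 2 := by
    have hi : ∀ g : ℝ → ℝ, Continuous g → IntervalIntegrable g volume 0 2 := fun g hg =>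
      hg.intervalIntegrable _ _
    rw [← intervalIntegral.integral_const_mul, ← intervalIntegral.integral_const_mul,
      ← intervalIntegral.integral_sub (hi _ (by fun_prop)) (hi _ (by fun_prop)),
      ← intervalIntegral.integral_sub (hi _ (by fun_prop)) (hi _ (by fun_prop)),
      ← intervalIntegral.integral_add (hi _ (by fun_prop)) (hi _ (by fun_prop))]
    congr 1 with y
    ring
  have hpoly : ∫ y in (0 : ℝ)..2, (f X + s * (1 - y)) ^ 2 = 2 * f X ^ 2 + 2 / 3 * s ^ 2 := by
    have hd : ∀ y ∈ uIcc (0 : ℝ) 2, HasDerivAt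
        (fun y : ℝ => f X ^ 2 * y + f X * s * (2 * y - y ^ 2) - s ^ 2 * (1 - y) ^ 3 / 3)
        ((f X + s * (1 - y)) ^ 2) y := by
      intro y _
      have h1 := (((hasDerivAt_id y).const_mul (f X ^ 2)).fun_add
        ((((hasDerivAt_id y).const_mul 2).fun_sub ((hasDerivAt_id y).fun_pow 2)).const_mul
          (f X * s))).fun_sub
        (((((hasDerivAt_id y).const_sub 1).fun_pow 3).const_mul (s ^ 2)).div_const 3)
      refine h1.congr_deriv ?_
      simp
      ring
    rw [intervalIntegral.integral_eq_sub_of_hasDerivAt hd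
      (Continuous.intervalIntegrable (by fun_prop) _ _)]
    ring
  rw [hexp, hX, hpoly] at h0
  simp only [sawtooth]
  nlinarith

lemma sawtooth_sin (A : ℝ) :
    sawtooth (fun x => A * Real.sin (Real.pi * x)) 0 = 2 * A / Real.pi := by
  have hpi := Real.pi_ne_zero
  have hd : ∀ y ∈ uIcc (0 : ℝ) 2, HasDerivAt
      (fun y : ℝ => A * (-(Real.cos (Real.pi * y) * (1 - y)) / Real.pi
        - Real.sin (Real.pi * y) / Real.pi ^ 2))
      (A * Real.sin (Real.pi * (0 + y)) * (1 - y)) y := by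
    intro y _
    have hl : HasDerivAt (fun y : ℝ => Real.pi * y) Real.pi y := by
      simpa using (hasDerivAt_id y).const_mul Real.pi
    have h1 := ((((hl.cos.fun_mul ((hasDerivAt_id y).const_sub 1)).fun_neg).div_const
      Real.pi).fun_sub (hl.sin.div_const (Real.pi ^ 2))).const_mul A
    refine h1.congr_deriv ?_
    simp
    field_simp
    ring
  simp only [sawtooth]
  rw [intervalIntegral.integral_eq_sub_of_hasDerivAt hd
      (Continuous.intervalIntegrable (by fun_prop) _ _)]
  rw [mul_comm Real.pi 2]
  simp
  field_simp
  ring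

/-! ### Time-dependent functions -/

lemma abs_sub_le_of_hasDerivWithinAt {g g' : ℝ → ℝ} {T C : ℝ}
    (hd : ∀ t ∈ Icc (0 : ℝ) T, HasDerivWithinAt g (g' t) (Icc 0 T) t)
    (hC : ∀ t ∈ Icc (0 : ℝ) T, |g' t| ≤ C) {s t : ℝ} (hs : s ∈ Icc 0 T) (ht : t ∈ Icc 0 T) :
    |g s - g t| ≤ C * |s - t| :=
  (convex_Icc 0 T).norm_image_sub_le_of_norm_hasDerivWithin_le hd hC ht hs

/-- The sawtooth transform may be differentiated in time under the integral sign. -/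
lemma hasDerivWithinAt_sawtooth {θ R : ℝ → ℝ → ℝ} {T C : ℝ}
    (hcont : ∀ t ∈ Icc (0 : ℝ) T, Continuous fun x => θ x t)
    (hd : ∀ x, ∀ t ∈ Icc (0 : ℝ) T, HasDerivWithinAt (fun s => θ x s) (R x t) (Icc 0 T) t)
    (hC : ∀ t ∈ Icc (0 : ℝ) T, ∀ x, |R x t| ≤ C) (X : ℝ) {t : ℝ} (ht : t ∈ Icc (0 : ℝ) T) :
    HasDerivWithinAt (fun s => sawtooth (fun x => θ x s) X) (sawtooth (fun x => R x t) X)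
      (Icc 0 T) t := by
  rw [hasDerivWithinAt_iff_tendsto_slope]
  have hmem : ∀ᶠ s in 𝓝[Icc 0 T \ {t}] t, s ∈ Icc 0 T \ {t} := self_mem_nhdsWithin
  have hlim : Tendsto
      (fun s => ∫ y in (0 : ℝ)..2, slope (fun s => θ (X + y) s) t s * (1 - y))
      (𝓝[Icc 0 T \ {t}] t) (𝓝 (sawtooth (fun x => R x t) X)) := by
    refine intervalIntegral.tendsto_integral_filter_of_dominated_convergence (fun _ => C) ?_ ?_
      intervalIntegrable_const ?_
    · filter_upwards [hmem] with s hs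
      have h1 := hcont s hs.1
      have h2 := hcont t ht
      simp only [slope_def_field]
      exact Continuous.aestronglyMeasurable (by fun_prop)
    · filter_upwards [hmem] with s hs
      refine Eventually.of_forall fun y hy => ?_
      rw [uIoc_of_le zero_le_two] at hy
      have h1 : |1 - y| ≤ 1 := abs_le.2 ⟨by linarith [hy.2], by linarith [hy.1]⟩
      have h2 := abs_sub_le_of_hasDerivWithinAt (hd (X + y)) (fun t ht => hC t ht (X + y)) hs.1 ht
      have h3 : |slope (fun s => θ (X + y) s) t s| ≤ C := by
        rw [slope_def_field, abs_div, div_le_iff₀ (abs_pos.2 (sub_ne_zero.2 hs.2))]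
        exact h2
      rw [norm_mul, Real.norm_eq_abs, Real.norm_eq_abs]
      nlinarith [abs_nonneg (slope (fun s => θ (X + y) s) t s), abs_nonneg (1 - y)]
    · refine Eventually.of_forall fun y _ => ?_
      exact (hasDerivWithinAt_iff_tendsto_slope.1 (hd (X + y) t ht)).mul_const (1 - y)
  refine hlim.congr' ?_
  filter_upwards [hmem] with s hs
  have h1 := hcont s hs.1
  have h2 := hcont t ht
  simp only [slope_def_field, sawtooth]
  rw [← intervalIntegral.integral_sub (Continuous.intervalIntegrable (by fun_prop) _ _)
    (Continuous.intervalIntegrable (by fun_prop) _ _), ← intervalIntegral.integral_div]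
  congr 1 with y
  ring

/-- A periodic function of space that does not increase in time at its spatial maxima stays below
its initial supremum. -/
lemma le_of_nonpos_deriv_at_max {u R : ℝ → ℝ → ℝ} {T A : ℝ}
    (hper : ∀ t ∈ Icc (0 : ℝ) T, Function.Periodic (fun x => u x t) 2)
    (hcont : ContinuousOn (fun q : ℝ × ℝ => u q.1 q.2) (univ ×ˢ Icc 0 T))
    (hd : ∀ x, ∀ t ∈ Icc (0 : ℝ) T, HasDerivWithinAt (fun s => u x s) (R x t) (Icc 0 T) t)
    (hmax : ∀ t ∈ Icc (0 : ℝ) T, ∀ x, (∀ y, u y t ≤ u x t) → R x t ≤ 0)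
    (h0 : ∀ x, u x 0 ≤ A) : ∀ t ∈ Icc (0 : ℝ) T, ∀ x, u x t ≤ A := by
  intro t ht x
  have hT : 0 ≤ T := ht.1.trans ht.2
  suffices h : ∀ ε > 0, u x t ≤ A + ε * t by
    refine le_of_forall_pos_le_add fun δ hδ => ?_
    have := h (δ / (T + 1)) (by positivity)
    have h2 : δ / (T + 1) * t ≤ δ := by
      rw [div_mul_eq_mul_div, div_le_iff₀ (by positivity)]
      nlinarith [ht.2]
    linarith
  intro ε hε
  obtain ⟨⟨x₀, t₀⟩, ⟨-, ht₀⟩, hq⟩ := (isCompact_Icc.prod isCompact_Icc).exists_isMaxOn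
    (s := Icc (0 : ℝ) 2 ×ˢ Icc (0 : ℝ) T) ⟨(0, 0), by simp [hT]⟩
    (f := fun q : ℝ × ℝ => u q.1 q.2 - ε * q.2)
    ((hcont.mono (prod_mono_left (subset_univ _))).sub (by fun_prop))
  have hglobal : ∀ s ∈ Icc (0 : ℝ) T, ∀ y, u y s - ε * s ≤ u x₀ t₀ - ε * t₀ := by
    intro s hs y
    obtain ⟨y', hy', he⟩ := (hper s hs).exists_mem_Ico₀ two_pos y
    have := hq (show (y', s) ∈ Icc (0 : ℝ) 2 ×ˢ Icc (0 : ℝ) T from ⟨Ico_subset_Icc_self hy', hs⟩)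
    exact (sub_le_sub_right he.le _).trans this
  replace ht₀ : t₀ ∈ Icc 0 T := ht₀
  rcases ht₀.1.eq_or_lt with h | hpos
  · have h1 := hglobal t ht x
    rw [← h] at h1
    linarith [h0 x₀]
  · exfalso
    have hR : R x₀ t₀ ≤ 0 := hmax t₀ ht₀ x₀ fun y => by linarith [hglobal t₀ ht₀ y]
    have hs := hasDerivWithinAt_iff_tendsto_slope.1 (hd x₀ t₀ ht₀)
    have hsub : Ico 0 t₀ ⊆ Icc 0 T \ {t₀} := fun s hs =>
      ⟨⟨hs.1, hs.2.le.trans ht₀.2⟩, hs.2.ne⟩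
    have hne : (𝓝[Ico 0 t₀] t₀).NeBot := by
      rw [nhdsWithin_Ico_eq_nhdsLT hpos]
      infer_instance
    have hge : ε ≤ R x₀ t₀ := by
      refine ge_of_tendsto (hs.mono_left (nhdsWithin_mono t₀ hsub)) ?_
      filter_upwards [self_mem_nhdsWithin] with s hs
      have h1 := hglobal s (hsub hs).1 x₀
      rw [slope_def_field, le_div_iff_of_neg (by linarith [hs.2])]
      linarith
    linarith

/-- If a periodic function of space grows in time with speed more than `c` at those spatial maxima
where it is at least `φ`, then its supremum grows at least linearly once it reaches `φ`. -/
lemma exists_ge_of_lt_deriv_at_max {F G : ℝ → ℝ → ℝ} {T φ c : ℝ} (hc : 0 ≤ c)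
    (hper : ∀ t ∈ Icc (0 : ℝ) T, Function.Periodic (fun x => F x t) 2)
    (hcont : ContinuousOn (fun q : ℝ × ℝ => F q.1 q.2) (univ ×ˢ Icc 0 T))
    (hd : ∀ x, ∀ t ∈ Icc (0 : ℝ) T, HasDerivWithinAt (fun s => F x s) (G x t) (Icc 0 T) t)
    (hmax : ∀ t ∈ Icc (0 : ℝ) T, ∀ x, (∀ y, F y t ≤ F x t) → φ ≤ F x t → c < G x t)
    (h0 : φ ≤ F 0 0) : ∀ t ∈ Icc (0 : ℝ) T, ∃ x, φ + c * t ≤ F x t := by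
  set S : Set ℝ := {t | ∃ x ∈ Icc (0 : ℝ) 2, φ + c * t ≤ F x t} with hS
  have hclosed : IsClosed (S ∩ Icc 0 T) := by
    have hK : IsCompact ((Icc (0 : ℝ) 2 ×ˢ Icc (0 : ℝ) T) ∩
        (fun q : ℝ × ℝ => F q.1 q.2 - (φ + c * q.2)) ⁻¹' Ici 0) := by
      refine (isCompact_Icc.prod isCompact_Icc).of_isClosed_subset ?_ inter_subset_left
      refine ContinuousOn.preimage_isClosed_of_isClosed ?_ (isClosed_Icc.prod isClosed_Icc)
        isClosed_Ici
      exact (hcont.mono (prod_mono_left (subset_univ _))).sub (by fun_prop)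
    convert (hK.image continuous_snd).isClosed using 1
    ext t
    constructor
    · rintro ⟨⟨x, hx, h⟩, ht⟩
      exact ⟨(x, t), ⟨⟨hx, ht⟩, by simpa using h⟩, rfl⟩
    · rintro ⟨⟨x, t'⟩, ⟨⟨hx, ht⟩, h⟩, rfl⟩
      exact ⟨⟨x, hx, by simpa using h⟩, ht⟩
  have hsub : Icc 0 T ⊆ S := by
    refine hclosed.Icc_subset_of_forall_exists_gt ⟨0, by simp, by simpa using h0⟩ ?_
    rintro t ⟨⟨x, hx, hxt⟩, ht⟩ b hb
    have htT : t ∈ Icc 0 T := Ico_subset_Icc_self ht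
    obtain ⟨z, hz, hzmax⟩ := isCompact_Icc.exists_isMaxOn (s := Icc (0 : ℝ) 2) ⟨x, hx⟩
      (f := fun x => F x t)
      (hcont.comp (f := fun x : ℝ => (x, t)) (by fun_prop) fun y _ => ⟨mem_univ _, htT⟩)
    have hglobal : ∀ y, F y t ≤ F z t := by
      intro y
      obtain ⟨y', hy', he⟩ := (hper t htT).exists_mem_Ico₀ two_pos y
      exact he.le.trans (hzmax (Ico_subset_Icc_self hy'))
    have hzt : φ + c * t ≤ F z t := hxt.trans (hglobal x)
    have hG := hmax t htT z hglobal (by nlinarith [ht.1])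
    have hs := hasDerivWithinAt_iff_tendsto_slope.1 (hd z t htT)
    have hIoc : Ioc t T ⊆ Icc 0 T \ {t} := fun s hs => ⟨⟨ht.1.trans hs.1.le, hs.2⟩, hs.1.ne'⟩
    have hev := (hs.mono_left (nhdsWithin_mono t hIoc)).eventually (lt_mem_nhds hG)
    rw [nhdsWithin_Ioc_eq_nhdsGT ht.2] at hev
    obtain ⟨s, hs1, hs2⟩ := (hev.and (Ioc_mem_nhdsGT hb)).exists
    refine ⟨s, ⟨z, hz, ?_⟩, hs2⟩
    rw [slope_def_field, lt_div_iff₀ (by linarith [hs2.1])] at hs1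
    linarith
  intro t ht
  obtain ⟨x, -, hx⟩ := hsub ht
  exact ⟨x, hx⟩

/-! ### Classical solutions -/

lemma abs_sub_shift_le_min {f : ℝ → ℝ} {N : ℝ} (hf : Differentiable ℝ f) (hN : ∀ x, |f x| ≤ N)
    (hN' : ∀ x, |deriv f x| ≤ N) (x z : ℝ) : |f x - f (x + z)| ≤ 2 * N * min |z| 1 := by
  have hN0 : 0 ≤ N := (abs_nonneg _).trans (hN 0)
  rcases le_total |z| 1 with h | h
  · rw [min_eq_left h, abs_sub_comm]
    have := convex_univ.norm_image_sub_le_of_norm_deriv_le (fun x _ => hf x) (fun x _ => hN' x)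
      (mem_univ x) (mem_univ (x + z))
    simp only [Real.norm_eq_abs, add_sub_cancel_left] at this
    nlinarith [abs_nonneg z]
  · rw [min_eq_right h]
    have := abs_sub (f x) (f (x + z))
    linarith [hN x, hN (x + z)]

lemma nonneg_of_tendsto_kernel_of_forall_le {f : ℝ → ℝ} {x l p : ℝ} (hmax : ∀ y, f y ≤ f x)
    (hl : Tendsto (fun ε => ∫ y in {y : ℝ | ε < |y|}, (f x - f (x + y)) / |y| ^ p)
      (𝓝[>] 0) (𝓝 l)) : 0 ≤ l :=
  ge_of_tendsto' hl fun _ => integral_nonneg fun y =>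
    div_nonneg (sub_nonneg.2 (hmax _)) (by positivity)

lemma nonpos_of_tendsto_kernel_of_forall_ge {f : ℝ → ℝ} {x l p : ℝ} (hmin : ∀ y, f x ≤ f y)
    (hl : Tendsto (fun ε => ∫ y in {y : ℝ | ε < |y|}, (f x - f (x + y)) / |y| ^ p)
      (𝓝[>] 0) (𝓝 l)) : l ≤ 0 :=
  le_of_tendsto' hl fun _ => integral_nonpos fun y =>
    div_nonpos_of_nonpos_of_nonneg (sub_nonpos.2 (hmin _)) (by positivity)

lemma deriv_eq_zero_of_forall_le {f : ℝ → ℝ} {x : ℝ} (h : ∀ y, f y ≤ f x) : deriv f x = 0 :=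
  IsLocalMax.deriv_eq_zero (Eventually.of_forall h)

lemma deriv_eq_zero_of_forall_ge {f : ℝ → ℝ} {x : ℝ} (h : ∀ y, f x ≤ f y) : deriv f x = 0 :=
  IsLocalMin.deriv_eq_zero (Eventually.of_forall h)

lemma continuousOn_prod_of_abs_sub_le {u : ℝ → ℝ → ℝ} {T K : ℝ} (hK : 0 ≤ K)
    (ht : ∀ x, ContinuousOn (fun t => u x t) (Icc 0 T))
    (hx : ∀ t ∈ Icc (0 : ℝ) T, ∀ x y, |u x t - u y t| ≤ K * |x - y|) :
    ContinuousOn (fun q : ℝ × ℝ => u q.1 q.2) (univ ×ˢ Icc 0 T) := by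
  refine continuousOn_prod_of_continuousOn_lipschitzOnWith _ ⟨K, hK⟩ (fun x _ => ht x) ?_
  intro t h
  refine LipschitzOnWith.of_dist_le_mul fun x _ y _ => ?_
  exact hx t h x y

/-- At a maximum of its sawtooth transform, a function equals its mean over a period; there the
evolution of the transform is governed by the energy, up to a dissipation bounded by the
supremum of the function. -/
lemma sawtooth_rhs_lower_bound {α A N X s : ℝ} {f l : ℝ → ℝ} (hα0 : 0 < α) (hα : α < 1 / 2)
    (hf : ContDiff ℝ 1 f) (hp : Function.Periodic f 2) (hA : ∀ x, |f x| ≤ A)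
    (hN : ∀ x, |f x| ≤ N) (hN' : ∀ x, |deriv f x| ≤ N)
    (hl : ∀ x, l x = ∫ z, (f x - f (x + z)) / |z| ^ (1 + 2 * α))
    (hX : ∀ Y, sawtooth f Y ≤ sawtooth f X) :
    s * sawtooth f X - s ^ 2 / 3 - 4 * A * ∫ z : ℝ, min |z| 1 / |z| ^ (1 + 2 * α) ≤
      sawtooth (fun x => f x * deriv f x - l x) X := by
  have hc := hf.continuous
  have hc' : Continuous (deriv f) := hf.continuous_deriv le_rfl
  have hdiff := hf.differentiable (by norm_num)
  obtain ⟨hint, hcomm⟩ := sawtooth_integral_kernel hα0 hα hc (abs_sub_shift_le_min hdiff hN hN') X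
  obtain rfl : l = fun x => ∫ z, (f x - f (x + z)) / |z| ^ (1 + 2 * α) := funext hl
  have hsplit : sawtooth (fun x => f x * deriv f x - ∫ z, (f x - f (x + z)) / |z| ^ (1 + 2 * α)) X
      = sawtooth (fun x => f x * deriv f x) X
        - sawtooth (fun x => ∫ z, (f x - f (x + z)) / |z| ^ (1 + 2 * α)) X := by
    simp only [sawtooth]
    rw [← intervalIntegral.integral_sub (Continuous.intervalIntegrable (by fun_prop) _ _) hint]
    congr 1 with y
    ring
  have hmean : ∫ y in (0 : ℝ)..2, f (X + y) = 2 * f X := by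
    have h := IsLocalMax.hasDerivAt_eq_zero (Eventually.of_forall hX) (hasDerivAt_sawtooth hc hp X)
    linarith
  have hD := abs_integral_kernel_le (x := X) hα0 hα (abs_sawtooth_sub_shift_le hc hp hA)
  have hE := energy_lower_bound hc hmean s
  rw [hsplit, hcomm, sawtooth_mul_deriv hf hp]
  linarith [le_abs_self (∫ z, (sawtooth f X - sawtooth f (X + z)) / |z| ^ (1 + 2 * α))]

end FractionalBurgers

open FractionalBurgers

/-- **Finite time blow up for the supercritical Burgers equation.**
For `0 < α < 1/2` there are a period `2L`, a time `T > 0`, and smooth `2L`-periodic initial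
data `θ₀` such that no classical solution `θ` of `∂_t θ = θ ∂_x θ − L_α θ` on `ℝ × [0,T]`,
`2L`-periodic and `C³` in `x` with uniformly bounded `C³` norm, `C¹` in `t`, can start
from `θ₀`: any solution must lose `C³` regularity by time `T`. -/
theorem supercritical_burgers_blowup (α : ℝ) (hα0 : 0 < α) (hα : α < 1/2) :
    ∃ L > (0:ℝ), ∃ T > (0:ℝ), ∃ θ₀ : ℝ → ℝ,
      ContDiff ℝ (⊤ : ℕ∞) θ₀ ∧ Function.Periodic θ₀ (2 * L) ∧
      ¬ ∃ θ Lθ : ℝ → ℝ → ℝ,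
        (∀ t ∈ Icc (0:ℝ) T, ∀ x, θ (x + 2 * L) t = θ x t) ∧
        (∀ t ∈ Icc (0:ℝ) T, ContDiff ℝ 3 (fun x => θ x t)) ∧
        (∃ N : ℝ, ∀ t ∈ Icc (0:ℝ) T, ∀ j ≤ 3, ∀ x,
          |iteratedDeriv j (fun x' => θ x' t) x| ≤ N) ∧
        (∀ x, ContinuousOn (fun t => θ x t * deriv (fun x' => θ x' t) x - Lθ x t)
          (Icc 0 T)) ∧
        (∀ t ∈ Icc (0:ℝ) T, ∀ x,
          Tendsto (fun ε => ∫ y in {y : ℝ | ε < |y|},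
              (θ x t - θ (x + y) t) / |y| ^ (1 + 2*α))
            (nhdsWithin 0 (Ioi 0)) (nhds (Lθ x t))) ∧
        (∀ x, ∀ t ∈ Icc (0:ℝ) T,
          HasDerivWithinAt (fun s => θ x s)
            (θ x t * deriv (fun x' => θ x' t) x - Lθ x t) (Icc 0 T) t) ∧
        (∀ x, θ x 0 = θ₀ x) := by
  set C : ℝ := ∫ z : ℝ, min |z| 1 / |z| ^ (1 + 2 * α) with hC
  have hC0 : 0 ≤ C := integral_nonneg fun z => by positivity
  set A : ℝ := 24 * C + 13 with hA
  have hA0 : 0 < A := by positivity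
  refine ⟨1, one_pos, 1, one_pos, fun x => A * Real.sin (Real.pi * x), by fun_prop, ?_, ?_⟩
  · intro x
    simp only
    rw [show Real.pi * (x + 2 * 1) = Real.pi * x + 2 * Real.pi by ring, Real.sin_add_two_pi]
  rintro ⟨θ, Lθ, hper, hsmooth, ⟨N, hN⟩, -, hPV, heq, hinit⟩
  have hp : ∀ t ∈ Icc (0 : ℝ) 1, Function.Periodic (fun x => θ x t) 2 := by
    intro t ht x
    simpa using hper t ht x
  have hC1 : ∀ t ∈ Icc (0 : ℝ) 1, ContDiff ℝ 1 (fun x => θ x t) := fun t ht =>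
    (hsmooth t ht).of_le (by norm_num)
  have hdiff : ∀ t ∈ Icc (0 : ℝ) 1, Differentiable ℝ (fun x => θ x t) := fun t ht =>
    (hC1 t ht).differentiable (by norm_num)
  have hθN : ∀ t ∈ Icc (0 : ℝ) 1, ∀ x, |θ x t| ≤ N := fun t ht x => by
    simpa using hN t ht 0 (by norm_num) x
  have hθN' : ∀ t ∈ Icc (0 : ℝ) 1, ∀ x, |deriv (fun x' => θ x' t) x| ≤ N := fun t ht x => by
    simpa using hN t ht 1 (by norm_num) x
  have hN0 : 0 ≤ N := (abs_nonneg _).trans (hθN 0 (by simp) 0)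
  have hshift : ∀ t ∈ Icc (0 : ℝ) 1, ∀ x z, |θ x t - θ (x + z) t| ≤ 2 * N * min |z| 1 :=
    fun t ht => abs_sub_shift_le_min (hdiff t ht) (hθN t ht) (hθN' t ht)
  have hLθ : ∀ t ∈ Icc (0 : ℝ) 1, ∀ x,
      Lθ x t = ∫ z, (θ x t - θ (x + z) t) / |z| ^ (1 + 2 * α) := fun t ht x =>
    tendsto_nhds_unique (hPV t ht x) (tendsto_integral_lt_abs
      (integrable_kernel_mul hα0 hα (hC1 t ht).continuous (hshift t ht)))
  set R : ℝ → ℝ → ℝ := fun x t => θ x t * deriv (fun x' => θ x' t) x - Lθ x t with hR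
  have hRbound : ∀ t ∈ Icc (0 : ℝ) 1, ∀ x, |R x t| ≤ N * N + 2 * N * C := by
    intro t ht x
    have h1 : |Lθ x t| ≤ 2 * N * C := by
      rw [hLθ t ht x]
      exact abs_integral_kernel_le (f := fun x => θ x t) hα0 hα (hshift t ht)
    have h2 : |θ x t * deriv (fun x' => θ x' t) x| ≤ N * N := by
      rw [abs_mul]
      exact mul_le_mul (hθN t ht x) (hθN' t ht x) (abs_nonneg _) hN0
    exact (abs_sub _ _).trans (add_le_add h2 h1)
  have hθcont : ContinuousOn (fun q : ℝ × ℝ => θ q.1 q.2) (univ ×ˢ Icc 0 1) := by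
    refine continuousOn_prod_of_abs_sub_le hN0 (fun x t ht => (heq x t ht).continuousWithinAt) ?_
    intro t ht x y
    exact convex_univ.norm_image_sub_le_of_norm_deriv_le (fun x _ => hdiff t ht x)
      (fun x _ => hθN' t ht x) (mem_univ y) (mem_univ x)
  have hinit_le : ∀ x, |θ x 0| ≤ A := by
    intro x
    rw [hinit x, abs_mul, abs_of_pos hA0]
    exact mul_le_of_le_one_right hA0.le (Real.abs_sin_le_one _)
  have hθA : ∀ t ∈ Icc (0 : ℝ) 1, ∀ x, |θ x t| ≤ A := by
    have hup := le_of_nonpos_deriv_at_max (A := A) hp hθcont heq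
      (fun t ht x hmax => by
        have h1 := nonneg_of_tendsto_kernel_of_forall_le (f := fun x => θ x t) hmax (hPV t ht x)
        rw [deriv_eq_zero_of_forall_le (f := fun x => θ x t) hmax]
        linarith)
      (fun x => (le_abs_self _).trans (hinit_le x))
    have hlow := le_of_nonpos_deriv_at_max (u := fun x t => -θ x t) (R := fun x t => -R x t)
      (A := A) (fun t ht x => congrArg Neg.neg (hp t ht x)) hθcont.neg
      (fun x t ht => (heq x t ht).fun_neg)
      (fun t ht x hmax => by
        have hmin : ∀ y, θ x t ≤ θ y t := fun y => neg_le_neg_iff.1 (hmax y)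
        have h1 := nonpos_of_tendsto_kernel_of_forall_ge (f := fun x => θ x t) hmin (hPV t ht x)
        simp only [hR]
        rw [deriv_eq_zero_of_forall_ge (f := fun x => θ x t) hmin]
        linarith)
      (fun x => (neg_le_abs _).trans (hinit_le x))
    intro t ht x
    exact abs_le.2 ⟨by linarith [hlow t ht x], hup t ht x⟩
  have hFderiv : ∀ X, ∀ t ∈ Icc (0 : ℝ) 1, HasDerivWithinAt
      (fun s => sawtooth (fun x => θ x s) X) (sawtooth (fun x => R x t) X) (Icc 0 1) t :=
    fun X t ht => hasDerivWithinAt_sawtooth (fun t ht => (hC1 t ht).continuous) heq hRbound X ht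
  have hFcont : ContinuousOn (fun q : ℝ × ℝ => sawtooth (fun x => θ x q.2) q.1)
      (univ ×ˢ Icc 0 1) :=
    continuousOn_prod_of_abs_sub_le (u := fun X t => sawtooth (fun x => θ x t) X)
      (K := 4 * A) (by positivity) (fun X t ht => (hFderiv X t ht).continuousWithinAt)
      (fun t ht X Y => abs_sawtooth_sub_le (hC1 t ht).continuous (hp t ht) (hθA t ht) Y X)
  have hF0 : A / 2 ≤ sawtooth (fun x => θ x 0) 0 := by
    simp only [hinit]
    rw [sawtooth_sin, div_le_div_iff₀ two_pos Real.pi_pos]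
    nlinarith [Real.pi_lt_four]
  obtain ⟨X, hX⟩ := exists_ge_of_lt_deriv_at_max (F := fun X t => sawtooth (fun x => θ x t) X)
    (G := fun X t => sawtooth (fun x => R x t) X) (c := 2 * A) (by positivity)
    (fun t ht => sawtooth_periodic (hp t ht)) hFcont hFderiv
    (fun t ht X hmax hge => by
      have h := sawtooth_rhs_lower_bound (s := A / 2) hα0 hα (hC1 t ht) (hp t ht) (hθA t ht)
        (hθN t ht) (hθN' t ht) (hLθ t ht) hmax
      refine lt_of_lt_of_le ?_ h
      rw [← hC]
      nlinarith)
    hF0 1 (by simp)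
  have := (le_abs_self _).trans (abs_sawtooth_le (hθA 1 (by simp)) X)
  linarith
end
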